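/- Let d ≥ 4 and 1 < p < p_d = (2d−2)/(d+1). Then for every measurable function h : ℝ^d × [1,∞) → ℂ with ∫_{ℝ^d} ∫_1^∞ |h(y,r)|^p r^{d−1} dr dy < ∞, ‖∫_{ℝ^d} ∫_1^∞ h(y,r) F_{y,r} dr dy‖_{L^p(ℝ^d)} ≤ C (∫_{ℝ^d} ∫_1^∞ |h(y,r)|^p r^{d−1} dr dy)^{1/p}, where C depends only on p, d and ψ, and the inner expression denotes the function x ↦ ∫_{ℝ^d} ∫_1^∞ h(y,r) (σ_r * ψ)(x − y) dr dy. -/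

import Mathlib

open MeasureTheory Metric Set
open scoped FourierTransform ENNReal NNReal

noncomputable section

abbrev Ed (d : ℕ) := EuclideanSpace ℝ (Fin d)

/-- Surface measure on the sphere of radius `r` centered at the origin in `ℝ^d`:
the `(d-1)`-dimensional Hausdorff measure restricted to the sphere. -/
def sphereM (d : ℕ) (r : ℝ) : Measure (Ed d) :=
  (μH[(d : ℝ) - 1]).restrict (Metric.sphere (0 : Ed d) r)

/-- `ψ₀` is admissible: radial, `C^∞`, supported in the ball of radius `1/10`, and
its Fourier transform vanishes to order `20d` at the origin. -/
def Admissible (d : ℕ) (ψ₀ : Ed d → ℂ) : Prop :=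
  ContDiff ℝ (⊤ : ℕ∞) ψ₀ ∧
  (∀ x, ψ₀ x ≠ 0 → ‖x‖ ≤ 1 / 10) ∧
  (∀ x y : Ed d, ‖x‖ = ‖y‖ → ψ₀ x = ψ₀ y) ∧
  (∀ n : ℕ, n < 20 * d → iteratedFDeriv ℝ n (𝓕 ψ₀) 0 = 0)

/-- `ψ = ψ₀ * ψ₀` (convolution). -/
def psiOf (d : ℕ) (ψ₀ : Ed d → ℂ) : Ed d → ℂ :=
  fun x => ∫ y, ψ₀ y * ψ₀ (x - y)

/-- `F_{y,r} = σ_r * ψ(· - y)`. -/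
def Fyr (d : ℕ) (ψ₀ : Ed d → ℂ) (y : Ed d) (r : ℝ) : Ed d → ℂ :=
  fun x => ∫ z, psiOf d ψ₀ (x - y - z) ∂(sphereM d r)

/-!
The functions `F_{y,r}` satisfy
`|⟨F_{y,r}, F_{y',r'}⟩| ≲ (r r')^((d-1)/2) (1 + |y - y'|)^(-(d-1)/2)`, and they are orthogonal when
the spheres are disjoint. Indeed, since `ψ` is radial, Plancherel and averaging over rotations turn
the inner product into an integral against `|𝓕 ψ|²` of the Fourier transforms of the spheres of
radii `r`, `r'` and `|y - y'|`; the transform of the sphere of radius `s` decays like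
`(s|ξ|)^(-(d-1)/2)`, and the zero of `𝓕 ψ` at the origin absorbs the singularity there.

Let `A` be a finite `1`-separated set of spheres `(y, r)` with `r ≥ 1`, and split it according to
its local density `u = 2 ^ κ`, the largest value of `#(A ∩ B(a, ρ)) / ρ`. On a part of density `u`,
almost orthogonality bounds the square of the `L²` norm of `∑ c_a F_a`, `|c_a| ≤ 1`, by
`κ u^(2/(d-1)) ∑ r^(d-1)`, while a covering argument bounds the measure of its support by
`u⁻¹ ∑ r^(d-1)`. Hölder's inequality turns the two bounds into an `L^p` bound summable over `κ`
exactly when `p < p_d`.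

Averaging over the translates of the integer lattice passes from discrete sums to integrals with
`|h| ≤ 1`; decomposing `h` by dyadic size and interpolating between two exponents below `p_d` gives
the inequality for truncated `h`, and Fatou's lemma removes the truncation.
-/

section SphereMeasure

lemma lipschitzOnWith_normalize {E : Type*} [NormedAddCommGroup E] [NormedSpace ℝ E] :
    LipschitzOnWith 2 (NormedSpace.normalize : E → E) {x | 1 ≤ ‖x‖} := by
  refine LipschitzOnWith.of_dist_le_mul fun x (hx : 1 ≤ ‖x‖) y (hy : 1 ≤ ‖y‖) ↦ ?_
  have hy0 : 0 < ‖y‖ := by linarith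
  have split : ‖x‖⁻¹ • x - ‖y‖⁻¹ • y = ‖x‖⁻¹ • ((x - y) + (‖y‖ - ‖x‖) • ‖y‖⁻¹ • y) := by
    rw [smul_add, smul_smul, smul_smul, ← sub_eq_zero]
    match_scalars <;> field_simp <;> ring
  have hunit : ‖‖y‖⁻¹ • y‖ = 1 := NormedSpace.norm_normalize (norm_pos_iff.1 hy0)
  calc dist (‖x‖⁻¹ • x) (‖y‖⁻¹ • y)
      = ‖x‖⁻¹ * ‖(x - y) + (‖y‖ - ‖x‖) • ‖y‖⁻¹ • y‖ := by
        rw [dist_eq_norm, split, norm_smul, norm_inv, norm_norm]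
    _ ≤ 1 * (‖x - y‖ + |‖y‖ - ‖x‖|) := by
        gcongr
        · exact inv_le_one_of_one_le₀ hx
        · exact (norm_add_le _ _).trans_eq (by rw [norm_smul, hunit, mul_one, Real.norm_eq_abs])
    _ ≤ 2 * dist x y := by
        have := abs_norm_sub_norm_le x y
        rw [abs_sub_comm] at this
        rw [dist_eq_norm]
        linarith

/-- The embedding of the hyperplane `{x | x i = s}` into `ℝ^(n+1)`; for `s = ±1` it parametrizes
over `[-1, 1]^n` a face of the cube `[-1, 1]^(n+1)`. -/
def cubeFace {n : ℕ} (i : Fin (n + 1)) (s : ℝ) (v : Fin n → ℝ) : Ed (n + 1) :=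
  WithLp.toLp 2 (i.insertNth (α := fun _ ↦ ℝ) s v)

@[simp]
lemma cubeFace_apply_self {n : ℕ} (i : Fin (n + 1)) (s : ℝ) (v : Fin n → ℝ) :
    cubeFace i s v i = s := by
  simp [cubeFace]

@[simp]
lemma cubeFace_apply_succAbove {n : ℕ} (i : Fin (n + 1)) (s : ℝ) (v : Fin n → ℝ) (k : Fin n) :
    cubeFace i s v (i.succAbove k) = v k := by
  simp [cubeFace]

lemma exists_lipschitzWith_cubeFace {n : ℕ} (i : Fin (n + 1)) (s : ℝ) :
    ∃ K, LipschitzWith K (cubeFace i s) := by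
  have hinsert : LipschitzWith 1 fun v : Fin n → ℝ ↦ i.insertNth (α := fun _ ↦ ℝ) s v := by
    refine LipschitzWith.of_dist_le_mul fun v w ↦ ?_
    rw [NNReal.coe_one, one_mul, dist_pi_le_iff dist_nonneg]
    refine Fin.succAboveCases i ?_ fun k ↦ ?_
    · simp
    · simpa only [Fin.insertNth_apply_succAbove] using dist_le_pi_dist v w k
  exact ⟨_, (PiLp.lipschitzWith_toLp 2 _).comp hinsert⟩

lemma one_le_norm_cubeFace {n : ℕ} (i : Fin (n + 1)) {s : ℝ} (hs : |s| = 1) (v : Fin n → ℝ) :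
    1 ≤ ‖cubeFace i s v‖ := by
  simpa [hs] using PiLp.norm_apply_le (cubeFace i s v) i

lemma sphere_subset_iUnion_cubeFace (n : ℕ) :
    sphere (0 : Ed (n + 1)) 1 ⊆ ⋃ i : Fin (n + 1), ⋃ s ∈ ({1, -1} : Set ℝ),
      (fun v ↦ NormedSpace.normalize (cubeFace i s v)) '' Icc (-1) 1 := by
  intro ω hω
  have hω1 : ‖ω‖ = 1 := by simpa using hω
  obtain ⟨i, -, hi⟩ := Finset.exists_max_image Finset.univ (fun i ↦ |ω i|) Finset.univ_nonempty
  have hmax : ∀ j, |ω j| ≤ |ω i| := fun j ↦ hi j (Finset.mem_univ j)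
  have hpos : 0 < |ω i| := by
    by_contra! hle
    have hω0 : ω = 0 := by
      ext j
      simpa using (hmax j).trans hle
    simp [hω0] at hω1
  have hface : cubeFace i (ω i / |ω i|) (fun j ↦ ω (i.succAbove j) / |ω i|) = |ω i|⁻¹ • ω := by
    ext j
    refine Fin.succAboveCases i ?_ (fun k ↦ ?_) j <;> simp [div_eq_inv_mul]
  simp only [mem_iUnion]
  refine ⟨i, ω i / |ω i|, ?_, fun j ↦ ω (i.succAbove j) / |ω i|, ?_, ?_⟩
  · rcases lt_or_gt_of_ne (abs_pos.1 hpos) with h | h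
    · exact .inr (by rw [abs_of_neg h, div_neg, div_self h.ne]; rfl)
    · exact .inl (by rw [abs_of_pos h, div_self h.ne'])
  · refine ⟨fun j ↦ ?_, fun j ↦ ?_⟩
    · exact (le_div_iff₀ hpos).2 <| by simpa using (abs_le.1 (hmax (i.succAbove j))).1
    · exact (div_le_iff₀ hpos).2 <| by simpa using (abs_le.1 (hmax (i.succAbove j))).2
  · simp only [hface, NormedSpace.normalize_smul_of_pos (inv_pos.2 hpos),
      NormedSpace.normalize_eq_self_of_norm_eq_one hω1]

lemma hausdorffMeasure_pi_fin (n : ℕ) : (μH[(n : ℝ)] : Measure (Fin n → ℝ)) = volume := by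
  simpa using hausdorffMeasure_pi_real (ι := Fin n)

lemma hausdorffMeasure_sphere_lt_top (n : ℕ) :
    (μH[(n : ℝ)] : Measure (Ed (n + 1))) (sphere 0 1) < ⊤ := by
  refine (measure_mono (sphere_subset_iUnion_cubeFace n)).trans_lt <|
    (measure_iUnion_le _).trans_lt ?_
  rw [tsum_fintype]
  refine ENNReal.sum_lt_top.2 fun i _ ↦ measure_biUnion_lt_top (by simp) fun s hs ↦ ?_
  have hs1 : |s| = 1 := by rcases hs with rfl | rfl <;> simp
  obtain ⟨K, hK⟩ := exists_lipschitzWith_cubeFace i s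
  have hlip : LipschitzOnWith (2 * K) (fun v ↦ NormedSpace.normalize (cubeFace i s v))
      (Icc (-1) 1) :=
    lipschitzOnWith_normalize.comp hK.lipschitzOnWith fun v _ ↦ one_le_norm_cubeFace i hs1 v
  refine (hlip.hausdorffMeasure_image_le n.cast_nonneg).trans_lt ?_
  rw [hausdorffMeasure_pi_fin]
  exact ENNReal.mul_lt_top (ENNReal.rpow_lt_top_of_nonneg n.cast_nonneg ENNReal.coe_ne_top)
    isCompact_Icc.measure_lt_top

lemma hausdorffMeasure_sphere_pos (n : ℕ) :
    0 < (μH[(n : ℝ)] : Measure (Ed (n + 1))) (sphere 0 1) := by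
  let tail : Ed (n + 1) → Fin n → ℝ := fun z i ↦ z i.succ
  have hlip : LipschitzWith 1 tail := LipschitzWith.of_dist_le_mul fun z w ↦ by
    rw [NNReal.coe_one, one_mul, dist_eq_norm, dist_eq_norm,
      pi_norm_le_iff_of_nonneg (norm_nonneg _)]
    exact fun i ↦ PiLp.norm_apply_le (z - w) i.succ
  have hsub : {w : Fin n → ℝ | ∑ i, w i ^ 2 < 1} ⊆ tail '' sphere 0 1 := fun w hw ↦ by
    refine ⟨WithLp.toLp 2 (Fin.cons √(1 - ∑ i, w i ^ 2) w), ?_, by ext i; simp [tail]⟩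
    have hw' : 0 ≤ 1 - ∑ i, w i ^ 2 := sub_nonneg.2 (le_of_lt hw)
    simp [EuclideanSpace.norm_eq, Fin.sum_univ_succ, Real.sq_sqrt hw']
  have hpos : 0 < (volume : Measure (Fin n → ℝ)) {w | ∑ i, w i ^ 2 < 1} :=
    (isOpen_lt (by fun_prop) continuous_const).measure_pos _ ⟨0, by simp⟩
  calc 0 < (volume : Measure (Fin n → ℝ)) {w | ∑ i, w i ^ 2 < 1} := hpos
    _ ≤ μH[(n : ℝ)] (tail '' sphere 0 1) := hausdorffMeasure_pi_fin n ▸ measure_mono hsub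
    _ ≤ μH[(n : ℝ)] (sphere (0 : Ed (n + 1)) 1) := by
      simpa using hlip.hausdorffMeasure_image_le n.cast_nonneg (sphere 0 1)

instance isFiniteMeasure_sphereM_one (d : ℕ) : IsFiniteMeasure (sphereM d 1) := by
  constructor
  rw [sphereM, Measure.restrict_apply_univ]
  cases d with
  | zero => simp [Metric.sphere_eq_empty_of_subsingleton]
  | succ n => simpa using hausdorffMeasure_sphere_lt_top n

lemma sphereM_real_univ_pos {d : ℕ} (hd : d ≠ 0) : 0 < (sphereM d 1).real univ := by
  obtain ⟨n, rfl⟩ := Nat.exists_eq_succ_of_ne_zero hd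
  refine ENNReal.toReal_pos ?_ (measure_ne_top _ _)
  simpa [sphereM] using (hausdorffMeasure_sphere_pos n).ne'

lemma measurePreserving_sphereM {d : ℕ} (r : ℝ) (e : Ed d ≃ₗᵢ[ℝ] Ed d) :
    MeasurePreserving e (sphereM d r) (sphereM d r) := by
  have hpre : e.toIsometryEquiv ⁻¹' sphere (0 : Ed d) r = sphere 0 r := by
    ext z
    simp
  have := (e.toIsometryEquiv.measurePreserving_hausdorffMeasure ((d : ℝ) - 1)).restrict_preimage
    (s := sphere (0 : Ed d) r) isClosed_sphere.measurableSet
  rwa [hpre] at this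

lemma ae_norm_eq_sphereM (d : ℕ) (r : ℝ) : ∀ᵐ z ∂sphereM d r, ‖z‖ = r := by
  filter_upwards [ae_restrict_mem (isClosed_sphere (x := (0 : Ed d))).measurableSet] with z hz
  simpa using hz

open scoped Pointwise in
lemma sphereM_eq_smul_map {d : ℕ} {r : ℝ} (hr : 0 < r) :
    sphereM d r = ENNReal.ofReal (r ^ (d - 1)) • (sphereM d 1).map (r • ·) := by
  rcases d.eq_zero_or_pos with rfl | hd
  · simp [sphereM, Metric.sphere_eq_empty_of_subsingleton, hr.ne']
  ext s hs
  have hmeas : Measurable fun z : Ed d ↦ r • z := measurable_const_smul r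
  have hinter : s ∩ sphere (0 : Ed d) r = r • ((r • ·) ⁻¹' s ∩ sphere 0 1) := by
    rw [Set.smul_set_inter₀ hr.ne', smul_sphere' hr.ne']
    rw [← Set.image_smul, Set.image_preimage_eq _ (MulAction.surjective₀ hr.ne')]
    simp [abs_of_pos hr]
  have hdim : (d : ℝ) - 1 = (d - 1 : ℕ) := by
    rw [Nat.cast_sub hd, Nat.cast_one]
  rw [Measure.smul_apply, Measure.map_apply hmeas hs, sphereM, sphereM, Measure.restrict_apply hs,
    Measure.restrict_apply (hmeas hs), hinter, hdim,
    Measure.hausdorffMeasure_smul₀ (Nat.cast_nonneg _) hr.ne', NNReal.rpow_natCast,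
    ENNReal.smul_def, ENNReal.ofReal_pow hr.le, ENNReal.coe_pow, ← Real.enorm_of_nonneg hr.le]
  rfl

lemma integral_sphereM {d : ℕ} {r : ℝ} (hr : 0 < r) (f : Ed d → ℂ) :
    ∫ z, f z ∂sphereM d r = (r : ℂ) ^ (d - 1) * ∫ z, f (r • z) ∂sphereM d 1 := by
  have hemb : MeasurableEmbedding fun z : Ed d ↦ r • z :=
    (Homeomorph.smulOfNeZero r hr.ne').measurableEmbedding
  rw [sphereM_eq_smul_map hr, integral_smul_measure, hemb.integral_map,
    ENNReal.toReal_ofReal (by positivity), Complex.real_smul, Complex.ofReal_pow]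

lemma integrable_sphereM_of_continuous {d : ℕ} {f : Ed d → ℂ} (hf : Continuous f) :
    Integrable f (sphereM d 1) := by
  obtain ⟨M, hM⟩ := (isCompact_sphere (0 : Ed d) 1).exists_bound_of_continuousOn hf.continuousOn
  refine Integrable.of_bound hf.aestronglyMeasurable M ?_
  filter_upwards [ae_norm_eq_sphereM d 1] with z hz
  exact hM z (by simpa using hz)

end SphereMeasure

section BesselDecay

lemma exists_norm_le_of_hasDerivAt_oscillator {F : Type*} [NormedAddCommGroup F]
    [InnerProductSpace ℝ F] {u v : ℝ → F} {c : ℝ} (hc : 0 ≤ c)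
    (hu : ∀ s, 1 ≤ s → HasDerivAt u (v s) s)
    (hv : ∀ s, 1 ≤ s → HasDerivAt v ((c / s ^ 2 - 1) • u s) s) :
    ∃ C, ∀ s, 1 ≤ s → ‖u s‖ ≤ C := by
  -- The energy `‖u‖² + ‖v‖²` has logarithmic derivative at most `c / s²`.
  set E : ℝ → ℝ := fun s ↦ (‖u s‖ ^ 2 + ‖v s‖ ^ 2) * Real.exp (c / s)
  have hderiv : ∀ s, 1 ≤ s → HasDerivAt E
      ((c / s ^ 2) * (2 * inner ℝ (u s) (v s) - (‖u s‖ ^ 2 + ‖v s‖ ^ 2)) * Real.exp (c / s)) s := by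
    intro s hs
    have hs0 : s ≠ 0 := by positivity
    have hexp := ((hasDerivAt_inv hs0).const_mul c).exp
    refine (((hu s hs).norm_sq.fun_add (hv s hs).norm_sq).fun_mul hexp).congr_deriv ?_
    simp only [inner_smul_right, real_inner_comm (u s), div_eq_mul_inv]
    ring
  have hanti : AntitoneOn E (Ici 1) := by
    refine antitoneOn_of_deriv_nonpos (convex_Ici 1)
      (fun s hs ↦ (hderiv s hs).continuousAt.continuousWithinAt)
      (fun s hs ↦ (hderiv s (interior_subset hs)).differentiableAt.differentiableWithinAt)
      fun s hs ↦ ?_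
    rw [(hderiv s (interior_subset hs)).deriv]
    have hcross : 2 * inner ℝ (u s) (v s) ≤ ‖u s‖ ^ 2 + ‖v s‖ ^ 2 := by
      nlinarith [real_inner_le_norm (u s) (v s), sq_nonneg (‖u s‖ - ‖v s‖)]
    exact mul_nonpos_of_nonpos_of_nonneg
      (mul_nonpos_of_nonneg_of_nonpos (by positivity) (by linarith)) (Real.exp_nonneg _)
  refine ⟨√(E 1), fun s hs ↦ Real.le_sqrt_of_sq_le ?_⟩
  calc ‖u s‖ ^ 2 ≤ (‖u s‖ ^ 2 + ‖v s‖ ^ 2) * 1 := by nlinarith [sq_nonneg ‖v s‖]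
    _ ≤ E s := by
      refine mul_le_mul_of_nonneg_left ?_ (by positivity)
      exact Real.one_le_exp (by positivity)
    _ ≤ E 1 := hanti self_mem_Ici hs hs

lemma exists_rpow_mul_norm_le_of_bessel {F : Type*} [NormedAddCommGroup F]
    [InnerProductSpace ℝ F] {B B₁ B₂ : ℝ → F} {e : ℝ} (he : 1 ≤ e)
    (hB : ∀ s, HasDerivAt B (B₁ s) s) (hB₁ : ∀ s, HasDerivAt B₁ (B₂ s) s)
    (hode : ∀ s, 0 < s → s • B₂ s + (2 * e) • B₁ s + s • B s = 0) :
    ∃ C, ∀ s, 1 ≤ s → s ^ e * ‖B s‖ ≤ C := by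
  have hpow : ∀ s : ℝ, 1 ≤ s → ∀ a : ℝ, HasDerivAt (fun t : ℝ ↦ t ^ a) (a * s ^ (a - 1)) s :=
    fun s hs a ↦ Real.hasDerivAt_rpow_const (.inl (by positivity))
  have hu : ∀ s, 1 ≤ s → HasDerivAt (fun s ↦ s ^ e • B s)
      (s ^ e • B₁ s + (e * s ^ (e - 1)) • B s) s :=
    fun s hs ↦ (hpow s hs e).smul (hB s)
  have hv : ∀ s, 1 ≤ s → HasDerivAt (fun s ↦ s ^ e • B₁ s + (e * s ^ (e - 1)) • B s)
      ((e * (e - 1) / s ^ 2 - 1) • s ^ e • B s) s := by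
    intro s hs
    have hs0 : 0 < s := by linarith
    refine (((hpow s hs e).smul (hB₁ s)).add
      (((hpow s hs (e - 1)).const_mul e).smul (hB s))).congr_deriv ?_
    have hB₂ : B₂ s = -((2 * e / s) • B₁ s) - B s := by
      calc B₂ s = s⁻¹ • (s • B₂ s + (2 * e) • B₁ s + s • B s) - (2 * e / s) • B₁ s - B s := by
            match_scalars <;> field_simp <;> ring
        _ = _ := by rw [hode s hs0, smul_zero, zero_sub]
    have h1 : s ^ (e - 1) = s ^ e / s := by rw [Real.rpow_sub_one hs0.ne']
    have h2 : s ^ (e - 1 - 1) = s ^ e / s / s := by rw [Real.rpow_sub_one hs0.ne', h1]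
    simp only [hB₂, h1, h2]
    match_scalars <;> field_simp <;> ring
  obtain ⟨C, hC⟩ := exists_norm_le_of_hasDerivAt_oscillator (by nlinarith) hu hv
  refine ⟨C, fun s hs ↦ ?_⟩
  simpa [norm_smul, abs_of_nonneg (Real.rpow_nonneg (zero_le_one.trans hs) e)] using hC s hs

/-- The moment `∫ (i⟨z, v⟩)ⁿ exp(i⟨z, w⟩) dσ₁(z)` of the unit sphere: the `n`-th derivative in
direction `v` of the characteristic function of `σ₁`. -/
def sphereMoment {d : ℕ} (v : Ed d) (n : ℕ) (w : Ed d) : ℂ :=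
  ∫ z, ((inner ℝ z v : ℝ) * Complex.I) ^ n *
    Complex.exp ((inner ℝ z w : ℝ) * Complex.I) ∂sphereM d 1

lemma sphereMoment_zero {d : ℕ} (v w : Ed d) :
    sphereMoment v 0 w = charFun (sphereM d 1) w := by
  simp [charFun_apply, sphereMoment]

lemma hasDerivAt_sphereMoment {d : ℕ} (v : Ed d) (n : ℕ) (w : Ed d) (b : ℝ) :
    HasDerivAt (fun b : ℝ ↦ sphereMoment v n (w + b • v)) (sphereMoment v (n + 1) (w + b • v))
      b := by
  have hcont : Continuous fun z : Ed d ↦ ((inner ℝ z v : ℝ) * Complex.I) ^ (n + 1) := by fun_prop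
  obtain ⟨M, hM⟩ :=
    (isCompact_sphere (0 : Ed d) 1).exists_bound_of_continuousOn hcont.continuousOn
  refine (hasDerivAt_integral_of_dominated_loc_of_deriv_le (s := univ) (bound := fun _ ↦ M)
    (F := fun (b : ℝ) z ↦ ((inner ℝ z v : ℝ) * Complex.I) ^ n *
      Complex.exp ((inner ℝ z (w + b • v) : ℝ) * Complex.I))
    (F' := fun b z ↦ ((inner ℝ z v : ℝ) * Complex.I) ^ (n + 1) *
      Complex.exp ((inner ℝ z (w + b • v) : ℝ) * Complex.I))
    Filter.univ_mem ?_ ?_ ?_ ?_ (integrable_const _) ?_).2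
  · exact .of_forall fun b ↦ Continuous.aestronglyMeasurable (by fun_prop)
  · exact integrable_sphereM_of_continuous (by fun_prop)
  · exact Continuous.aestronglyMeasurable (by fun_prop)
  · filter_upwards [ae_norm_eq_sphereM d 1] with z hz b _
    rw [norm_mul, Complex.norm_exp_ofReal_mul_I, mul_one]
    exact hM z (by simpa using hz)
  · refine .of_forall fun z b _ ↦ ?_
    have hphase : HasDerivAt (fun b : ℝ ↦ inner ℝ z (w + b • v)) (inner ℝ z v) b := by
      simp only [inner_add_right, inner_smul_right]
      simpa using ((hasDerivAt_id b).mul_const (inner ℝ z v)).const_add (inner ℝ z w)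
    exact ((hphase.ofReal_comp.mul_const Complex.I).cexp.const_mul _).congr_deriv (by ring)

lemma hasDerivAt_sphereMoment_smul {d : ℕ} (v : Ed d) (n : ℕ) (s : ℝ) :
    HasDerivAt (fun s : ℝ ↦ sphereMoment v n (s • v)) (sphereMoment v (n + 1) (s • v)) s := by
  simpa only [zero_add] using hasDerivAt_sphereMoment v n 0 s

lemma sum_sphereMoment_two {d : ℕ} (w : Ed d) :
    ∑ k, sphereMoment (EuclideanSpace.single k 1) 2 w = -charFun (sphereM d 1) w := by
  have hint : ∀ k ∈ Finset.univ, Integrable (fun z : Ed d ↦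
      ((inner ℝ z (EuclideanSpace.single k 1) : ℝ) * Complex.I) ^ 2 *
        Complex.exp ((inner ℝ z w : ℝ) * Complex.I)) (sphereM d 1) :=
    fun k _ ↦ integrable_sphereM_of_continuous (by fun_prop)
  simp only [sphereMoment]
  rw [← integral_finsetSum _ hint, charFun_apply, ← integral_neg]
  refine integral_congr_ae ?_
  filter_upwards [ae_norm_eq_sphereM d 1] with z hz
  have hnorm : ∑ k, (z k : ℂ) ^ 2 = 1 := by
    have := EuclideanSpace.real_norm_sq_eq z
    rw [hz, one_pow] at this
    exact_mod_cast this.symm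
  simp only [EuclideanSpace.inner_single_right, conj_trivial, one_mul, mul_pow,
    Complex.I_sq, ← Finset.sum_mul, hnorm, neg_mul]

lemma charFun_sphereM_eq_of_norm_eq {d : ℕ} {v w : Ed d} (h : ‖v‖ = ‖w‖) :
    charFun (sphereM d 1) v = charFun (sphereM d 1) w := by
  obtain ⟨e, rfl⟩ : ∃ e : Ed d ≃ₗᵢ[ℝ] Ed d, e v = w := ⟨_, Submodule.reflection_sub h⟩
  calc charFun (sphereM d 1) v
      = ∫ z, Complex.exp ((inner ℝ (e z) (e v) : ℝ) * Complex.I) ∂sphereM d 1 := by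
        simp only [charFun_apply, LinearIsometryEquiv.inner_map_map]
    _ = charFun (sphereM d 1) (e v) := by
        rw [charFun_apply]
        exact (measurePreserving_sphereM 1 e).integral_comp e.toHomeomorph.measurableEmbedding
          fun z ↦ Complex.exp ((inner ℝ z (e v) : ℝ) * Complex.I)

lemma hasDerivAt_sqrt_sq_add_sq {s : ℝ} (hs : 0 < s) (b : ℝ) :
    HasDerivAt (fun b ↦ √(s ^ 2 + b ^ 2)) (b / √(s ^ 2 + b ^ 2)) b :=
  (((hasDerivAt_pow 2 b).const_add (s ^ 2)).sqrt (by positivity)).congr_deriv (by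
    simp only [Nat.cast_ofNat, Nat.add_one_sub_one, pow_one]
    field_simp)

/-- The second derivative of a radial function in a direction transverse to the radius. -/
lemma eq_inv_smul_of_hasDerivAt_comp_sqrt {B B₁ β β₁ : ℝ → ℂ} {β₂ : ℂ} {s : ℝ} (hs : 0 < s)
    (hB : ∀ t, HasDerivAt B (B₁ t) t) (hB₁ : DifferentiableAt ℝ B₁ s)
    (hβ : ∀ b, HasDerivAt β (β₁ b) b) (hβ₁ : HasDerivAt β₁ β₂ 0)
    (hradial : ∀ b, β b = B √(s ^ 2 + b ^ 2)) :
    β₂ = s⁻¹ • B₁ s := by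
  have hsqrt : √(s ^ 2 + 0 ^ 2) = s := by simp [Real.sqrt_sq hs.le]
  have hβ₁_eq : β₁ = fun b ↦ (b / √(s ^ 2 + b ^ 2)) • B₁ √(s ^ 2 + b ^ 2) := by
    funext b
    refine (hβ b).unique ?_
    rw [funext hradial]
    exact (hB _).scomp b (hasDerivAt_sqrt_sq_add_sq hs b)
  have hB₁' : HasDerivAt B₁ (deriv B₁ s) √(s ^ 2 + 0 ^ 2) := by
    rw [hsqrt]
    exact hB₁.hasDerivAt
  have hsqrt' := hasDerivAt_sqrt_sq_add_sq hs 0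
  have hquot := (hasDerivAt_id (0 : ℝ)).fun_div hsqrt' (by rw [hsqrt]; exact hs.ne')
  rw [hβ₁_eq] at hβ₁
  rw [hβ₁.unique (hquot.smul (hB₁'.scomp 0 hsqrt'))]
  simp only [hsqrt, id, zero_div, zero_smul, smul_zero, zero_add, mul_zero, sub_zero, one_mul]
  rw [pow_two, div_mul_cancel_left₀ hs.ne']

lemma sphereMoment_two_of_orthonormal {d : ℕ} {v w : Ed d} (hv : ‖v‖ = 1) (hw : ‖w‖ = 1)
    (hvw : inner ℝ v w = 0) {s : ℝ} (hs : 0 < s) :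
    sphereMoment w 2 (s • v) = s⁻¹ • sphereMoment v 1 (s • v) := by
  have hw₁ := hasDerivAt_sphereMoment w 1 (s • v) 0
  rw [zero_smul, add_zero] at hw₁
  refine eq_inv_smul_of_hasDerivAt_comp_sqrt hs (hasDerivAt_sphereMoment_smul v 0)
    (hasDerivAt_sphereMoment_smul v 1 s).differentiableAt
    (hasDerivAt_sphereMoment w 0 (s • v)) hw₁ fun b ↦ ?_
  rw [sphereMoment_zero, sphereMoment_zero]
  refine charFun_sphereM_eq_of_norm_eq ((sq_eq_sq₀ (norm_nonneg _) (norm_nonneg _)).1 ?_)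
  have hsq : √(s ^ 2 + b ^ 2) ^ 2 = s ^ 2 + b ^ 2 := Real.sq_sqrt (by positivity)
  rw [norm_add_sq_real]
  simp [norm_smul, hv, hw, inner_smul_left, inner_smul_right, hvw, hsq]

lemma sphereMoment_bessel {d : ℕ} (i : Fin d) {s : ℝ} (hs : 0 < s) :
    s • sphereMoment (EuclideanSpace.single i 1) 2 (s • EuclideanSpace.single i 1) +
      ((d : ℝ) - 1) • sphereMoment (EuclideanSpace.single i 1) 1 (s • EuclideanSpace.single i 1) +
      s • sphereMoment (EuclideanSpace.single i 1) 0 (s • EuclideanSpace.single i 1) = 0 := by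
  set v : Ed d := EuclideanSpace.single i 1
  have hv : ∀ k : Fin d, ‖(EuclideanSpace.single k 1 : Ed d)‖ = 1 := by simp
  have htransverse : ∀ k ∈ Finset.univ.erase i,
      sphereMoment (EuclideanSpace.single k 1) 2 (s • v) = s⁻¹ • sphereMoment v 1 (s • v) :=
    fun k hk ↦ sphereMoment_two_of_orthonormal (hv i) (hv k)
      (by
        rw [EuclideanSpace.inner_single_left]
        simp [(Finset.ne_of_mem_erase hk).symm]) hs
  have hsum := sum_sphereMoment_two (s • v)
  rw [← Finset.add_sum_erase _ _ (Finset.mem_univ i), Finset.sum_congr rfl htransverse,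
    Finset.sum_const, Finset.card_erase_of_mem (Finset.mem_univ i), Finset.card_univ,
    Fintype.card_fin, ← sphereMoment_zero v] at hsum
  have hd : ((d - 1 : ℕ) : ℝ) = (d : ℝ) - 1 := by
    rw [Nat.cast_sub i.pos, Nat.cast_one]
  rw [← Nat.cast_smul_eq_nsmul ℝ, hd] at hsum
  calc _ = s • (sphereMoment v 2 (s • v) + ((d : ℝ) - 1) • s⁻¹ • sphereMoment v 1 (s • v)
        + sphereMoment v 0 (s • v)) := by match_scalars <;> field_simp
    _ = 0 := by rw [hsum, neg_add_cancel, smul_zero]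

lemma charFun_sphereM_decay {d : ℕ} (hd : 3 ≤ d) : ∃ C, 0 < C ∧ ∀ ξ : Ed d,
    ‖charFun (sphereM d 1) ξ‖ * ‖ξ‖ ^ (((d : ℝ) - 1) / 2) ≤ C := by
  have hd3 : (3 : ℝ) ≤ d := by exact_mod_cast hd
  let v : Ed d := EuclideanSpace.single ⟨0, by lia⟩ 1
  have hB₀ : ∀ ξ : Ed d, charFun (sphereM d 1) ξ = sphereMoment v 0 (‖ξ‖ • v) := fun ξ ↦ by
    rw [sphereMoment_zero]
    exact charFun_sphereM_eq_of_norm_eq (by simp [v, norm_smul])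
  obtain ⟨C, hC⟩ := exists_rpow_mul_norm_le_of_bessel (e := ((d : ℝ) - 1) / 2) (by linarith)
    (hasDerivAt_sphereMoment_smul v 0) (hasDerivAt_sphereMoment_smul v 1) fun s hs ↦ by
      rw [mul_div_cancel₀ _ two_ne_zero]
      exact sphereMoment_bessel _ hs
  set V := (sphereM d 1).real univ
  have hV : 0 ≤ V := measureReal_nonneg
  refine ⟨V + |C| + 1, by positivity, fun ξ ↦ ?_⟩
  rcases le_total 1 ‖ξ‖ with hξ | hξ
  · have := hC ‖ξ‖ hξ
    rw [← hB₀, mul_comm] at this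
    linarith [le_abs_self C]
  · calc ‖charFun (sphereM d 1) ξ‖ * ‖ξ‖ ^ (((d : ℝ) - 1) / 2) ≤ V * 1 := by
          gcongr
          · exact norm_charFun_le ξ
          · exact Real.rpow_le_one (norm_nonneg _) hξ (by linarith)
      _ ≤ V + |C| + 1 := by linarith [abs_nonneg C]

end BesselDecay

section Phase

variable {d : ℕ}

/-- The character `e^{-2πi⟨y,ξ⟩}` of Mathlib's normalization of the Fourier transform. -/
def phase (y ξ : Ed d) : ℂ := 𝐞 (-inner ℝ y ξ)

lemma norm_phase (y ξ : Ed d) : ‖phase y ξ‖ = 1 := Circle.norm_coe _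

@[fun_prop]
lemma continuous_phase {X : Type*} [TopologicalSpace X] {f g : X → Ed d} (hf : Continuous f)
    (hg : Continuous g) : Continuous fun x ↦ phase (f x) (g x) :=
  continuous_subtype_val.comp (Real.continuous_fourierChar.comp (hf.inner hg).neg)

lemma phase_comm (y ξ : Ed d) : phase y ξ = phase ξ y := by
  rw [phase, phase, real_inner_comm]

lemma phase_add_left (y z ξ : Ed d) : phase (y + z) ξ = phase y ξ * phase z ξ := by
  rw [phase, inner_add_left, neg_add, AddChar.map_add_eq_mul, Circle.coe_mul]; rfl

lemma phase_smul_left (r : ℝ) (z ξ : Ed d) : phase (r • z) ξ = phase z (r • ξ) := by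
  rw [phase, phase, real_inner_smul_left, real_inner_smul_right]

lemma conj_phase (y ξ : Ed d) : starRingEnd ℂ (phase y ξ) = phase (-y) ξ := by
  rw [phase, phase, inner_neg_left, AddChar.map_neg_eq_inv 𝐞 (-inner ℝ y ξ), Circle.coe_inv_eq_conj]

lemma phase_eq_exp (y ξ : Ed d) :
    phase y ξ = Complex.exp (inner ℝ y (-(2 * Real.pi) • ξ) * Complex.I) := by
  rw [phase, Real.fourierChar_apply, inner_smul_right]
  push_cast
  ring_nf

lemma fourier_eq_integral_phase (f : Ed d → ℂ) (ξ : Ed d) : 𝓕 f ξ = ∫ x, phase x ξ * f x :=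
  Real.fourier_eq f ξ

lemma integral_phase_mul_comp_sub (f : Ed d → ℂ) (y ξ : Ed d) :
    ∫ x, phase x ξ * f (x - y) = phase y ξ * 𝓕 f ξ := by
  rw [← integral_add_right_eq_self _ y, fourier_eq_integral_phase, ← integral_const_mul]
  congr 1 with x
  rw [phase_add_left, add_sub_cancel_right]
  ring

lemma fourier_eq_of_norm_eq {m : Ed d → ℂ} (hm : ∀ x y, ‖x‖ = ‖y‖ → m x = m y) {ξ η : Ed d}
    (h : ‖ξ‖ = ‖η‖) : 𝓕 m ξ = 𝓕 m η := by
  obtain ⟨e, rfl⟩ : ∃ e : Ed d ≃ₗᵢ[ℝ] Ed d, e ξ = η := ⟨_, Submodule.reflection_sub h⟩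
  have hme : m ∘ e = m := funext fun x ↦ hm _ _ (e.norm_map x)
  rw [← Real.fourier_comp_linearIsometry e m ξ, hme]

lemma integral_inner_fourier_eq {f g : Ed d → ℂ} (hf : Integrable f) (hg : Continuous g)
    (hgi : Integrable g) (hg' : Integrable (𝓕 g)) :
    ∫ ξ, inner ℂ (𝓕 f ξ) (𝓕 g ξ) = ∫ x, inner ℂ (f x) (g x) := by
  have h := VectorFourier.integral_sesq_fourierIntegral_eq_neg_flip
    (innerSL ℂ : ℂ →L⋆[ℂ] ℂ →L[ℂ] ℂ) (L := innerₗ (Ed d)) Real.continuous_fourierChar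
    continuous_inner hf hg'
  have hinv : ∫ x, inner ℂ (f x) (g x) = ∫ x, inner ℂ (f x) (𝓕⁻ (𝓕 g) x) := by
    rw [hg.fourierInv_fourier_eq hgi hg']
  rw [hinv]
  simpa using! h

end Phase

section SphereFourier

variable {d : ℕ}

/-- The Fourier transform of the surface measure of the unit sphere. -/
def sphereFourier (d : ℕ) (ξ : Ed d) : ℂ := ∫ z, phase z ξ ∂sphereM d 1

lemma sphereFourier_eq_charFun (ξ : Ed d) :
    sphereFourier d ξ = charFun (sphereM d 1) (-(2 * Real.pi) • ξ) := by
  simp only [sphereFourier, charFun_apply, phase_eq_exp]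

lemma norm_sphereFourier_le (ξ : Ed d) : ‖sphereFourier d ξ‖ ≤ (sphereM d 1).real univ :=
  (norm_integral_le_of_norm_le_const (.of_forall fun z ↦ (norm_phase z ξ).le)).trans_eq (one_mul _)

lemma continuous_sphereFourier : Continuous (sphereFourier d) := by
  rw [funext sphereFourier_eq_charFun]
  exact continuous_charFun.comp (continuous_const_smul _)

lemma sphereFourier_eq_of_norm_eq {ξ η : Ed d} (h : ‖ξ‖ = ‖η‖) :
    sphereFourier d ξ = sphereFourier d η := by
  rw [sphereFourier_eq_charFun, sphereFourier_eq_charFun]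
  exact charFun_sphereM_eq_of_norm_eq (by rw [norm_smul, norm_smul, h])

lemma exists_norm_sphereFourier_smul_le (hd : 3 ≤ d) :
    ∃ C, 0 < C ∧ ∀ t : ℝ, 0 < t → ∀ ξ,
      ‖sphereFourier d (t • ξ)‖ * ‖ξ‖ ^ (((d : ℝ) - 1) / 2) ≤ C * t ^ (-(((d : ℝ) - 1) / 2)) := by
  obtain ⟨C, hC, hdecay⟩ := charFun_sphereM_decay hd
  refine ⟨C, hC, fun t ht ξ ↦ ?_⟩
  have hd1 : 0 ≤ ((d : ℝ) - 1) / 2 := by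
    have : (3 : ℝ) ≤ d := by exact_mod_cast hd
    linarith
  rw [Real.rpow_neg ht.le, ← div_eq_mul_inv, le_div_iff₀ (Real.rpow_pos_of_pos ht _), mul_assoc,
    ← Real.mul_rpow (norm_nonneg _) ht.le, sphereFourier_eq_charFun]
  refine le_trans ?_ (hdecay (-(2 * Real.pi) • t • ξ))
  gcongr
  rw [norm_smul, norm_smul, Real.norm_of_nonneg ht.le, norm_neg,
    Real.norm_of_nonneg Real.two_pi_pos.le, mul_comm]
  exact le_mul_of_one_le_left (by positivity) (by linarith [Real.pi_gt_three])

/-- Averaging `𝓕 m` over the sphere through `v` replaces the character by the Fourier transform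
of the sphere. -/
lemma sphereM_real_univ_mul_fourier {m : Ed d → ℂ} (hm : Integrable m)
    (hrad : ∀ x y, ‖x‖ = ‖y‖ → m x = m y) (v : Ed d) :
    ((sphereM d 1).real univ : ℂ) * 𝓕 m v = ∫ ξ, sphereFourier d (‖v‖ • ξ) * m ξ := by
  have hint : Integrable (fun q : Ed d × Ed d ↦ phase q.2 (‖v‖ • q.1) * m q.1)
      (volume.prod (sphereM d 1)) := by
    have hcont : Continuous fun q : Ed d × Ed d ↦ phase q.2 (‖v‖ • q.1) := by fun_prop
    exact (hm.comp_fst _).bdd_mul hcont.aestronglyMeasurable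
      (.of_forall fun q ↦ (norm_phase _ _).le)
  have hsphere : ∀ᵐ z ∂sphereM d 1, 𝓕 m v = ∫ ξ, phase z (‖v‖ • ξ) * m ξ := by
    filter_upwards [ae_norm_eq_sphereM d 1] with z hz
    rw [fourier_eq_of_norm_eq hrad (η := ‖v‖ • z) (by simp [norm_smul, hz]),
      fourier_eq_integral_phase]
    simp only [phase_comm _ (‖v‖ • z), phase_smul_left]
  calc ((sphereM d 1).real univ : ℂ) * 𝓕 m v = ∫ _, 𝓕 m v ∂sphereM d 1 := by
        rw [integral_const]; rfl
    _ = ∫ z, (∫ ξ, phase z (‖v‖ • ξ) * m ξ) ∂sphereM d 1 := integral_congr_ae hsphere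
    _ = ∫ ξ, ∫ z, phase z (‖v‖ • ξ) * m ξ ∂sphereM d 1 := (integral_integral_swap hint).symm
    _ = ∫ ξ, sphereFourier d (‖v‖ • ξ) * m ξ := by simp only [integral_mul_const, sphereFourier]

end SphereFourier

lemma exists_norm_iteratedFDeriv_le_of_iteratedFDeriv_eq_zero {E F : Type*}
    [NormedAddCommGroup E] [NormedSpace ℝ E] [ProperSpace E] [NormedAddCommGroup F]
    [NormedSpace ℝ F] {f : E → F} (hf : ContDiff ℝ (⊤ : ℕ∞) f) {N : ℕ}
    (h0 : ∀ n < N, iteratedFDeriv ℝ n f 0 = 0) (m : ℕ) {k : ℕ} (hkm : k + m ≤ N) :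
    ∃ C : ℝ, 0 ≤ C ∧ ∀ x, ‖x‖ ≤ 1 → ‖iteratedFDeriv ℝ k f x‖ ≤ C * ‖x‖ ^ m := by
  induction m generalizing k with
  | zero =>
    have hcont : Continuous (iteratedFDeriv ℝ k f) :=
      hf.continuous_iteratedFDeriv (by exact_mod_cast le_top)
    obtain ⟨C, hC⟩ := (isCompact_closedBall (0 : E) 1).exists_bound_of_continuousOn
      hcont.continuousOn
    exact ⟨C, (norm_nonneg _).trans (hC 0 (by simp)),
      fun x hx ↦ by simpa using hC x (by simpa using hx)⟩
  | succ m ih =>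
    obtain ⟨C, hC0, hC⟩ := ih (k := k + 1) (by omega)
    refine ⟨C, hC0, fun x hx ↦ ?_⟩
    have hdiff : Differentiable ℝ (iteratedFDeriv ℝ k f) :=
      hf.differentiable_iteratedFDeriv (by exact_mod_cast WithTop.coe_lt_top _)
    have hmvt := (convex_closedBall (0 : E) ‖x‖).norm_image_sub_le_of_norm_fderiv_le
      (C := C * ‖x‖ ^ m) (x := 0) (y := x) (fun y _ ↦ hdiff y) (fun y hy ↦ by
        have hyx : ‖y‖ ≤ ‖x‖ := by simpa using hy
        rw [norm_fderiv_iteratedFDeriv]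
        exact (hC y (hyx.trans hx)).trans (by gcongr)) (by simp) (by simp)
    rwa [h0 k (by omega), sub_zero, sub_zero, mul_assoc, ← pow_succ] at hmvt

namespace Admissible

variable {ψ₀ : Ed d → ℂ}

lemma continuous (hψ : Admissible d ψ₀) : Continuous ψ₀ := hψ.1.continuous

lemma norm_le (hψ : Admissible d ψ₀) {x : Ed d} (hx : ψ₀ x ≠ 0) : ‖x‖ ≤ 1 / 10 := hψ.2.1 x hx

lemma hasCompactSupport (hψ : Admissible d ψ₀) : HasCompactSupport ψ₀ :=
  .intro (isCompact_closedBall 0 (1 / 10)) fun x hx ↦ by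
    contrapose! hx
    simpa using hψ.norm_le hx

lemma integrable (hψ : Admissible d ψ₀) : Integrable ψ₀ :=
  hψ.continuous.integrable_of_hasCompactSupport hψ.hasCompactSupport

lemma exists_schwartzMap_fourier_eq (hψ : Admissible d ψ₀) : ∃ f : SchwartzMap (Ed d) ℂ, 𝓕 ψ₀ = f :=
  ⟨𝓕 (hψ.hasCompactSupport.toSchwartzMap hψ.1),
    SchwartzMap.fourier_coe (hψ.hasCompactSupport.toSchwartzMap hψ.1)⟩

lemma continuous_fourier (hψ : Admissible d ψ₀) : Continuous (𝓕 ψ₀) := by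
  obtain ⟨f, hf⟩ := hψ.exists_schwartzMap_fourier_eq
  exact hf ▸ f.continuous

lemma integrable_fourier (hψ : Admissible d ψ₀) : Integrable (𝓕 ψ₀) := by
  obtain ⟨f, hf⟩ := hψ.exists_schwartzMap_fourier_eq
  exact hf ▸ f.integrable

lemma fourier_eq_of_norm_eq (hψ : Admissible d ψ₀) {ξ η : Ed d} (h : ‖ξ‖ = ‖η‖) :
    𝓕 ψ₀ ξ = 𝓕 ψ₀ η :=
  _root_.fourier_eq_of_norm_eq hψ.2.2.1 h

lemma exists_norm_fourier_le (hψ : Admissible d ψ₀) : ∃ B, 0 < B ∧ ∀ ξ, ‖𝓕 ψ₀ ξ‖ ≤ B := by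
  obtain ⟨f, hf⟩ := hψ.exists_schwartzMap_fourier_eq
  obtain ⟨B, hB, hfB⟩ := f.decay 0 0
  exact ⟨B, hB, fun ξ ↦ by simpa [hf] using hfB ξ⟩

lemma exists_norm_fourier_le_rpow (hψ : Admissible d ψ₀) {q : ℝ} (hq0 : 0 ≤ q) (hqd : q ≤ d) :
    ∃ C, 0 < C ∧ ∀ ξ, ‖𝓕 ψ₀ ξ‖ ≤ C * ‖ξ‖ ^ q := by
  obtain ⟨f, hf⟩ := hψ.exists_schwartzMap_fourier_eq
  obtain ⟨B, hB0, hB⟩ := hψ.exists_norm_fourier_le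
  obtain ⟨C, -, hC⟩ := exists_norm_iteratedFDeriv_le_of_iteratedFDeriv_eq_zero
    (hf ▸ f.smooth _) hψ.2.2.2 d (k := 0) (by omega)
  refine ⟨max C B, lt_max_of_lt_right hB0, fun ξ ↦ ?_⟩
  rcases le_total ‖ξ‖ 1 with hξ | hξ
  · calc ‖𝓕 ψ₀ ξ‖ = ‖iteratedFDeriv ℝ 0 (𝓕 ψ₀) ξ‖ := norm_iteratedFDeriv_zero.symm
      _ ≤ C * ‖ξ‖ ^ (d : ℝ) := by rw [Real.rpow_natCast]; exact hC ξ hξ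
      _ ≤ max C B * ‖ξ‖ ^ q := by
        refine mul_le_mul (le_max_left _ _) ?_ (by positivity) (by positivity)
        exact Real.rpow_le_rpow_of_exponent_ge' (norm_nonneg ξ) hξ hq0 hqd
  · calc ‖𝓕 ψ₀ ξ‖ ≤ max C B * 1 := by rw [mul_one]; exact (hB ξ).trans (le_max_right _ _)
      _ ≤ max C B * ‖ξ‖ ^ q := by
        gcongr
        exact Real.one_le_rpow hξ hq0

end Admissible

section Atom

variable {d : ℕ} {ψ₀ : Ed d → ℂ}

namespace Admissible

lemma exists_norm_sphereFourier_mul_fourier_le (hψ : Admissible d ψ₀) (hd : 3 ≤ d) :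
    ∃ C, 0 < C ∧ ∀ t : ℝ, 0 < t → ∀ ξ,
      ‖sphereFourier d (t • ξ)‖ * ‖𝓕 ψ₀ ξ‖ ≤ C * t ^ (-(((d : ℝ) - 1) / 2)) := by
  have hd' : (3 : ℝ) ≤ d := by exact_mod_cast hd
  obtain ⟨C, hC0, hC⟩ := hψ.exists_norm_fourier_le_rpow (q := ((d : ℝ) - 1) / 2)
    (by linarith) (by linarith)
  obtain ⟨C', hC0', hC'⟩ := exists_norm_sphereFourier_smul_le hd
  refine ⟨C' * C, by positivity, fun t ht ξ ↦ ?_⟩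
  calc ‖sphereFourier d (t • ξ)‖ * ‖𝓕 ψ₀ ξ‖
      ≤ ‖sphereFourier d (t • ξ)‖ * (C * ‖ξ‖ ^ (((d : ℝ) - 1) / 2)) := by gcongr; exact hC ξ
    _ = ‖sphereFourier d (t • ξ)‖ * ‖ξ‖ ^ (((d : ℝ) - 1) / 2) * C := by ring
    _ ≤ C' * t ^ (-(((d : ℝ) - 1) / 2)) * C := mul_le_mul_of_nonneg_right (hC' t ht ξ) hC0.le
    _ = C' * C * t ^ (-(((d : ℝ) - 1) / 2)) := by ring

lemma exists_norm_sphereFourier_mul_sphereFourier_mul_fourier_le (hψ : Admissible d ψ₀)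
    (hd : 3 ≤ d) : ∃ C, 0 < C ∧ ∀ t : ℝ, 0 < t → ∀ s : ℝ, 0 < s → ∀ ξ,
      ‖sphereFourier d (t • ξ)‖ * ‖sphereFourier d (s • ξ)‖ * ‖𝓕 ψ₀ ξ‖
        ≤ C * (t ^ (-(((d : ℝ) - 1) / 2)) * s ^ (-(((d : ℝ) - 1) / 2))) := by
  have hd' : (3 : ℝ) ≤ d := by exact_mod_cast hd
  obtain ⟨C, hC0, hC⟩ := hψ.exists_norm_fourier_le_rpow
    (q := ((d : ℝ) - 1) / 2 + ((d : ℝ) - 1) / 2) (by linarith) (by linarith)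
  obtain ⟨C', hC0', hC'⟩ := exists_norm_sphereFourier_smul_le hd
  refine ⟨C' * C' * C, by positivity, fun t ht s hs ξ ↦ ?_⟩
  have hsplit : ‖ξ‖ ^ (((d : ℝ) - 1) / 2 + ((d : ℝ) - 1) / 2)
      = ‖ξ‖ ^ (((d : ℝ) - 1) / 2) * ‖ξ‖ ^ (((d : ℝ) - 1) / 2) :=
    Real.rpow_add_of_nonneg (norm_nonneg _) (by linarith) (by linarith)
  calc ‖sphereFourier d (t • ξ)‖ * ‖sphereFourier d (s • ξ)‖ * ‖𝓕 ψ₀ ξ‖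
      ≤ ‖sphereFourier d (t • ξ)‖ * ‖sphereFourier d (s • ξ)‖ *
        (C * ‖ξ‖ ^ (((d : ℝ) - 1) / 2 + ((d : ℝ) - 1) / 2)) := by gcongr; exact hC ξ
    _ = (‖sphereFourier d (t • ξ)‖ * ‖ξ‖ ^ (((d : ℝ) - 1) / 2)) *
        (‖sphereFourier d (s • ξ)‖ * ‖ξ‖ ^ (((d : ℝ) - 1) / 2)) * C := by rw [hsplit]; ring
    _ ≤ (C' * t ^ (-(((d : ℝ) - 1) / 2))) * (C' * s ^ (-(((d : ℝ) - 1) / 2))) * C :=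
      mul_le_mul_of_nonneg_right
        (mul_le_mul (hC' t ht ξ) (hC' s hs ξ) (by positivity) (by positivity)) hC0.le
    _ = C' * C' * C * (t ^ (-(((d : ℝ) - 1) / 2)) * s ^ (-(((d : ℝ) - 1) / 2))) := by ring

lemma psiOf_eq_convolution : psiOf d ψ₀ = convolution ψ₀ ψ₀ (ContinuousLinearMap.mul ℂ ℂ) := by
  ext x
  simp [psiOf, convolution]

lemma continuous_psiOf (hψ : Admissible d ψ₀) : Continuous (psiOf d ψ₀) := by
  rw [psiOf_eq_convolution]
  exact hψ.hasCompactSupport.continuous_convolution_right _ hψ.integrable.locallyIntegrable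
    hψ.continuous

lemma fourier_psiOf (hψ : Admissible d ψ₀) (ξ : Ed d) : 𝓕 (psiOf d ψ₀) ξ = 𝓕 ψ₀ ξ ^ 2 := by
  rw [psiOf_eq_convolution, Real.fourier_mul_convolution_eq hψ.integrable hψ.integrable, sq]

lemma norm_le_of_psiOf_ne_zero (hψ : Admissible d ψ₀) {x : Ed d} (hx : psiOf d ψ₀ x ≠ 0) :
    ‖x‖ ≤ 1 / 5 := by
  obtain ⟨y, hy⟩ : ∃ y, ψ₀ y * ψ₀ (x - y) ≠ 0 := by
    by_contra! h
    exact hx (integral_eq_zero_of_ae (.of_forall h))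
  have h₁ := hψ.norm_le (left_ne_zero_of_mul hy)
  have h₂ := hψ.norm_le (right_ne_zero_of_mul hy)
  calc ‖x‖ = ‖y + (x - y)‖ := by rw [add_sub_cancel]
    _ ≤ 1 / 10 + 1 / 10 := norm_add_le_of_le h₁ h₂
    _ = 1 / 5 := by norm_num

lemma hasCompactSupport_psiOf (hψ : Admissible d ψ₀) : HasCompactSupport (psiOf d ψ₀) :=
  .intro (isCompact_closedBall 0 (1 / 5)) fun x hx ↦ by
    contrapose! hx
    simpa using hψ.norm_le_of_psiOf_ne_zero hx

lemma integrable_psiOf (hψ : Admissible d ψ₀) : Integrable (psiOf d ψ₀) :=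
  hψ.continuous_psiOf.integrable_of_hasCompactSupport hψ.hasCompactSupport_psiOf

end Admissible

/-- The wave packet `F_{y,r}` attached to `a = (y, r)`, with the integral over the sphere of radius
`r` pulled back to the unit sphere, so that it is jointly continuous also across `r = 0`. -/
def wave (d : ℕ) (ψ₀ : Ed d → ℂ) (a : Ed d × ℝ) (x : Ed d) : ℂ :=
  (a.2 : ℂ) ^ (d - 1) * ∫ z, psiOf d ψ₀ (x - a.1 - a.2 • z) ∂sphereM d 1

lemma Fyr_eq_wave (y : Ed d) {r : ℝ} (hr : 0 < r) : Fyr d ψ₀ y r = wave d ψ₀ (y, r) :=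
  funext fun x ↦ integral_sphereM hr fun z ↦ psiOf d ψ₀ (x - y - z)

/-- The Fourier transform of the average of `ψ` over the sphere of radius `r`, that is, of the wave
packet centred at the origin without the factor `r ^ (d - 1)`. -/
def waveSymbol (d : ℕ) (ψ₀ : Ed d → ℂ) (r : ℝ) (ξ : Ed d) : ℂ :=
  sphereFourier d (r • ξ) * 𝓕 ψ₀ ξ ^ 2

namespace Admissible

lemma continuous_uncurry_wave (hψ : Admissible d ψ₀) : Continuous ↿(wave d ψ₀) := by
  obtain ⟨B, hB⟩ := hψ.hasCompactSupport_psiOf.exists_bound_of_continuous hψ.continuous_psiOf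
  refine Continuous.mul (by fun_prop) (continuous_of_dominated (bound := fun _ ↦ B) ?_ ?_ ?_ ?_)
  · exact fun q ↦ (hψ.continuous_psiOf.comp (by fun_prop)).aestronglyMeasurable
  · exact fun q ↦ .of_forall fun z ↦ hB _
  · exact integrable_const _
  · exact .of_forall fun z ↦ hψ.continuous_psiOf.comp (by fun_prop)

lemma continuous_wave (hψ : Admissible d ψ₀) (a : Ed d × ℝ) : Continuous (wave d ψ₀ a) :=
  hψ.continuous_uncurry_wave.comp (continuous_const.prodMk continuous_id)

lemma abs_norm_sub_abs_le_of_wave_ne_zero (hψ : Admissible d ψ₀) {a : Ed d × ℝ} {x : Ed d}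
    (hx : wave d ψ₀ a x ≠ 0) : |‖x - a.1‖ - (|a.2|)| ≤ 1 / 5 := by
  contrapose! hx
  refine mul_eq_zero_of_right _ (integral_eq_zero_of_ae ?_)
  filter_upwards [ae_norm_eq_sphereM d 1] with z hz
  by_contra h
  refine hx.not_ge ((abs_norm_sub_norm_le _ _).trans (hψ.norm_le_of_psiOf_ne_zero h) |>.trans' ?_)
  rw [norm_smul, hz, mul_one, Real.norm_eq_abs]

lemma hasCompactSupport_wave (hψ : Admissible d ψ₀) (a : Ed d × ℝ) :
    HasCompactSupport (wave d ψ₀ a) :=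
  .intro (isCompact_closedBall a.1 (|a.2| + 1 / 5)) fun x hx ↦ by
    contrapose! hx
    rw [mem_closedBall, dist_eq_norm]
    linarith [(abs_le.1 (hψ.abs_norm_sub_abs_le_of_wave_ne_zero hx)).2]

lemma integrable_wave (hψ : Admissible d ψ₀) (a : Ed d × ℝ) : Integrable (wave d ψ₀ a) :=
  (hψ.continuous_wave a).integrable_of_hasCompactSupport (hψ.hasCompactSupport_wave a)

lemma memLp_wave (hψ : Admissible d ψ₀) (a : Ed d × ℝ) : MemLp (wave d ψ₀ a) 2 :=
  (hψ.continuous_wave a).memLp_of_hasCompactSupport (hψ.hasCompactSupport_wave a)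

lemma continuous_waveSymbol (hψ : Admissible d ψ₀) (r : ℝ) : Continuous (waveSymbol d ψ₀ r) :=
  (continuous_sphereFourier.comp (continuous_const_smul r)).mul (hψ.continuous_fourier.pow 2)

lemma waveSymbol_eq_of_norm_eq (hψ : Admissible d ψ₀) (r : ℝ) {ξ η : Ed d} (h : ‖ξ‖ = ‖η‖) :
    waveSymbol d ψ₀ r ξ = waveSymbol d ψ₀ r η := by
  rw [waveSymbol, waveSymbol, hψ.fourier_eq_of_norm_eq h,
    sphereFourier_eq_of_norm_eq (ξ := r • ξ) (η := r • η) (by rw [norm_smul, norm_smul, h])]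

lemma exists_norm_waveSymbol_le (hψ : Admissible d ψ₀) (r : ℝ) :
    ∃ B, ∀ ξ, ‖waveSymbol d ψ₀ r ξ‖ ≤ B := by
  obtain ⟨B, -, hB⟩ := hψ.exists_norm_fourier_le
  refine ⟨(sphereM d 1).real univ * B ^ 2, fun ξ ↦ ?_⟩
  rw [waveSymbol, norm_mul, norm_pow]
  gcongr
  exacts [norm_sphereFourier_le _, hB ξ]

lemma integrable_waveSymbol (hψ : Admissible d ψ₀) (r : ℝ) : Integrable (waveSymbol d ψ₀ r) := by
  obtain ⟨B, -, hB⟩ := hψ.exists_norm_fourier_le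
  have hsq : Integrable fun ξ ↦ 𝓕 ψ₀ ξ ^ 2 :=
    (hψ.integrable_fourier.bdd_mul hψ.continuous_fourier.aestronglyMeasurable
      (.of_forall hB)).congr (.of_forall fun ξ ↦ (sq _).symm)
  exact hsq.bdd_mul (continuous_sphereFourier.comp (continuous_const_smul r)).aestronglyMeasurable
    (.of_forall fun ξ ↦ norm_sphereFourier_le _)

lemma integrable_prod_phase_mul_psiOf (hψ : Admissible d ψ₀) (a : Ed d × ℝ) (ξ : Ed d) :
    Integrable (fun q : Ed d × Ed d ↦ phase q.1 ξ * psiOf d ψ₀ (q.1 - (a.1 + a.2 • q.2)))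
      (volume.prod (sphereM d 1)) := by
  have hpsi : Continuous fun q : Ed d × Ed d ↦ psiOf d ψ₀ (q.1 - (a.1 + a.2 • q.2)) :=
    hψ.continuous_psiOf.comp (by fun_prop)
  have hcont : Continuous fun q : Ed d × Ed d ↦ phase q.1 ξ := by fun_prop
  have hint : Integrable (fun q : Ed d × Ed d ↦ psiOf d ψ₀ (q.1 - (a.1 + a.2 • q.2)))
      (volume.prod (sphereM d 1)) := by
    refine (integrable_prod_iff' hpsi.aestronglyMeasurable).2 ⟨.of_forall fun z ↦ ?_, ?_⟩
    · exact hψ.integrable_psiOf.comp_sub_right (a.1 + a.2 • z)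
    · refine (integrable_const (∫ x, ‖psiOf d ψ₀ x‖)).congr (.of_forall fun z ↦ ?_)
      exact (integral_sub_right_eq_self (fun x ↦ ‖psiOf d ψ₀ x‖) (a.1 + a.2 • z)).symm
  exact hint.bdd_mul hcont.aestronglyMeasurable (.of_forall fun q ↦ (norm_phase _ _).le)

lemma fourier_wave (hψ : Admissible d ψ₀) (a : Ed d × ℝ) (ξ : Ed d) :
    𝓕 (wave d ψ₀ a) ξ
      = (a.2 : ℂ) ^ (d - 1) * (waveSymbol d ψ₀ a.2 ξ * phase a.1 ξ) := by
  calc 𝓕 (wave d ψ₀ a) ξ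
      = (a.2 : ℂ) ^ (d - 1) *
        ∫ x, ∫ z, phase x ξ * psiOf d ψ₀ (x - (a.1 + a.2 • z)) ∂sphereM d 1 := by
        rw [fourier_eq_integral_phase, ← integral_const_mul]
        simp only [wave, integral_const_mul, sub_sub, mul_left_comm]
    _ = (a.2 : ℂ) ^ (d - 1) *
        ∫ z, (∫ x, phase x ξ * psiOf d ψ₀ (x - (a.1 + a.2 • z))) ∂sphereM d 1 := by
        rw [integral_integral_swap (hψ.integrable_prod_phase_mul_psiOf a ξ)]
    _ = (a.2 : ℂ) ^ (d - 1) *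
        ∫ z, phase z (a.2 • ξ) * (𝓕 ψ₀ ξ ^ 2 * phase a.1 ξ) ∂sphereM d 1 := by
        simp only [integral_phase_mul_comp_sub, hψ.fourier_psiOf, phase_add_left, phase_smul_left]
        congr 2 with z
        ring
    _ = (a.2 : ℂ) ^ (d - 1) * (waveSymbol d ψ₀ a.2 ξ * phase a.1 ξ) := by
        rw [integral_mul_const, waveSymbol, sphereFourier, mul_assoc (∫ z, _ ∂_)]

lemma integrable_fourier_wave (hψ : Admissible d ψ₀) (a : Ed d × ℝ) :
    Integrable (𝓕 (wave d ψ₀ a)) := by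
  have hphase : Continuous (phase a.1) := by fun_prop
  exact (((hψ.integrable_waveSymbol a.2).mul_bdd hphase.aestronglyMeasurable
    (.of_forall fun ξ ↦ (norm_phase a.1 ξ).le)).const_mul _).congr
    (.of_forall fun ξ ↦ (hψ.fourier_wave a ξ).symm)

end Admissible

end Atom

section WaveEstimates

lemma norm_ofReal_pow {r : ℝ} (hr : 0 ≤ r) (n : ℕ) : ‖(r : ℂ) ^ n‖ = r ^ n := by
  rw [norm_pow, Complex.norm_of_nonneg hr]

lemma pow_sub_one_eq_rpow_half_mul_self {d : ℕ} (hd : d ≠ 0) {r : ℝ} (hr : 0 < r) :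
    r ^ (d - 1) = r ^ (((d : ℝ) - 1) / 2) * r ^ (((d : ℝ) - 1) / 2) := by
  rw [← Real.rpow_add hr, add_halves, ← Real.rpow_natCast, Nat.cast_pred (Nat.pos_of_ne_zero hd)]

lemma norm_sq_sum_smul_toLp {α ι : Type*} [MeasurableSpace α] {μ : Measure α} {f : ι → α → ℂ}
    (hf : ∀ i, MemLp (f i) 2 μ) (s : Finset ι) (c : ι → ℂ) :
    ‖∑ i ∈ s, c i • (hf i).toLp (f i)‖ ^ 2 = ∫ x, ‖∑ i ∈ s, c i * f i x‖ ^ 2 ∂μ := by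
  have hae : ∀ᵐ x ∂μ, (∑ i ∈ s, c i • (hf i).toLp (f i) : Lp ℂ 2 μ) x = ∑ i ∈ s, c i * f i x := by
    have hi : ∀ i ∈ s, ∀ᵐ x ∂μ, (c i • (hf i).toLp (f i) : Lp ℂ 2 μ) x = c i * f i x := fun i _ ↦ by
      filter_upwards [Lp.coeFn_smul (c i) ((hf i).toLp (f i)), (hf i).coeFn_toLp] with x h₁ h₂
      rw [h₁, Pi.smul_apply, h₂, smul_eq_mul]
    filter_upwards [Lp.coeFn_finsetSum s fun i ↦ c i • (hf i).toLp (f i),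
      (Filter.eventually_all_finset s).2 hi] with x h₁ h₂
    rw [h₁, Finset.sum_apply]
    exact Finset.sum_congr rfl h₂
  rw [← Complex.ofReal_inj, Complex.ofReal_pow, ← integral_complex_ofReal,
    ← Complex.coe_algebraMap, ← inner_self_eq_norm_sq_to_K, L2.inner_def]
  refine integral_congr_ae ?_
  filter_upwards [hae] with x hx
  rw [hx, inner_self_eq_norm_sq_to_K]
  simp

variable {d : ℕ} {ψ₀ : Ed d → ℂ}

lemma integral_norm_fourier_sq {g : Ed d → ℂ} (hg : Continuous g) (hgi : Integrable g)
    (hg' : Integrable (𝓕 g)) : ∫ ξ, ‖𝓕 g ξ‖ ^ 2 = ∫ x, ‖g x‖ ^ 2 := by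
  apply Complex.ofRealLI.injective
  simpa [← LinearIsometry.integral_comp_comm, inner_self_eq_norm_sq_to_K] using
    integral_inner_fourier_eq hgi hg hgi hg'

lemma fourier_finsetSum_mul {ι : Type*} {f : ι → Ed d → ℂ} (hf : ∀ i, Integrable (f i))
    (s : Finset ι) (c : ι → ℂ) (ξ : Ed d) :
    𝓕 (fun x ↦ ∑ i ∈ s, c i * f i x) ξ = ∑ i ∈ s, c i * 𝓕 (f i) ξ := by
  have hcont : Continuous fun x : Ed d ↦ phase x ξ := by fun_prop
  simp only [fourier_eq_integral_phase, Finset.mul_sum, ← integral_const_mul]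
  rw [integral_finsetSum]
  · simp only [mul_left_comm]
  · exact fun i _ ↦ ((hf i).const_mul (c i)).bdd_mul hcont.aestronglyMeasurable
      (.of_forall fun x ↦ (norm_phase x ξ).le)

namespace Admissible

lemma sphereM_real_univ_mul_norm_fourier_le (hψ : Admissible d ψ₀) {m : Ed d → ℂ}
    (hm : Integrable m) (hrad : ∀ x y, ‖x‖ = ‖y‖ → m x = m y) {v : Ed d} {D : ℝ}
    (hD : ∀ ξ, ‖sphereFourier d (‖v‖ • ξ)‖ * ‖m ξ‖ ≤ D * ‖𝓕 ψ₀ ξ‖) :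
    (sphereM d 1).real univ * ‖𝓕 m v‖ ≤ D * ∫ ξ, ‖𝓕 ψ₀ ξ‖ := by
  calc (sphereM d 1).real univ * ‖𝓕 m v‖ = ‖∫ ξ, sphereFourier d (‖v‖ • ξ) * m ξ‖ := by
        rw [← sphereM_real_univ_mul_fourier hm hrad, norm_mul,
          Complex.norm_of_nonneg measureReal_nonneg]
    _ ≤ ∫ ξ, D * ‖𝓕 ψ₀ ξ‖ :=
        norm_integral_le_of_norm_le (hψ.integrable_fourier.norm.const_mul D)
          (.of_forall fun ξ ↦ (norm_mul _ _).trans_le (hD ξ))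
    _ = D * ∫ ξ, ‖𝓕 ψ₀ ξ‖ := integral_const_mul _ _

lemma wave_eq_mul_fourier (hψ : Admissible d ψ₀) (a : Ed d × ℝ) (x : Ed d) :
    wave d ψ₀ a x = (a.2 : ℂ) ^ (d - 1) * 𝓕 (waveSymbol d ψ₀ a.2) (a.1 - x) := by
  rw [← (hψ.continuous_wave a).fourierInv_fourier_eq (hψ.integrable_wave a)
    (hψ.integrable_fourier_wave a), Real.fourierInv_eq_fourier_neg, fourier_eq_integral_phase,
    fourier_eq_integral_phase, ← integral_const_mul]
  congr 1 with ξ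
  rw [hψ.fourier_wave, sub_eq_add_neg, phase_comm ξ (a.1 + -x), phase_add_left,
    phase_comm (-x) ξ]
  ring

lemma exists_norm_fourier_waveSymbol_le (hψ : Admissible d ψ₀) (hd : 3 ≤ d) :
    ∃ C, 0 < C ∧ ∀ r, 0 < r → ∀ v : Ed d, 0 < ‖v‖ → ‖𝓕 (waveSymbol d ψ₀ r) v‖
      ≤ C * (‖v‖ ^ (-(((d : ℝ) - 1) / 2)) * r ^ (-(((d : ℝ) - 1) / 2))) := by
  obtain ⟨C, hC0, hC⟩ := hψ.exists_norm_sphereFourier_mul_sphereFourier_mul_fourier_le hd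
  have hV := sphereM_real_univ_pos (d := d) (by omega)
  refine ⟨(C * ∫ ξ, ‖𝓕 ψ₀ ξ‖) / (sphereM d 1).real univ + 1, by positivity, fun r hr v hv ↦ ?_⟩
  have hbound := hψ.sphereM_real_univ_mul_norm_fourier_le (v := v) (hψ.integrable_waveSymbol r)
    (fun _ _ ↦ hψ.waveSymbol_eq_of_norm_eq r)
    (D := C * (‖v‖ ^ (-(((d : ℝ) - 1) / 2)) * r ^ (-(((d : ℝ) - 1) / 2)))) fun ξ ↦ by
      rw [waveSymbol, norm_mul, norm_pow, sq, ← mul_assoc, ← mul_assoc]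
      exact mul_le_mul_of_nonneg_right (hC _ hv _ hr ξ) (norm_nonneg _)
  calc ‖𝓕 (waveSymbol d ψ₀ r) v‖
      ≤ (C * (‖v‖ ^ (-(((d : ℝ) - 1) / 2)) * r ^ (-(((d : ℝ) - 1) / 2))) * ∫ ξ, ‖𝓕 ψ₀ ξ‖)
        / (sphereM d 1).real univ := by rw [le_div_iff₀' hV]; linarith
    _ = (C * ∫ ξ, ‖𝓕 ψ₀ ξ‖) / (sphereM d 1).real univ *
        (‖v‖ ^ (-(((d : ℝ) - 1) / 2)) * r ^ (-(((d : ℝ) - 1) / 2))) := by ring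
    _ ≤ ((C * ∫ ξ, ‖𝓕 ψ₀ ξ‖) / (sphereM d 1).real univ + 1) *
        (‖v‖ ^ (-(((d : ℝ) - 1) / 2)) * r ^ (-(((d : ℝ) - 1) / 2))) := by gcongr; linarith

lemma exists_norm_wave_le (hψ : Admissible d ψ₀) (hd : 3 ≤ d) :
    ∃ C, 0 < C ∧ ∀ a : Ed d × ℝ, 1 ≤ a.2 → ∀ x, ‖wave d ψ₀ a x‖ ≤ C := by
  have hd' : (3 : ℝ) ≤ d := by exact_mod_cast hd
  obtain ⟨C, hC0, hC⟩ := hψ.exists_norm_fourier_waveSymbol_le hd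
  refine ⟨C * (4 / 5 : ℝ) ^ (-(((d : ℝ) - 1) / 2)), by positivity, fun a ha x ↦ ?_⟩
  have hr : 0 < a.2 := by linarith
  by_cases hx : wave d ψ₀ a x = 0
  · rw [hx, norm_zero]
    positivity
  have hv : 4 / 5 * a.2 ≤ ‖a.1 - x‖ := by
    have := (abs_le.1 (hψ.abs_norm_sub_abs_le_of_wave_ne_zero hx)).1
    rw [norm_sub_rev] at this
    linarith [le_abs_self a.2]
  have hdecay : ‖a.1 - x‖ ^ (-(((d : ℝ) - 1) / 2))
      ≤ (4 / 5 : ℝ) ^ (-(((d : ℝ) - 1) / 2)) * a.2 ^ (-(((d : ℝ) - 1) / 2)) := by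
    rw [← Real.mul_rpow (by norm_num) hr.le]
    exact Real.rpow_le_rpow_of_nonpos (by positivity) hv (by linarith)
  calc ‖wave d ψ₀ a x‖ = a.2 ^ (d - 1) * ‖𝓕 (waveSymbol d ψ₀ a.2) (a.1 - x)‖ := by
        rw [hψ.wave_eq_mul_fourier, norm_mul, norm_ofReal_pow hr.le]
    _ ≤ a.2 ^ (d - 1) * (C * ((4 / 5 : ℝ) ^ (-(((d : ℝ) - 1) / 2)) *
          a.2 ^ (-(((d : ℝ) - 1) / 2)) * a.2 ^ (-(((d : ℝ) - 1) / 2)))) := by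
        gcongr
        exact (hC _ hr _ (by linarith)).trans (by gcongr)
    _ = C * (4 / 5 : ℝ) ^ (-(((d : ℝ) - 1) / 2)) := by
        rw [pow_sub_one_eq_rpow_half_mul_self (by omega) hr, Real.rpow_neg hr.le]
        field_simp

end Admissible

end WaveEstimates

section WaveInnerProducts

variable {d : ℕ} {ψ₀ : Ed d → ℂ}

namespace Admissible

/-- The wave packet `F_{y,r}` attached to `a = (y, r)`, as an element of the Hilbert space `L²`. -/
def waveL2 (hψ : Admissible d ψ₀) (a : Ed d × ℝ) : Lp ℂ 2 (volume : Measure (Ed d)) :=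
  (hψ.memLp_wave a).toLp _

lemma inner_waveL2 (hψ : Admissible d ψ₀) (a b : Ed d × ℝ) :
    inner ℂ (hψ.waveL2 a) (hψ.waveL2 b) = ∫ x, inner ℂ (wave d ψ₀ a x) (wave d ψ₀ b x) := by
  rw [L2.inner_def]
  refine integral_congr_ae ?_
  filter_upwards [(hψ.memLp_wave a).coeFn_toLp, (hψ.memLp_wave b).coeFn_toLp] with x h₁ h₂
  rw [waveL2, waveL2, h₁, h₂]

lemma inner_waveL2_eq_zero (hψ : Admissible d ψ₀) {a b : Ed d × ℝ} (ha : 1 ≤ a.2) (hb : 1 ≤ b.2)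
    (h : ‖a.1 - b.1‖ + 1 < |a.2 - b.2| ∨ a.2 + b.2 + 1 < ‖a.1 - b.1‖) :
    inner ℂ (hψ.waveL2 a) (hψ.waveL2 b) = 0 := by
  rw [hψ.inner_waveL2]
  refine integral_eq_zero_of_ae (.of_forall fun x ↦ ?_)
  by_contra h0
  have hax : wave d ψ₀ a x ≠ 0 := fun h ↦ h0 (by simp [h])
  have hbx : wave d ψ₀ b x ≠ 0 := fun h ↦ h0 (by simp [h])
  have h₁ := abs_le.1 (hψ.abs_norm_sub_abs_le_of_wave_ne_zero hax)
  have h₂ := abs_le.1 (hψ.abs_norm_sub_abs_le_of_wave_ne_zero hbx)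
  rw [abs_of_pos (by linarith), ← dist_eq_norm] at h₁ h₂
  rw [← dist_eq_norm] at h
  have t₁ := dist_triangle_left a.1 b.1 x
  have t₂ := dist_triangle x b.1 a.1
  have t₃ := dist_triangle x a.1 b.1
  rw [dist_comm b.1] at t₂
  rcases h with h | h
  · rcases abs_cases (a.2 - b.2) with h' | h' <;> linarith
  · linarith

lemma exists_norm_sphereFourier_mul_fourier_mul_rpow_le (hψ : Admissible d ψ₀) (hd : 3 ≤ d) :
    ∃ C, 0 < C ∧ ∀ t : ℝ, 0 ≤ t → ∀ ξ,
      ‖sphereFourier d (t • ξ)‖ * ‖𝓕 ψ₀ ξ‖ * (1 + t) ^ (((d : ℝ) - 1) / 2) ≤ C := by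
  have hd' : (3 : ℝ) ≤ d := by exact_mod_cast hd
  have hV := sphereM_real_univ_pos (d := d) (by omega)
  obtain ⟨C, hC0, hC⟩ := hψ.exists_norm_sphereFourier_mul_fourier_le hd
  obtain ⟨B, -, hB⟩ := hψ.exists_norm_fourier_le
  refine ⟨max C ((sphereM d 1).real univ * B) * 2 ^ (((d : ℝ) - 1) / 2), by positivity,
    fun t ht ξ ↦ ?_⟩
  rcases le_or_gt t 1 with h | h
  · have hpow : (1 + t) ^ (((d : ℝ) - 1) / 2) ≤ 2 ^ (((d : ℝ) - 1) / 2) :=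
      Real.rpow_le_rpow (by linarith) (by linarith) (by linarith)
    exact mul_le_mul ((mul_le_mul (norm_sphereFourier_le _) (hB ξ) (norm_nonneg _) hV.le).trans
      (le_max_right C _)) hpow (by positivity) (by positivity)
  · have hpow : (1 + t) ^ (((d : ℝ) - 1) / 2)
        ≤ 2 ^ (((d : ℝ) - 1) / 2) * t ^ (((d : ℝ) - 1) / 2) := by
      rw [← Real.mul_rpow (by norm_num) ht]
      exact Real.rpow_le_rpow (by linarith) (by linarith) (by linarith)
    calc ‖sphereFourier d (t • ξ)‖ * ‖𝓕 ψ₀ ξ‖ * (1 + t) ^ (((d : ℝ) - 1) / 2)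
        ≤ C * t ^ (-(((d : ℝ) - 1) / 2)) *
          (2 ^ (((d : ℝ) - 1) / 2) * t ^ (((d : ℝ) - 1) / 2)) :=
          mul_le_mul (hC t (by linarith) ξ) hpow (by positivity) (by positivity)
      _ = C * 2 ^ (((d : ℝ) - 1) / 2) := by
          rw [Real.rpow_neg ht]
          field_simp
      _ ≤ max C ((sphereM d 1).real univ * B) * 2 ^ (((d : ℝ) - 1) / 2) :=
          mul_le_mul_of_nonneg_right (le_max_left _ _) (by positivity)

lemma integrable_inner_waveSymbol (hψ : Admissible d ψ₀) (r s : ℝ) :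
    Integrable fun ξ ↦ inner ℂ (waveSymbol d ψ₀ r ξ) (waveSymbol d ψ₀ s ξ) := by
  obtain ⟨B, hB⟩ := hψ.exists_norm_waveSymbol_le r
  simp only [RCLike.inner_apply]
  exact (hψ.integrable_waveSymbol s).mul_bdd
    (RCLike.continuous_conj.comp (hψ.continuous_waveSymbol r)).aestronglyMeasurable
    (.of_forall fun ξ ↦ (RCLike.norm_conj _).trans_le (hB ξ))

lemma inner_waveL2_eq_mul_fourier (hψ : Admissible d ψ₀) (a b : Ed d × ℝ) :
    inner ℂ (hψ.waveL2 a) (hψ.waveL2 b) = (a.2 : ℂ) ^ (d - 1) * (b.2 : ℂ) ^ (d - 1) *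
      𝓕 (fun ξ ↦ inner ℂ (waveSymbol d ψ₀ a.2 ξ) (waveSymbol d ψ₀ b.2 ξ)) (b.1 - a.1) := by
  rw [hψ.inner_waveL2, ← integral_inner_fourier_eq (hψ.integrable_wave a) (hψ.continuous_wave b)
    (hψ.integrable_wave b) (hψ.integrable_fourier_wave b), fourier_eq_integral_phase,
    ← integral_const_mul]
  congr 1 with ξ
  simp only [hψ.fourier_wave, RCLike.inner_apply, map_mul, map_pow, Complex.conj_ofReal,
    conj_phase, sub_eq_add_neg, phase_comm ξ, phase_add_left]
  ring

lemma exists_norm_fourier_inner_waveSymbol_le (hψ : Admissible d ψ₀) (hd : 3 ≤ d) :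
    ∃ C, 0 < C ∧ ∀ r, 0 < r → ∀ s, 0 < s → ∀ v : Ed d,
      ‖𝓕 (fun ξ ↦ inner ℂ (waveSymbol d ψ₀ r ξ) (waveSymbol d ψ₀ s ξ)) v‖ *
          (1 + ‖v‖) ^ (((d : ℝ) - 1) / 2)
        ≤ C * (r ^ (-(((d : ℝ) - 1) / 2)) * s ^ (-(((d : ℝ) - 1) / 2))) := by
  obtain ⟨C₁, hC₁, hdecay⟩ := hψ.exists_norm_sphereFourier_mul_fourier_le hd
  obtain ⟨C₂, hC₂, hweight⟩ := hψ.exists_norm_sphereFourier_mul_fourier_mul_rpow_le hd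
  have hV := sphereM_real_univ_pos (d := d) (by omega)
  refine ⟨(C₁ * C₁ * C₂ * ∫ ξ, ‖𝓕 ψ₀ ξ‖) / (sphereM d 1).real univ + 1, by positivity,
    fun r hr s hs v ↦ ?_⟩
  set R := r ^ (-(((d : ℝ) - 1) / 2))
  set S := s ^ (-(((d : ℝ) - 1) / 2))
  set w := (1 + ‖v‖) ^ (((d : ℝ) - 1) / 2)
  have hw : 0 < w := by positivity
  have hbound := hψ.sphereM_real_univ_mul_norm_fourier_le (v := v)
    (hψ.integrable_inner_waveSymbol r s)
    (fun x y h ↦ by rw [hψ.waveSymbol_eq_of_norm_eq r h, hψ.waveSymbol_eq_of_norm_eq s h])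
    (D := (C₁ * R) * (C₁ * S) * (C₂ / w)) fun ξ ↦ by
      calc _ = (‖sphereFourier d (r • ξ)‖ * ‖𝓕 ψ₀ ξ‖) * (‖sphereFourier d (s • ξ)‖ * ‖𝓕 ψ₀ ξ‖) *
            (‖sphereFourier d (‖v‖ • ξ)‖ * ‖𝓕 ψ₀ ξ‖) * ‖𝓕 ψ₀ ξ‖ := by
            simp only [waveSymbol, RCLike.inner_apply, norm_mul, norm_pow, RCLike.norm_conj]
            ring
        _ ≤ (C₁ * R) * (C₁ * S) * (C₂ / w) * ‖𝓕 ψ₀ ξ‖ :=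
            mul_le_mul_of_nonneg_right (mul_le_mul
              (mul_le_mul (hdecay r hr ξ) (hdecay s hs ξ) (by positivity) (by positivity))
              ((le_div_iff₀ hw).2 (hweight _ (norm_nonneg _) ξ)) (by positivity) (by positivity))
              (norm_nonneg _)
  calc _ ≤ ((C₁ * R) * (C₁ * S) * (C₂ / w) * ∫ ξ, ‖𝓕 ψ₀ ξ‖) / (sphereM d 1).real univ * w :=
        mul_le_mul_of_nonneg_right ((le_div_iff₀' hV).2 hbound) hw.le
    _ = (C₁ * C₁ * C₂ * ∫ ξ, ‖𝓕 ψ₀ ξ‖) / (sphereM d 1).real univ * (R * S) := by field_simp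
    _ ≤ ((C₁ * C₁ * C₂ * ∫ ξ, ‖𝓕 ψ₀ ξ‖) / (sphereM d 1).real univ + 1) * (R * S) := by
        gcongr
        linarith

lemma exists_norm_inner_waveL2_mul_rpow_le (hψ : Admissible d ψ₀) (hd : 3 ≤ d) :
    ∃ C, 0 < C ∧ ∀ a b : Ed d × ℝ, 0 < a.2 → 0 < b.2 →
      ‖inner ℂ (hψ.waveL2 a) (hψ.waveL2 b)‖ * (1 + ‖a.1 - b.1‖) ^ (((d : ℝ) - 1) / 2)
        ≤ C * (a.2 ^ (((d : ℝ) - 1) / 2) * b.2 ^ (((d : ℝ) - 1) / 2)) := by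
  obtain ⟨C, hC0, hC⟩ := hψ.exists_norm_fourier_inner_waveSymbol_le hd
  refine ⟨C, hC0, fun a b ha hb ↦ ?_⟩
  rw [hψ.inner_waveL2_eq_mul_fourier, norm_mul, norm_mul, norm_ofReal_pow ha.le,
    norm_ofReal_pow hb.le, norm_sub_rev a.1, mul_assoc]
  calc _ ≤ a.2 ^ (d - 1) * b.2 ^ (d - 1) *
        (C * (a.2 ^ (-(((d : ℝ) - 1) / 2)) * b.2 ^ (-(((d : ℝ) - 1) / 2)))) :=
        mul_le_mul_of_nonneg_left (hC _ ha _ hb _) (by positivity)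
    _ = C * (a.2 ^ (((d : ℝ) - 1) / 2) * b.2 ^ (((d : ℝ) - 1) / 2)) := by
        rw [pow_sub_one_eq_rpow_half_mul_self (by omega) ha,
          pow_sub_one_eq_rpow_half_mul_self (by omega) hb, Real.rpow_neg ha.le,
          Real.rpow_neg hb.le]
        field_simp

lemma norm_sq_sum_mul_comp_sub (hψ : Admissible d ψ₀) {Y : Finset (Ed d)}
    (hY : (Y : Set (Ed d)).Pairwise fun y z ↦ 1 ≤ dist y z) (c : Ed d → ℂ) (x : Ed d) :
    ‖∑ y ∈ Y, c y * ψ₀ (x - y)‖ ^ 2 = ∑ y ∈ Y, ‖c y‖ ^ 2 * ‖ψ₀ (x - y)‖ ^ 2 := by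
  by_cases h : ∃ y ∈ Y, ψ₀ (x - y) ≠ 0
  · obtain ⟨y, hy, hy0⟩ := h
    have hz : ∀ z ∈ Y, z ≠ y → ψ₀ (x - z) = 0 := by
      intro z hz hzy
      by_contra h0
      have h₁ := hψ.norm_le hy0
      have h₂ := hψ.norm_le h0
      rw [← dist_eq_norm] at h₁ h₂
      linarith [hY hz hy hzy, dist_triangle_left z y x]
    rw [Finset.sum_eq_single_of_mem y hy fun z h₁ h₂ ↦ by rw [hz z h₁ h₂, mul_zero],
      Finset.sum_eq_single_of_mem y hy fun z h₁ h₂ ↦ by simp [hz z h₁ h₂], norm_mul, mul_pow]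
  · push Not at h
    rw [Finset.sum_eq_zero fun y hy ↦ by rw [h y hy, mul_zero],
      Finset.sum_eq_zero fun y hy ↦ by simp [h y hy], norm_zero, zero_pow two_ne_zero]

lemma integral_norm_sq_sum_mul_comp_sub (hψ : Admissible d ψ₀) {Y : Finset (Ed d)}
    (hY : (Y : Set (Ed d)).Pairwise fun y z ↦ 1 ≤ dist y z) (c : Ed d → ℂ) :
    ∫ x, ‖∑ y ∈ Y, c y * ψ₀ (x - y)‖ ^ 2 = (∫ x, ‖ψ₀ x‖ ^ 2) * ∑ y ∈ Y, ‖c y‖ ^ 2 := by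
  have hsq : Integrable fun x ↦ ‖ψ₀ x‖ ^ 2 :=
    (hψ.continuous.memLp_of_hasCompactSupport hψ.hasCompactSupport).integrable_norm_pow
      two_ne_zero
  rw [funext (hψ.norm_sq_sum_mul_comp_sub hY c),
    integral_finsetSum _ fun y _ ↦ (hsq.comp_sub_right y).const_mul _, Finset.mul_sum]
  refine Finset.sum_congr rfl fun y _ ↦ ?_
  rw [integral_const_mul, integral_sub_right_eq_self (fun x ↦ ‖ψ₀ x‖ ^ 2) y, mul_comm]

lemma fourier_sum_mul_comp_sub (hψ : Admissible d ψ₀) (Y : Finset (Ed d)) (c : Ed d → ℂ)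
    (ξ : Ed d) : 𝓕 (fun x ↦ ∑ y ∈ Y, c y * ψ₀ (x - y)) ξ
      = ∑ y ∈ Y, c y * (phase y ξ * 𝓕 ψ₀ ξ) := by
  rw [fourier_finsetSum_mul fun y : Ed d ↦ hψ.integrable.comp_sub_right y]
  simp only [fourier_eq_integral_phase (fun x ↦ ψ₀ (x - _)), integral_phase_mul_comp_sub]

lemma continuous_fourier_sum_mul_comp_sub (hψ : Admissible d ψ₀) (Y : Finset (Ed d))
    (c : Ed d → ℂ) : Continuous (𝓕 fun x ↦ ∑ y ∈ Y, c y * ψ₀ (x - y)) := by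
  rw [funext (hψ.fourier_sum_mul_comp_sub Y c)]
  have := hψ.continuous_fourier
  fun_prop

lemma integrable_fourier_sum_mul_comp_sub (hψ : Admissible d ψ₀) (Y : Finset (Ed d))
    (c : Ed d → ℂ) : Integrable (𝓕 fun x ↦ ∑ y ∈ Y, c y * ψ₀ (x - y)) := by
  rw [funext (hψ.fourier_sum_mul_comp_sub Y c)]
  refine integrable_finsetSum _ fun y _ ↦ .const_mul ?_ _
  have hphase : Continuous (phase y) := by fun_prop
  exact hψ.integrable_fourier.bdd_mul hphase.aestronglyMeasurable
    (.of_forall fun ξ ↦ (norm_phase y ξ).le)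

lemma integrable_norm_fourier_sum_mul_comp_sub_sq (hψ : Admissible d ψ₀) (Y : Finset (Ed d))
    (c : Ed d → ℂ) : Integrable fun ξ ↦ ‖𝓕 (fun x ↦ ∑ y ∈ Y, c y * ψ₀ (x - y)) ξ‖ ^ 2 := by
  obtain ⟨B, -, hB⟩ := hψ.exists_norm_fourier_le
  have hbound : ∀ ξ, ‖𝓕 (fun x ↦ ∑ y ∈ Y, c y * ψ₀ (x - y)) ξ‖ ≤ ∑ y ∈ Y, ‖c y‖ * B := fun ξ ↦ by
    rw [hψ.fourier_sum_mul_comp_sub]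
    refine norm_sum_le_of_le _ fun y _ ↦ ?_
    rw [norm_mul, norm_mul, norm_phase, one_mul]
    exact mul_le_mul_of_nonneg_left (hB ξ) (norm_nonneg _)
  simp only [sq]
  exact (hψ.integrable_fourier_sum_mul_comp_sub Y c).norm.bdd_mul
    (hψ.continuous_fourier_sum_mul_comp_sub Y c).norm.aestronglyMeasurable
    (.of_forall fun ξ ↦ (norm_norm _).trans_le (hbound ξ))

lemma fourier_sum_mul_wave (hψ : Admissible d ψ₀) (Y : Finset (Ed d)) (c : Ed d → ℂ) (r : ℝ)
    (ξ : Ed d) : 𝓕 (fun x ↦ ∑ y ∈ Y, c y * wave d ψ₀ (y, r) x) ξ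
      = (r : ℂ) ^ (d - 1) * (sphereFourier d (r • ξ) * 𝓕 ψ₀ ξ) *
        𝓕 (fun x ↦ ∑ y ∈ Y, c y * ψ₀ (x - y)) ξ := by
  rw [fourier_finsetSum_mul fun y : Ed d ↦ hψ.integrable_wave (y, r),
    hψ.fourier_sum_mul_comp_sub, Finset.mul_sum]
  refine Finset.sum_congr rfl fun y _ ↦ ?_
  rw [hψ.fourier_wave, waveSymbol]
  ring

lemma norm_sq_sum_smul_waveL2 (hψ : Admissible d ψ₀) (Y : Finset (Ed d)) (c : Ed d → ℂ) (r : ℝ) :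
    ‖∑ y ∈ Y, c y • hψ.waveL2 (y, r)‖ ^ 2
      = ∫ ξ, ‖𝓕 (fun x ↦ ∑ y ∈ Y, c y * wave d ψ₀ (y, r) x) ξ‖ ^ 2 := by
  simp only [waveL2]
  rw [norm_sq_sum_smul_toLp (fun y ↦ hψ.memLp_wave (y, r)), integral_norm_fourier_sq
    (g := fun x ↦ ∑ y ∈ Y, c y * wave d ψ₀ (y, r) x)
    (continuous_finsetSum _ fun y _ ↦ continuous_const.mul (hψ.continuous_wave (y, r)))
    (integrable_finsetSum _ fun y _ ↦ (hψ.integrable_wave (y, r)).const_mul _)]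
  rw [funext (fourier_finsetSum_mul (fun y ↦ hψ.integrable_wave (y, r)) Y c)]
  exact integrable_finsetSum _ fun y _ ↦ (hψ.integrable_fourier_wave (y, r)).const_mul _

lemma exists_norm_sq_sum_smul_waveL2_le (hψ : Admissible d ψ₀) (hd : 3 ≤ d) :
    ∃ C, 0 < C ∧ ∀ Y : Finset (Ed d), (Y : Set (Ed d)).Pairwise (fun y z ↦ 1 ≤ dist y z) →
      ∀ (c : Ed d → ℂ) (r : ℝ), 0 < r →
        ‖∑ y ∈ Y, c y • hψ.waveL2 (y, r)‖ ^ 2 ≤ C * r ^ (d - 1) * ∑ y ∈ Y, ‖c y‖ ^ 2 := by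
  obtain ⟨C, hC0, hC⟩ := hψ.exists_norm_sphereFourier_mul_fourier_le hd
  refine ⟨C ^ 2 * (∫ x, ‖ψ₀ x‖ ^ 2) + 1, by positivity, fun Y hY c r hr ↦ ?_⟩
  set K : Ed d → ℂ := fun x ↦ ∑ y ∈ Y, c y * ψ₀ (x - y)
  have hmult : ∀ ξ, (r ^ (d - 1) * (‖sphereFourier d (r • ξ)‖ * ‖𝓕 ψ₀ ξ‖)) ^ 2
      ≤ C ^ 2 * r ^ (d - 1) := fun ξ ↦ by
    calc _ ≤ (r ^ (d - 1) * (C * r ^ (-(((d : ℝ) - 1) / 2)))) ^ 2 := 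
        pow_le_pow_left₀ (by positivity) (mul_le_mul_of_nonneg_left (hC r hr ξ) (by positivity)) 2
      _ = C ^ 2 * r ^ (d - 1) := by
        rw [pow_sub_one_eq_rpow_half_mul_self (by omega) hr, Real.rpow_neg hr.le]
        field_simp
  have hK : ∫ ξ, ‖𝓕 K ξ‖ ^ 2 = (∫ x, ‖ψ₀ x‖ ^ 2) * ∑ y ∈ Y, ‖c y‖ ^ 2 := by
    have hcont := hψ.continuous
    rw [integral_norm_fourier_sq (by fun_prop) (integrable_finsetSum _ fun y _ ↦
      (hψ.integrable.comp_sub_right y).const_mul _) (hψ.integrable_fourier_sum_mul_comp_sub Y c),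
      hψ.integral_norm_sq_sum_mul_comp_sub hY]
  calc ‖∑ y ∈ Y, c y • hψ.waveL2 (y, r)‖ ^ 2
      ≤ ∫ ξ, C ^ 2 * r ^ (d - 1) * ‖𝓕 K ξ‖ ^ 2 := by
        rw [hψ.norm_sq_sum_smul_waveL2]
        refine integral_mono_of_nonneg (.of_forall fun ξ ↦ by positivity)
          ((hψ.integrable_norm_fourier_sum_mul_comp_sub_sq Y c).const_mul _)
          (.of_forall fun ξ ↦ ?_)
        simp only [hψ.fourier_sum_mul_wave, norm_mul, norm_ofReal_pow hr.le]
        rw [mul_pow]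
        exact mul_le_mul_of_nonneg_right (hmult ξ) (sq_nonneg _)
    _ = C ^ 2 * (∫ x, ‖ψ₀ x‖ ^ 2) * r ^ (d - 1) * ∑ y ∈ Y, ‖c y‖ ^ 2 := by
        rw [integral_const_mul, hK]
        ring
    _ ≤ (C ^ 2 * (∫ x, ‖ψ₀ x‖ ^ 2) + 1) * r ^ (d - 1) * ∑ y ∈ Y, ‖c y‖ ^ 2 := by
        gcongr
        linarith

end Admissible

/-- A family `Φ` of vectors of a Hilbert space, indexed by spheres `(y, r)` in `ℝ^d`, whose inner
products obey the bounds with constant `C` satisfied by the wave packets `F_{y,r}` in `L²`: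
near-orthogonality of the vectors with a common radius, decay in the distance of the centres, and
orthogonality when the spheres are disjoint. -/
structure SphereAtomBounds (d : ℕ) {H : Type*} [NormedAddCommGroup H] [InnerProductSpace ℂ H]
    (Φ : Ed d × ℝ → H) (C : ℝ) : Prop where
  pos : 0 < C
  norm_sq_sum_le : ∀ Y : Finset (Ed d), (Y : Set (Ed d)).Pairwise (fun y z ↦ 1 ≤ dist y z) →
    ∀ (c : Ed d → ℂ) (r : ℝ), 1 ≤ r →
      ‖∑ y ∈ Y, c y • Φ (y, r)‖ ^ 2 ≤ C * r ^ (d - 1) * ∑ y ∈ Y, ‖c y‖ ^ 2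
  norm_inner_mul_rpow_le : ∀ a b : Ed d × ℝ, 1 ≤ a.2 → 1 ≤ b.2 →
    ‖inner ℂ (Φ a) (Φ b)‖ * (1 + ‖a.1 - b.1‖) ^ (((d : ℝ) - 1) / 2)
      ≤ C * (a.2 ^ (((d : ℝ) - 1) / 2) * b.2 ^ (((d : ℝ) - 1) / 2))
  inner_eq_zero : ∀ a b : Ed d × ℝ, 1 ≤ a.2 → 1 ≤ b.2 →
    ‖a.1 - b.1‖ + 1 < |a.2 - b.2| ∨ a.2 + b.2 + 1 < ‖a.1 - b.1‖ → inner ℂ (Φ a) (Φ b) = 0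

lemma Admissible.exists_sphereAtomBounds_waveL2 (hψ : Admissible d ψ₀) (hd : 3 ≤ d) :
    ∃ C, SphereAtomBounds d hψ.waveL2 C := by
  obtain ⟨C₁, hC₁, hsum⟩ := hψ.exists_norm_sq_sum_smul_waveL2_le hd
  obtain ⟨C₂, -, hinner⟩ := hψ.exists_norm_inner_waveL2_mul_rpow_le hd
  refine ⟨max C₁ C₂, lt_max_of_lt_left hC₁, fun Y hY c r hr ↦ ?_, fun a b ha hb ↦ ?_,
    fun a b ha hb h ↦ hψ.inner_waveL2_eq_zero ha hb h⟩
  · refine (hsum Y hY c r (by linarith)).trans ?_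
    gcongr
    exact le_max_left _ _
  · exact (hinner a b (by linarith) (by linarith)).trans
      (mul_le_mul_of_nonneg_right (le_max_right _ _) (by positivity))

end WaveInnerProducts

section AlmostOrthogonality

lemma norm_sum_sq_le_card_image_mul {α ι E : Type*} [SeminormedAddCommGroup E] [DecidableEq ι]
    (A : Finset α) (v : α → E) (l : α → ι) :
    ‖∑ a ∈ A, v a‖ ^ 2
      ≤ (A.image l).card * ∑ n ∈ A.image l, ‖∑ a ∈ A with l a = n, v a‖ ^ 2 := by
  rw [← Finset.sum_fiberwise_of_maps_to (fun a ↦ Finset.mem_image_of_mem l) v]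
  exact (pow_le_pow_left₀ (norm_nonneg _) (norm_sum_le _ _) 2).trans sq_sum_le_card_mul_sum_sq

variable {𝕜 H ι α : Type*} [RCLike 𝕜] [NormedAddCommGroup H] [InnerProductSpace 𝕜 H]

lemma norm_inner_sum_sum_le (s : Finset α) (t : Finset ι) (f : α → H) (g : ι → H) :
    ‖inner 𝕜 (∑ a ∈ s, f a) (∑ b ∈ t, g b)‖ ≤ ∑ a ∈ s, ∑ b ∈ t, ‖inner 𝕜 (f a) (g b)‖ := by
  simp_rw [sum_inner, inner_sum]
  exact (norm_sum_le _ _).trans (Finset.sum_le_sum fun _ _ ↦ norm_sum_le _ _)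

lemma norm_inner_le_half_norm_sq_add (x y : H) :
    ‖inner 𝕜 x y‖ ≤ ‖x‖ ^ 2 / 2 + ‖y‖ ^ 2 / 2 := by
  nlinarith [norm_inner_le_norm (𝕜 := 𝕜) x y, sq_nonneg (‖x‖ - ‖y‖)]

lemma norm_sum_sq_le_near_add_far (s : Finset ι) (g : ι → H) (R : ι → ι → Prop) [DecidableRel R]
    (hR : ∀ n m, R n m → R m n) {K : ℕ} (hK : ∀ n ∈ s, (s.filter (R n)).card ≤ K) :
    ‖∑ n ∈ s, g n‖ ^ 2 ≤ K * ∑ n ∈ s, ‖g n‖ ^ 2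
      + ∑ n ∈ s, ∑ m ∈ s with ¬ R n m, ‖inner 𝕜 (g n) (g m)‖ := by
  have hsymm : ∑ n ∈ s, ∑ m ∈ s with R n m, ‖g m‖ ^ 2 / 2
      = ∑ n ∈ s, ∑ m ∈ s with R n m, ‖g n‖ ^ 2 / 2 :=
    Finset.sum_comm' fun n m ↦ by
      simp only [Finset.mem_filter]
      exact ⟨fun ⟨hn, hm, h⟩ ↦ ⟨⟨hn, hR _ _ h⟩, hm⟩, fun ⟨⟨hn, h⟩, hm⟩ ↦ ⟨hn, hm, hR _ _ h⟩⟩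
  have hnear : ∑ n ∈ s, ∑ m ∈ s with R n m, ‖inner 𝕜 (g n) (g m)‖ ≤ K * ∑ n ∈ s, ‖g n‖ ^ 2 :=
    calc ∑ n ∈ s, ∑ m ∈ s with R n m, ‖inner 𝕜 (g n) (g m)‖
        ≤ ∑ n ∈ s, ∑ m ∈ s with R n m, (‖g n‖ ^ 2 / 2 + ‖g m‖ ^ 2 / 2) :=
          Finset.sum_le_sum fun _ _ ↦ Finset.sum_le_sum fun _ _ ↦
            norm_inner_le_half_norm_sq_add _ _
      _ = ∑ n ∈ s, ((s.filter (R n)).card : ℝ) * ‖g n‖ ^ 2 := by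
          simp_rw [Finset.sum_add_distrib]
          rw [hsymm, ← Finset.sum_add_distrib]
          refine Finset.sum_congr rfl fun n _ ↦ ?_
          rw [Finset.sum_const, nsmul_eq_mul]
          ring
      _ ≤ K * ∑ n ∈ s, ‖g n‖ ^ 2 := by
          rw [Finset.mul_sum]
          gcongr with n hn
          exact hK n hn
  calc ‖∑ n ∈ s, g n‖ ^ 2 = ‖inner 𝕜 (∑ n ∈ s, g n) (∑ n ∈ s, g n)‖ := by
        rw [inner_self_eq_norm_sq_to_K, norm_pow, RCLike.norm_ofReal, abs_norm]
    _ ≤ ∑ n ∈ s, ∑ m ∈ s, ‖inner 𝕜 (g n) (g m)‖ := norm_inner_sum_sum_le s s g g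
    _ = ∑ n ∈ s, ∑ m ∈ s with R n m, ‖inner 𝕜 (g n) (g m)‖
        + ∑ n ∈ s, ∑ m ∈ s with ¬ R n m, ‖inner 𝕜 (g n) (g m)‖ := by
        rw [← Finset.sum_add_distrib]
        exact Finset.sum_congr rfl fun n _ ↦ (Finset.sum_filter_add_sum_filter_not s _ _).symm
    _ ≤ _ := by gcongr

lemma sum_image_sum_fiber {M : Type*} [AddCommMonoid M] [DecidableEq ι] (A : Finset α)
    (l : α → ι) (P : ι → ι → Prop) [DecidableRel P] (f : α → α → M) :
    ∑ n ∈ A.image l, ∑ m ∈ A.image l with P n m, ∑ a ∈ A with l a = n, ∑ b ∈ A with l b = m, f a b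
      = ∑ a ∈ A, ∑ b ∈ A with P (l a) (l b), f a b := by
  have hmaps : ∀ a ∈ A, l a ∈ A.image l := fun a ↦ Finset.mem_image_of_mem l
  rw [← Finset.sum_fiberwise_of_maps_to hmaps]
  refine Finset.sum_congr rfl fun n _ ↦ ?_
  rw [Finset.sum_comm]
  refine Finset.sum_congr rfl fun a ha ↦ ?_
  obtain rfl := (Finset.mem_filter.1 ha).2
  rw [Finset.sum_comm' (t' := A.filter fun b ↦ P (l a) (l b)) (s' := fun b ↦ {l b})]
  · simp_rw [Finset.sum_singleton]
  · intro m b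
    simp only [Finset.mem_filter, Finset.mem_singleton]
    constructor
    · rintro ⟨⟨-, hP⟩, hb, rfl⟩
      exact ⟨rfl, hb, hP⟩
    · rintro ⟨rfl, hb, hP⟩
      exact ⟨⟨hmaps b hb, hP⟩, hb, rfl⟩

lemma sum_sum_far_eq_two_mul (A : Finset α) (l : α → ℕ) (k : ℕ) {f : α → α → ℝ}
    (hf : ∀ a b, f a b = f b a) :
    ∑ a ∈ A, ∑ b ∈ A with l a + k < l b ∨ l b + k < l a, f a b
      = 2 * ∑ a ∈ A, ∑ b ∈ A with l b + k < l a, f a b := by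
  classical
  have hsplit (a : α) : ∑ b ∈ A with l a + k < l b ∨ l b + k < l a, f a b
      = ∑ b ∈ A with l a + k < l b, f a b + ∑ b ∈ A with l b + k < l a, f a b := by
    rw [Finset.filter_or, Finset.sum_union (Finset.disjoint_filter.2 fun b _ ↦ by omega)]
  have hswap : ∑ a ∈ A, ∑ b ∈ A with l a + k < l b, f a b
      = ∑ b ∈ A, ∑ a ∈ A with l a + k < l b, f b a := by
    rw [Finset.sum_comm' (t' := A) (s' := fun b ↦ A.filter fun a ↦ l a + k < l b)
      fun a b ↦ by simp only [Finset.mem_filter]; tauto]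
    simp_rw [hf]
  rw [Finset.sum_congr rfl fun a _ ↦ hsplit a, Finset.sum_add_distrib, hswap, two_mul]

lemma norm_sum_sq_le_sum_fiber_add_far (A : Finset α) (v : α → H) (l : α → ℕ) (k : ℕ) :
    ‖∑ a ∈ A, v a‖ ^ 2 ≤ (2 * k + 1) * ∑ n ∈ A.image l, ‖∑ a ∈ A with l a = n, v a‖ ^ 2
      + 2 * ∑ a ∈ A, ∑ b ∈ A with l b + k < l a, ‖inner 𝕜 (v a) (v b)‖ := by
  have hmaps : ∀ a ∈ A, l a ∈ A.image l := fun a ↦ Finset.mem_image_of_mem l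
  have hcard (n : ℕ) : ((A.image l).filter fun m ↦ n ≤ m + k ∧ m ≤ n + k).card ≤ 2 * k + 1 := by
    refine (Finset.card_le_card (t := Finset.Icc (n - k) (n + k)) fun m hm ↦ ?_).trans ?_
    · rw [Finset.mem_filter] at hm
      rw [Finset.mem_Icc]
      omega
    · rw [Nat.card_Icc]
      omega
  have hlabel (n m : ℕ) : ¬ (n ≤ m + k ∧ m ≤ n + k) ↔ n + k < m ∨ m + k < n := by omega
  have hfar : ∑ n ∈ A.image l, ∑ m ∈ A.image l with ¬ (n ≤ m + k ∧ m ≤ n + k),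
        ‖inner 𝕜 (∑ a ∈ A with l a = n, v a) (∑ b ∈ A with l b = m, v b)‖
      ≤ 2 * ∑ a ∈ A, ∑ b ∈ A with l b + k < l a, ‖inner 𝕜 (v a) (v b)‖ := by
    simp_rw [hlabel]
    rw [← sum_sum_far_eq_two_mul A l k fun a b ↦ norm_inner_symm (v a) (v b),
      ← sum_image_sum_fiber A l fun n m ↦ n + k < m ∨ m + k < n]
    exact Finset.sum_le_sum fun _ _ ↦ Finset.sum_le_sum fun _ _ ↦ norm_inner_sum_sum_le _ _ _ _
  rw [← Finset.sum_fiberwise_of_maps_to hmaps v]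
  refine (norm_sum_sq_le_near_add_far (𝕜 := 𝕜) (A.image l) _
    (fun n m ↦ n ≤ m + k ∧ m ≤ n + k) (fun n m h ↦ h.symm) fun n _ ↦ hcard n).trans ?_
  push_cast
  gcongr

end AlmostOrthogonality

section DyadicSums

lemma card_le_add_one_of_one_separated {T : Finset ℝ} {x L : ℝ} (hL : 0 ≤ L)
    (hT : ∀ t ∈ T, t ∈ Icc x (x + L)) (hsep : (T : Set ℝ).Pairwise fun s t ↦ 1 ≤ dist s t) :
    (T.card : ℝ) ≤ L + 1 := by
  have hcard : T.card ≤ (Finset.Icc 0 ⌊L⌋).card := by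
    refine Finset.card_le_card_of_injOn (fun t ↦ ⌊t - x⌋) (fun t ht ↦ ?_)
      fun s hs t ht hst ↦ by_contra fun hne ↦ ?_
    · obtain ⟨hxt, htL⟩ := hT t ht
      exact Finset.mem_Icc.2 ⟨Int.floor_nonneg.2 (by linarith), Int.floor_le_floor (by linarith)⟩
    · have := Int.abs_sub_lt_one_of_floor_eq_floor hst
      rw [sub_sub_sub_cancel_right, ← Real.dist_eq] at this
      exact (hsep hs ht hne).not_gt this
  have hfloor : ((Finset.Icc 0 ⌊L⌋).card : ℤ) = ⌊L⌋ + 1 := by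
    rw [Int.card_Icc, sub_zero, Int.toNat_of_nonneg (by have := Int.floor_nonneg.2 hL; omega)]
  calc (T.card : ℝ) ≤ ((Finset.Icc 0 ⌊L⌋).card : ℤ) := mod_cast hcard
    _ ≤ L + 1 := by
      rw [hfloor, Int.cast_add, Int.cast_one]
      gcongr
      exact Int.floor_le L

lemma exists_nat_two_pow_mul_le {L x : ℝ} (hL : 0 < L) (hx : L ≤ x) :
    ∃ n : ℕ, 2 ^ n * L ≤ x ∧ x ≤ 2 ^ (n + 1) * L := by
  obtain ⟨n, hle, hlt⟩ := exists_nat_pow_near ((one_le_div hL).2 hx) one_lt_two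
  exact ⟨n, (le_div_iff₀ hL).1 hle, ((div_lt_iff₀ hL).1 hlt).le⟩

lemma sum_rpow_neg_le_of_card_le {α : Type*} {S : Finset α} {D : α → ℝ} {L u e : ℝ}
    (hL : 0 < L) (he : 1 < e) (hD : ∀ s ∈ S, L ≤ D s)
    (hcard : ∀ ρ, L ≤ ρ → ((S.filter (D · ≤ ρ)).card : ℝ) ≤ u * ρ) :
    ∑ s ∈ S, D s ^ (-e) ≤ 2 * (1 - 2 ^ (1 - e))⁻¹ * (u * L ^ (1 - e)) := by
  have hu : 0 ≤ u := nonneg_of_mul_nonneg_left ((Nat.cast_nonneg _).trans (hcard L le_rfl)) hL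
  have hq : (2 : ℝ) ^ (1 - e) < 1 := Real.rpow_lt_one_of_one_lt_of_neg one_lt_two (by linarith)
  choose! i hi using fun s hs ↦ exists_nat_two_pow_mul_le hL (hD s hs)
  have hterm : ∀ s ∈ S, D s ^ (-e) ≤ ∑ k ∈ Finset.range (S.sup i + 1),
      if D s ≤ 2 ^ (k + 1) * L then (2 ^ k * L) ^ (-e) else 0 := fun s hs ↦
    calc D s ^ (-e) ≤ (2 ^ i s * L) ^ (-e) :=
          Real.rpow_le_rpow_of_nonpos (by positivity) (hi s hs).1 (by linarith)
      _ = if D s ≤ 2 ^ (i s + 1) * L then (2 ^ i s * L) ^ (-e) else 0 := (if_pos (hi s hs).2).symm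
      _ ≤ _ := Finset.single_le_sum
          (f := fun k ↦ if D s ≤ 2 ^ (k + 1) * L then (2 ^ k * L) ^ (-e) else 0)
          (fun k _ ↦ by positivity) (Finset.mem_range_succ_iff.2 (Finset.le_sup hs))
  have hshell (k : ℕ) : ((S.filter (D · ≤ 2 ^ (k + 1) * L)).card : ℝ) * (2 ^ k * L) ^ (-e)
      ≤ 2 * (u * L ^ (1 - e)) * ((2 : ℝ) ^ (1 - e)) ^ k := by
    have hkL : (0 : ℝ) < 2 ^ k * L := by positivity
    calc _ ≤ (u * (2 ^ (k + 1) * L)) * (2 ^ k * L) ^ (-e) := by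
          gcongr
          exact hcard _ (le_mul_of_one_le_left hL.le (one_le_pow₀ one_le_two))
      _ = 2 * u * (2 ^ k * L) ^ (1 - e) := by
          rw [sub_eq_add_neg, Real.rpow_add hkL, Real.rpow_one, pow_succ]
          ring
      _ = _ := by
          rw [Real.mul_rpow (by positivity) hL.le, Real.rpow_pow_comm zero_le_two]
          ring
  calc ∑ s ∈ S, D s ^ (-e)
      ≤ ∑ s ∈ S, ∑ k ∈ Finset.range (S.sup i + 1),
          if D s ≤ 2 ^ (k + 1) * L then (2 ^ k * L) ^ (-e) else 0 := Finset.sum_le_sum hterm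
    _ = ∑ k ∈ Finset.range (S.sup i + 1),
          ((S.filter (D · ≤ 2 ^ (k + 1) * L)).card : ℝ) * (2 ^ k * L) ^ (-e) := by
        rw [Finset.sum_comm]
        simp_rw [← Finset.sum_filter, Finset.sum_const, nsmul_eq_mul]
    _ ≤ ∑ k ∈ Finset.range (S.sup i + 1), 2 * (u * L ^ (1 - e)) * ((2 : ℝ) ^ (1 - e)) ^ k :=
        Finset.sum_le_sum fun k _ ↦ hshell k
    _ ≤ 2 * (u * L ^ (1 - e)) * (1 - 2 ^ (1 - e))⁻¹ := by
        grw [← Finset.mul_sum, Finset.range_eq_Ico,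
          geom_sum_Ico_le_of_lt_one (by positivity) hq, pow_zero, one_div]
    _ = _ := by ring

end DyadicSums

section SingleScale

/-- Unit separation of a family of spheres `(y, r)`: distinct centres are at distance at least `1`
from each other, and so are distinct radii. -/
def UnitSeparated {d : ℕ} (A : Finset (Ed d × ℝ)) : Prop :=
  ((A.image Prod.fst : Finset (Ed d)) : Set (Ed d)).Pairwise (fun y z ↦ 1 ≤ dist y z) ∧
    ((A.image Prod.snd : Finset ℝ) : Set ℝ).Pairwise (fun r s ↦ 1 ≤ dist r s)

lemma UnitSeparated.mono {d : ℕ} {A B : Finset (Ed d × ℝ)} (hA : UnitSeparated A) (hB : B ⊆ A) :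
    UnitSeparated B :=
  ⟨hA.1.mono (mod_cast Finset.image_subset_image hB),
    hA.2.mono (mod_cast Finset.image_subset_image hB)⟩

/-- Density at most `u` of a family of spheres with radii about `2 ^ j`: every ball of radius
`ρ ∈ [1, 2 ^ (j + 4)]` around a member of the family contains at most `u * ρ` members. -/
def DensityLE {d : ℕ} (A : Finset (Ed d × ℝ)) (j : ℕ) (u : ℝ) : Prop :=
  ∀ a ∈ A, ∀ ρ ∈ Icc (1 : ℝ) (2 ^ (j + 4)), ((A.filter (dist a · ≤ ρ)).card : ℝ) ≤ u * ρ

lemma DensityLE.mono {d : ℕ} {A B : Finset (Ed d × ℝ)} {j : ℕ} {u : ℝ} (hA : DensityLE A j u)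
    (hB : B ⊆ A) : DensityLE B j u := fun a ha ρ hρ ↦
  (Nat.cast_le.2 (Finset.card_le_card (Finset.filter_subset_filter _ hB))).trans (hA a (hB ha) ρ hρ)

lemma le_abs_sub_of_floor_div_add_one_lt {L x y : ℝ} (hL : 0 < L) (hx : 0 ≤ x)
    (h : ⌊y / L⌋₊ + 1 < ⌊x / L⌋₊) : L ≤ |x - y| := by
  have hy : y / L < ⌊y / L⌋₊ + 1 := Nat.lt_floor_add_one _
  have hx' : (⌊x / L⌋₊ : ℝ) ≤ x / L := Nat.floor_le (by positivity)
  have hcast : (⌊y / L⌋₊ : ℝ) + 2 ≤ ⌊x / L⌋₊ := mod_cast h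
  have hdiv : 1 ≤ (x - y) / L := by rw [sub_div]; linarith
  exact ((one_le_div hL).1 hdiv).trans (le_abs_self _)

lemma mem_Icc_floor_div_mul {L x : ℝ} (hL : 0 < L) (hx : 0 ≤ x) :
    x ∈ Icc (⌊x / L⌋₊ * L) (⌊x / L⌋₊ * L + L) := by
  have hle := Nat.floor_le (show 0 ≤ x / L by positivity)
  have hlt := Nat.lt_floor_add_one (x / L)
  rw [le_div_iff₀ hL] at hle
  rw [div_lt_iff₀ hL] at hlt
  exact ⟨hle, by linarith⟩

lemma mul_rpow_inv_rpow_one_sub {u s : ℝ} (hu : 0 < u) (hs : s ≠ 0) :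
    u * (u ^ s⁻¹) ^ (1 - s) = u ^ s⁻¹ := by
  rw [← Real.rpow_mul hu.le, ← Real.rpow_one_add' hu.le (by field_simp; simpa using hs)]
  congr 1
  field_simp
  ring

namespace SphereAtomBounds

variable {H : Type*} [NormedAddCommGroup H] [InnerProductSpace ℂ H] {d : ℕ} {Φ : Ed d × ℝ → H}
  {C : ℝ} {A : Finset (Ed d × ℝ)}

lemma smul (hΦ : SphereAtomBounds d Φ C) {c : Ed d × ℝ → ℂ} (hc : ∀ a, ‖c a‖ ≤ 1) :
    SphereAtomBounds d (fun a ↦ c a • Φ a) C where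
  pos := hΦ.pos
  norm_sq_sum_le Y hY c' r hr := by
    have hC := hΦ.pos
    simp_rw [smul_smul]
    refine (hΦ.norm_sq_sum_le Y hY (fun y ↦ c' y * c (y, r)) r hr).trans ?_
    gcongr with y
    exact (norm_mul_le _ _).trans (mul_le_of_le_one_right (norm_nonneg _) (hc _))
  norm_inner_mul_rpow_le a b ha hb := by
    refine (mul_le_mul_of_nonneg_right ?_ (by positivity)).trans
      (hΦ.norm_inner_mul_rpow_le a b ha hb)
    rw [inner_smul_left, inner_smul_right, norm_mul, norm_mul, RCLike.norm_conj, ← mul_assoc]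
    exact mul_le_of_le_one_left (norm_nonneg _) (mul_le_one₀ (hc a) (norm_nonneg _) (hc b))
  inner_eq_zero a b ha hb h := by
    simp only [inner_smul_left, inner_smul_right, hΦ.inner_eq_zero a b ha hb h, mul_zero]

lemma norm_sum_sq_le_of_radius_eq (hΦ : SphereAtomBounds d Φ C) (hA : UnitSeparated A) {r : ℝ}
    (hr : 1 ≤ r) (hAr : ∀ a ∈ A, a.2 = r) :
    ‖∑ a ∈ A, Φ a‖ ^ 2 ≤ C * r ^ (d - 1) * A.card := by
  have hinj : InjOn Prod.fst (A : Set (Ed d × ℝ)) := fun a ha b hb hab ↦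
    Prod.ext hab ((hAr a ha).trans (hAr b hb).symm)
  have hsum : ∑ a ∈ A, Φ a = ∑ y ∈ A.image Prod.fst, (1 : ℂ) • Φ (y, r) := by
    rw [Finset.sum_image hinj]
    exact Finset.sum_congr rfl fun a ha ↦ by rw [one_smul, ← hAr a ha]
  rw [hsum]
  refine (hΦ.norm_sq_sum_le _ hA.1 (fun _ ↦ 1) r hr).trans_eq ?_
  simp [Finset.card_image_of_injOn hinj]

lemma norm_sum_sq_le_of_radius_mem_Icc (hΦ : SphereAtomBounds d Φ C) (hA : UnitSeparated A)
    {x L T : ℝ} (hL : 1 ≤ L) (hAT : ∀ a ∈ A, a.2 ∈ Icc 1 T) (hAL : ∀ a ∈ A, a.2 ∈ Icc x (x + L)) :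
    ‖∑ a ∈ A, Φ a‖ ^ 2 ≤ 2 * L * (C * T ^ (d - 1) * A.card) := by
  have hcard : ((A.image Prod.snd).card : ℝ) ≤ 2 * L := by
    have := card_le_add_one_of_one_separated (by linarith) (T := A.image Prod.snd) (x := x) (L := L)
      (Finset.forall_mem_image.2 hAL) hA.2
    linarith
  have hfixed : ∑ r ∈ A.image Prod.snd, ‖∑ a ∈ A with a.2 = r, Φ a‖ ^ 2
      ≤ C * T ^ (d - 1) * A.card := by
    rw [Finset.card_eq_sum_card_image Prod.snd A, Nat.cast_sum, Finset.mul_sum]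
    refine Finset.sum_le_sum fun r hr ↦ ?_
    obtain ⟨a, ha, rfl⟩ := Finset.mem_image.1 hr
    obtain ⟨ha1, haT⟩ := hAT a ha
    have hC := hΦ.pos
    refine (hΦ.norm_sum_sq_le_of_radius_eq (hA.mono (Finset.filter_subset _ _)) ha1
      fun b hb ↦ (Finset.mem_filter.1 hb).2).trans ?_
    gcongr
  refine (norm_sum_sq_le_card_image_mul A Φ Prod.snd).trans ?_
  gcongr

lemma sum_norm_sum_block_sq_le (hΦ : SphereAtomBounds d Φ C) (hA : UnitSeparated A) {L T : ℝ}
    (hL : 1 ≤ L) (hAT : ∀ a ∈ A, a.2 ∈ Icc 1 T) :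
    ∑ n ∈ A.image (fun a ↦ ⌊a.2 / L⌋₊), ‖∑ a ∈ A with ⌊a.2 / L⌋₊ = n, Φ a‖ ^ 2
      ≤ 2 * L * (C * T ^ (d - 1) * A.card) := by
  rw [Finset.card_eq_sum_card_image (fun a ↦ ⌊a.2 / L⌋₊) A, Nat.cast_sum, Finset.mul_sum,
    Finset.mul_sum]
  refine Finset.sum_le_sum fun n _ ↦
    hΦ.norm_sum_sq_le_of_radius_mem_Icc (x := n * L) (hA.mono (Finset.filter_subset _ _)) hL
      (fun a ha ↦ hAT a (Finset.mem_filter.1 ha).1) fun a ha ↦ ?_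
  obtain ⟨haA, rfl⟩ := Finset.mem_filter.1 ha
  exact mem_Icc_floor_div_mul (by linarith) (by linarith [(hAT a haA).1])

lemma abs_sub_le_of_inner_ne_zero (hΦ : SphereAtomBounds d Φ C) {a b : Ed d × ℝ} (ha : 1 ≤ a.2)
    (hb : 1 ≤ b.2) (h : inner ℂ (Φ a) (Φ b) ≠ 0) :
    |a.2 - b.2| ≤ ‖a.1 - b.1‖ + 1 ∧ ‖a.1 - b.1‖ ≤ a.2 + b.2 + 1 := by
  simpa only [not_or, not_lt] using mt (hΦ.inner_eq_zero a b ha hb) h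

lemma dist_le_of_inner_ne_zero (hΦ : SphereAtomBounds d Φ C) {a b : Ed d × ℝ} (ha : 1 ≤ a.2)
    (hb : 1 ≤ b.2) (h : inner ℂ (Φ a) (Φ b) ≠ 0) :
    dist a b ≤ 1 + ‖a.1 - b.1‖ ∧ dist a b ≤ a.2 + b.2 + 1 := by
  obtain ⟨hradii, hcentres⟩ := hΦ.abs_sub_le_of_inner_ne_zero ha hb h
  have habs : |a.2 - b.2| ≤ a.2 + b.2 + 1 := abs_le.2 ⟨by linarith, by linarith⟩
  rw [Prod.dist_eq, dist_eq_norm, Real.dist_eq]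
  exact ⟨max_le (by linarith) (by linarith), max_le hcentres habs⟩

lemma norm_inner_le_mul_dist_rpow (hΦ : SphereAtomBounds d Φ C) (hd : d ≠ 0) {a b : Ed d × ℝ}
    {T : ℝ} (ha : a.2 ∈ Icc 1 T) (hb : b.2 ∈ Icc 1 T) (hab : 0 < dist a b) :
    ‖inner ℂ (Φ a) (Φ b)‖ ≤ C * T ^ (d - 1) * dist a b ^ (-(((d : ℝ) - 1) / 2)) := by
  have hC := hΦ.pos
  have hT : 0 < T := by linarith [ha.1, ha.2]
  have ha0 : 0 ≤ a.2 := by linarith [ha.1]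
  have hb0 : 0 ≤ b.2 := by linarith [hb.1]
  have he : 0 ≤ ((d : ℝ) - 1) / 2 := by
    have : (1 : ℝ) ≤ d := mod_cast Nat.one_le_iff_ne_zero.2 hd
    linarith
  obtain h0 | h0 := eq_or_ne (inner ℂ (Φ a) (Φ b)) 0
  · rw [h0, norm_zero]
    positivity
  have hdist := (hΦ.dist_le_of_inner_ne_zero ha.1 hb.1 h0).1
  rw [Real.rpow_neg hab.le, ← div_eq_mul_inv, le_div_iff₀ (by positivity)]
  calc ‖inner ℂ (Φ a) (Φ b)‖ * dist a b ^ (((d : ℝ) - 1) / 2)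
      ≤ ‖inner ℂ (Φ a) (Φ b)‖ * (1 + ‖a.1 - b.1‖) ^ (((d : ℝ) - 1) / 2) := by gcongr
    _ ≤ C * (a.2 ^ (((d : ℝ) - 1) / 2) * b.2 ^ (((d : ℝ) - 1) / 2)) :=
        hΦ.norm_inner_mul_rpow_le a b ha.1 hb.1
    _ ≤ C * (T ^ (((d : ℝ) - 1) / 2) * T ^ (((d : ℝ) - 1) / 2)) := by
        have := ha.2
        have := hb.2
        gcongr
    _ = C * T ^ (d - 1) := by rw [pow_sub_one_eq_rpow_half_mul_self hd hT]

lemma card_filter_dist_le (hΦ : SphereAtomBounds d Φ C) {j : ℕ} {u ρ : ℝ}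
    (hAj : ∀ a ∈ A, a.2 ∈ Ico ((2 : ℝ) ^ j) (2 ^ (j + 1))) (hAu : DensityLE A j u)
    {a : Ed d × ℝ} (ha : a ∈ A) {S : Finset (Ed d × ℝ)} (hSA : S ⊆ A)
    (hS : ∀ b ∈ S, inner ℂ (Φ a) (Φ b) ≠ 0) (hρ : 1 ≤ ρ) :
    ((S.filter (dist a · ≤ ρ)).card : ℝ) ≤ u * ρ := by
  have hpow : (1 : ℝ) ≤ 2 ^ j := one_le_pow₀ one_le_two
  have hpow' : (1 : ℝ) ≤ 2 ^ (j + 4) := one_le_pow₀ one_le_two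
  have hu : 0 ≤ u := by simpa using (Nat.cast_nonneg _).trans (hAu a ha 1 ⟨le_rfl, hpow'⟩)
  have hdist : ∀ b ∈ S, dist a b ≤ 2 ^ (j + 4) := fun b hb ↦ by
    obtain ⟨ha1, ha2⟩ := hAj a ha
    obtain ⟨hb1, hb2⟩ := hAj b (hSA hb)
    have := (hΦ.dist_le_of_inner_ne_zero (hpow.trans ha1) (hpow.trans hb1) (hS b hb)).2
    rw [pow_succ] at ha2 hb2
    rw [pow_add]
    linarith
  have hsub : S.filter (dist a · ≤ ρ) ⊆ A.filter (dist a · ≤ min ρ (2 ^ (j + 4))) := fun b hb ↦ by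
    obtain ⟨hbS, hbρ⟩ := Finset.mem_filter.1 hb
    exact Finset.mem_filter.2 ⟨hSA hbS, le_min hbρ (hdist b hbS)⟩
  calc ((S.filter (dist a · ≤ ρ)).card : ℝ)
      ≤ (A.filter (dist a · ≤ min ρ (2 ^ (j + 4)))).card := Nat.cast_le.2 (Finset.card_le_card hsub)
    _ ≤ u * min ρ (2 ^ (j + 4)) := hAu a ha _ ⟨le_min hρ hpow', min_le_right _ _⟩
    _ ≤ u * ρ := mul_le_mul_of_nonneg_left (min_le_left _ _) hu

lemma sum_norm_inner_le_of_le_dist (hΦ : SphereAtomBounds d Φ C) (hd : 4 ≤ d) {j : ℕ} {u L : ℝ}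
    (hAj : ∀ a ∈ A, a.2 ∈ Ico ((2 : ℝ) ^ j) (2 ^ (j + 1))) (hAu : DensityLE A j u) (hL : 1 ≤ L)
    {a : Ed d × ℝ} (ha : a ∈ A) {S : Finset (Ed d × ℝ)} (hSA : S ⊆ A) (hS : ∀ b ∈ S, L ≤ dist a b) :
    ∑ b ∈ S, ‖inner ℂ (Φ a) (Φ b)‖ ≤ C * (2 ^ (j + 1)) ^ (d - 1) *
      (2 * (1 - 2 ^ (1 - ((d : ℝ) - 1) / 2))⁻¹ * (u * L ^ (1 - ((d : ℝ) - 1) / 2))) := by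
  have hC := hΦ.pos
  have hd' : (4 : ℝ) ≤ d := mod_cast hd
  have hL0 : 0 < L := by linarith
  have hmem : ∀ b ∈ A, b.2 ∈ Icc (1 : ℝ) (2 ^ (j + 1)) := fun b hb ↦
    ⟨(one_le_pow₀ one_le_two).trans (hAj b hb).1, (hAj b hb).2.le⟩
  have hfilter : (S.filter fun b ↦ ‖inner ℂ (Φ a) (Φ b)‖ ≠ 0) ⊆ S := Finset.filter_subset _ _
  rw [← Finset.sum_filter_ne_zero S]
  calc ∑ b ∈ S with ‖inner ℂ (Φ a) (Φ b)‖ ≠ 0, ‖inner ℂ (Φ a) (Φ b)‖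
      ≤ ∑ b ∈ S with ‖inner ℂ (Φ a) (Φ b)‖ ≠ 0,
          C * (2 ^ (j + 1)) ^ (d - 1) * dist a b ^ (-(((d : ℝ) - 1) / 2)) :=
        Finset.sum_le_sum fun b hb ↦ hΦ.norm_inner_le_mul_dist_rpow (by omega) (hmem a ha)
          (hmem b (hSA (hfilter hb))) (hL0.trans_le (hS b (hfilter hb)))
    _ ≤ _ := by
        rw [← Finset.mul_sum]
        gcongr
        exact sum_rpow_neg_le_of_card_le hL0 (by linarith) (fun b hb ↦ hS b (hfilter hb))
          fun ρ hρ ↦ hΦ.card_filter_dist_le hAj hAu ha (hfilter.trans hSA)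
            (fun b hb ↦ norm_ne_zero_iff.1 (Finset.mem_filter.1 hb).2) (hL.trans hρ)

lemma exists_norm_sum_sq_le_of_densityLE (hd : 4 ≤ d) : ∃ K : ℝ, 0 < K ∧
    ∀ {Φ : Ed d × ℝ → H} {C : ℝ} {A : Finset (Ed d × ℝ)} {j : ℕ} {u : ℝ},
      SphereAtomBounds d Φ C → UnitSeparated A → 1 ≤ u →
      (∀ a ∈ A, a.2 ∈ Ico ((2 : ℝ) ^ j) (2 ^ (j + 1))) → DensityLE A j u →
      ‖∑ a ∈ A, Φ a‖ ^ 2 ≤ K * C * u ^ (2 / ((d : ℝ) - 1)) * (2 ^ (j + 1)) ^ (d - 1) * A.card := by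
  have hd' : (4 : ℝ) ≤ d := mod_cast hd
  set q : ℝ := 1 - 2 ^ (1 - ((d : ℝ) - 1) / 2)
  have hq : 0 < q := sub_pos.2 (Real.rpow_lt_one_of_one_lt_of_neg one_lt_two (by linarith))
  refine ⟨6 + 4 * q⁻¹, by positivity, fun {Φ C A j u} hΦ hA hu hAj hAu ↦ ?_⟩
  set L := u ^ (2 / ((d : ℝ) - 1)) with hL
  have hL1 : 1 ≤ L := Real.one_le_rpow hu (div_nonneg zero_le_two (by linarith))
  have huL : u * L ^ (1 - ((d : ℝ) - 1) / 2) = L := by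
    rw [hL, ← inv_div]
    exact mul_rpow_inv_rpow_one_sub (by linarith) (by linarith)
  have hmem : ∀ a ∈ A, a.2 ∈ Icc (1 : ℝ) (2 ^ (j + 1)) := fun a ha ↦
    ⟨(one_le_pow₀ one_le_two).trans (hAj a ha).1, (hAj a ha).2.le⟩
  have hfar : ∀ a ∈ A, ∑ b ∈ A with ⌊b.2 / L⌋₊ + 1 < ⌊a.2 / L⌋₊, ‖inner ℂ (Φ a) (Φ b)‖
      ≤ C * (2 ^ (j + 1)) ^ (d - 1) * (2 * q⁻¹ * L) := fun a ha ↦ by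
    refine (hΦ.sum_norm_inner_le_of_le_dist hd hAj hAu hL1 ha (Finset.filter_subset _ _)
      fun b hb ↦ ?_).trans_eq (by rw [huL])
    rw [Prod.dist_eq, Real.dist_eq]
    exact le_max_of_le_right (le_abs_sub_of_floor_div_add_one_lt (by linarith)
      (by linarith [(hmem a ha).1]) (Finset.mem_filter.1 hb).2)
  calc ‖∑ a ∈ A, Φ a‖ ^ 2
      ≤ (2 * (1 : ℕ) + 1) * (2 * L * (C * (2 ^ (j + 1)) ^ (d - 1) * A.card))
        + 2 * ∑ a ∈ A, C * (2 ^ (j + 1)) ^ (d - 1) * (2 * q⁻¹ * L) := by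
        refine (norm_sum_sq_le_sum_fiber_add_far (𝕜 := ℂ) A Φ (fun a ↦ ⌊a.2 / L⌋₊) 1).trans ?_
        gcongr with a ha
        · exact hΦ.sum_norm_sum_block_sq_le hA hL1 hmem
        · exact hfar a ha
    _ = _ := by
        rw [Finset.sum_const, nsmul_eq_mul]
        push_cast
        ring

end SphereAtomBounds

end SingleScale

section Annuli

lemma sum_measureReal_le_mul_measureReal {X α : Type*} [MeasurableSpace X] {μ : Measure X}
    {s : Finset α} {B : α → Set X} {Ω : Set X} {N : ℝ} (hΩ : μ Ω ≠ ∞)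
    (hB : ∀ a ∈ s, MeasurableSet (B a)) (hBΩ : ∀ a ∈ s, B a ⊆ Ω)
    (hN : ∀ x, ∑ a ∈ s, (B a).indicator (fun _ ↦ (1 : ℝ)) x ≤ N) :
    ∑ a ∈ s, μ.real (B a) ≤ N * μ.real Ω := by
  have : IsFiniteMeasure (μ.restrict Ω) := ⟨by rwa [Measure.restrict_apply_univ, lt_top_iff_ne_top]⟩
  have hint : ∀ a ∈ s, Integrable ((B a).indicator fun _ ↦ (1 : ℝ)) (μ.restrict Ω) :=
    fun a ha ↦ (integrable_const 1).indicator (hB a ha)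
  calc ∑ a ∈ s, μ.real (B a) = ∑ a ∈ s, ∫ x in Ω, (B a).indicator (fun _ ↦ (1 : ℝ)) x ∂μ := by
        refine Finset.sum_congr rfl fun a ha ↦ ?_
        rw [integral_indicator_const _ (hB a ha), smul_eq_mul, mul_one, measureReal_def,
          measureReal_def, Measure.restrict_eq_self μ (hBΩ a ha)]
    _ = ∫ x in Ω, ∑ a ∈ s, (B a).indicator (fun _ ↦ (1 : ℝ)) x ∂μ :=
        (integral_finsetSum s hint).symm
    _ ≤ ∫ _ in Ω, N ∂μ := integral_mono (integrable_finsetSum s hint) (integrable_const N) hN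
    _ = N * μ.real Ω := by
        rw [setIntegral_const, smul_eq_mul, mul_comm]

variable {E : Type*} [NormedAddCommGroup E] [NormedSpace ℝ E] [MeasurableSpace E] [BorelSpace E]
  [FiniteDimensional ℝ E] (μ : Measure E) [μ.IsAddHaarMeasure]

lemma measureReal_annulus_le [Nontrivial E] (y : E) {R t : ℝ} (hR : 0 ≤ R) (ht : 0 ≤ t) :
    μ.real {x | |‖x - y‖ - R| ≤ t}
      ≤ 2 * Module.finrank ℝ E * t * (R + t) ^ (Module.finrank ℝ E - 1) * μ.real (ball 0 1) := by
  set b := max (R - t) 0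
  have hb : b ≤ R + t := max_le (by linarith) (by linarith)
  have hb' : R + t - b ≤ 2 * t := by linarith [le_max_left (R - t) 0]
  have hsub : {x | |‖x - y‖ - R| ≤ t} ⊆ closedBall y (R + t) \ ball y b := fun x hx ↦ by
    obtain ⟨hl, hr⟩ := abs_le.1 (show |‖x - y‖ - R| ≤ t from hx)
    rw [mem_sdiff, mem_closedBall, mem_ball, dist_eq_norm, not_lt]
    exact ⟨by linarith, max_le (by linarith) (norm_nonneg _)⟩
  have hpow : (R + t) ^ Module.finrank ℝ E - b ^ Module.finrank ℝ E
      ≤ 2 * t * Module.finrank ℝ E * (R + t) ^ (Module.finrank ℝ E - 1) := by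
    have := abs_pow_sub_pow_le (R + t) b (Module.finrank ℝ E)
    rw [abs_of_nonneg (sub_nonneg.2 hb), abs_of_nonneg (by linarith : 0 ≤ R + t),
      abs_of_nonneg (le_max_right (R - t) 0 : 0 ≤ b), max_eq_left hb] at this
    refine (le_abs_self _).trans (this.trans ?_)
    gcongr
  calc μ.real {x | |‖x - y‖ - R| ≤ t} ≤ μ.real (closedBall y (R + t) \ ball y b) :=
        measureReal_mono hsub (measure_ne_top_of_subset sdiff_subset measure_closedBall_lt_top.ne)
    _ = ((R + t) ^ Module.finrank ℝ E - b ^ Module.finrank ℝ E) * μ.real (ball 0 1) := by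
        rw [measureReal_sdiff (ball_subset_closedBall.trans (closedBall_subset_closedBall hb))
          measurableSet_ball measure_closedBall_lt_top.ne,
          Measure.addHaar_real_closedBall _ _ (by positivity),
          measureReal_def μ (ball y b), Measure.addHaar_ball μ y (le_max_right _ _),
          ENNReal.toReal_mul, ENNReal.toReal_ofReal (by positivity), ← measureReal_def, sub_mul]
    _ ≤ _ := by
        gcongr
        linarith

lemma card_mul_pow_le_of_near_sphere [Nontrivial E] {α : Type*} {S : Finset α} {z : α → E} {y : E}
    {R s t N : ℝ} (hR : 0 ≤ R) (hs : 0 ≤ s) (ht : 0 ≤ t) (hN : 0 ≤ N)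
    (hz : ∀ a ∈ S, |‖z a - y‖ - R| ≤ t)
    (hcard : ∀ x, ((S.filter fun a ↦ dist x (z a) ≤ s).card : ℝ) ≤ N) :
    S.card * s ^ Module.finrank ℝ E ≤ N * (2 * Module.finrank ℝ E * (t + s)
      * (R + (t + s)) ^ (Module.finrank ℝ E - 1)) := by
  let μ : Measure E := Measure.addHaar
  have hunit : 0 < μ.real (ball 0 1) := by
    rw [measureReal_def]
    exact ENNReal.toReal_pos (measure_ball_pos _ _ one_pos).ne' measure_ball_lt_top.ne
  have hsub : ∀ a ∈ S, closedBall (z a) s ⊆ {x | |‖x - y‖ - R| ≤ t + s} := fun a ha x hx ↦ by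
    have hxz : |‖x - y‖ - ‖z a - y‖| ≤ s := by
      have := abs_norm_sub_norm_le (x - y) (z a - y)
      rw [sub_sub_sub_cancel_right] at this
      exact this.trans (mem_closedBall_iff_norm.1 hx)
    calc |‖x - y‖ - R| ≤ |‖x - y‖ - ‖z a - y‖| + |‖z a - y‖ - R| := abs_sub_le _ _ _
      _ ≤ t + s := by linarith [hz a ha]
  have hsum (x : E) :
      ∑ a ∈ S, (closedBall (z a) s).indicator (fun _ ↦ (1 : ℝ)) x ≤ N := by
    refine (Finset.sum_congr rfl fun a _ ↦ ?_).trans_le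
      ((Finset.natCast_card_filter _ S).symm.trans_le (hcard x))
    simp only [indicator, mem_closedBall]
  have hfin : μ {x | |‖x - y‖ - R| ≤ t + s} ≠ ∞ := by
    refine measure_ne_top_of_subset (fun x hx ↦ ?_)
      (measure_closedBall_lt_top (x := y) (r := R + (t + s))).ne
    rw [mem_closedBall, dist_eq_norm]
    linarith [(abs_le.1 (show |‖x - y‖ - R| ≤ t + s from hx)).2]
  refine le_of_mul_le_mul_right ?_ hunit
  calc S.card * s ^ Module.finrank ℝ E * μ.real (ball 0 1)
      = ∑ a ∈ S, μ.real (closedBall (z a) s) := by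
        simp only [Measure.addHaar_real_closedBall μ _ hs, Finset.sum_const, nsmul_eq_mul,
          mul_assoc]
    _ ≤ N * μ.real {x | |‖x - y‖ - R| ≤ t + s} :=
        sum_measureReal_le_mul_measureReal hfin (fun _ _ ↦ measurableSet_closedBall) hsub hsum
    _ ≤ N * (2 * Module.finrank ℝ E * (t + s) * (R + (t + s)) ^ (Module.finrank ℝ E - 1)
          * μ.real (ball 0 1)) := by
        gcongr
        exact measureReal_annulus_le μ y hR (by positivity)
    _ = _ := by ring

end Annuli

section CrossScale

/-- The index `j` of the dyadic interval `[2 ^ j, 2 ^ (j + 1))` containing the radius of the sphere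
`(y, r)`, when `r ≥ 1`. -/
def dyadicScale {d : ℕ} (a : Ed d × ℝ) : ℕ := Nat.log 2 ⌊a.2⌋₊

lemma mem_Ico_two_pow_dyadicScale {d : ℕ} {a : Ed d × ℝ} (ha : 1 ≤ a.2) :
    a.2 ∈ Ico ((2 : ℝ) ^ dyadicScale a) (2 ^ (dyadicScale a + 1)) := by
  have hfloor : ⌊a.2⌋₊ ≠ 0 := Nat.one_le_iff_ne_zero.1 ((Nat.one_le_floor_iff a.2).2 ha)
  constructor
  · exact_mod_cast (Nat.le_floor_iff (by linarith)).1 (Nat.pow_log_le_self 2 hfloor)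
  · exact_mod_cast (Nat.floor_lt (by linarith)).1 (Nat.lt_pow_succ_log_self one_lt_two ⌊a.2⌋₊)

namespace SphereAtomBounds

variable {H : Type*} [NormedAddCommGroup H] [InnerProductSpace ℂ H] {d : ℕ} {Φ : Ed d × ℝ → H}
  {C : ℝ} {A : Finset (Ed d × ℝ)}

lemma abs_norm_sub_sub_le_of_inner_ne_zero (hΦ : SphereAtomBounds d Φ C) {s : ℝ} (hs : 1 ≤ s)
    {a b : Ed d × ℝ} (ha : 1 ≤ a.2) (hb : b.2 ∈ Icc s (2 * s)) (h : inner ℂ (Φ a) (Φ b) ≠ 0) :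
    |‖b.1 - a.1‖ - a.2| ≤ 3 * s := by
  obtain ⟨hb1, hb2⟩ := hb
  obtain ⟨hlow, hupp⟩ := hΦ.abs_sub_le_of_inner_ne_zero ha (hs.trans hb1) h
  have := le_abs_self (a.2 - b.2)
  rw [norm_sub_rev, abs_le]
  constructor <;> linarith

lemma card_filter_inner_ne_zero_mul_pow_le (hΦ : SphereAtomBounds d Φ C) (hd : d ≠ 0)
    {s u : ℝ} (hs : 1 ≤ s) (hu : 0 ≤ u) {a : Ed d × ℝ} (ha : 4 * s ≤ a.2)
    (hAs : ∀ b ∈ A, b.2 ∈ Icc s (2 * s))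
    (hAu : ∀ b ∈ A, ((A.filter (dist b · ≤ 2 * s)).card : ℝ) ≤ u * (2 * s)) :
    ((A.filter fun b ↦ inner ℂ (Φ a) (Φ b) ≠ 0).card : ℝ) * s ^ d
      ≤ 16 * d * u * s ^ 2 * (2 * a.2) ^ (d - 1) := by
  have : Nonempty (Fin d) := Fin.pos_iff_nonempty.1 (Nat.pos_of_ne_zero hd)
  have ha0 : 0 ≤ a.2 := by linarith
  set S := A.filter fun b ↦ inner ℂ (Φ a) (Φ b) ≠ 0
  have hS : ∀ b ∈ S, |‖b.1 - a.1‖ - a.2| ≤ 3 * s := fun b hb ↦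
    hΦ.abs_norm_sub_sub_le_of_inner_ne_zero hs (by linarith) (hAs b (Finset.mem_filter.1 hb).1)
      (Finset.mem_filter.1 hb).2
  have hcard (x : Ed d) : ((S.filter fun b ↦ dist x b.1 ≤ s).card : ℝ) ≤ u * (2 * s) := by
    obtain h | ⟨b₀, hb₀⟩ := (S.filter fun b ↦ dist x b.1 ≤ s).eq_empty_or_nonempty
    · rw [h, Finset.card_empty, Nat.cast_zero]
      positivity
    obtain ⟨hb₀S, hb₀x⟩ := Finset.mem_filter.1 hb₀
    have hb₀A := (Finset.mem_filter.1 hb₀S).1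
    refine (Nat.cast_le.2 (Finset.card_le_card fun b hb ↦ ?_)).trans (hAu b₀ hb₀A)
    obtain ⟨hbS, hbx⟩ := Finset.mem_filter.1 hb
    have hbA := (Finset.mem_filter.1 hbS).1
    have hcentres := dist_triangle_left b₀.1 b.1 x
    have hradii := Real.dist_le_of_mem_Icc (hAs b₀ hb₀A) (hAs b hbA)
    exact Finset.mem_filter.2 ⟨hbA, max_le (by linarith) (by linarith)⟩
  have := card_mul_pow_le_of_near_sphere (by linarith) (by linarith) (by linarith) (by positivity)
    hS hcard
  rw [finrank_euclideanSpace_fin] at this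
  calc S.card * s ^ d ≤ u * (2 * s) * (2 * d * (3 * s + s) * (a.2 + (3 * s + s)) ^ (d - 1)) := this
    _ ≤ u * (2 * s) * (2 * d * (3 * s + s) * (2 * a.2) ^ (d - 1)) := by
        gcongr
        linarith
    _ = _ := by ring

lemma norm_inner_le_of_radius_le (hΦ : SphereAtomBounds d Φ C) (hd : d ≠ 0) {s : ℝ} (hs : 1 ≤ s)
    {a b : Ed d × ℝ} (ha : 6 * s ≤ a.2) (hb : b.2 ∈ Icc s (2 * s)) :
    ‖inner ℂ (Φ a) (Φ b)‖ ≤ C * (4 * s) ^ (((d : ℝ) - 1) / 2) := by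
  have hC := hΦ.pos
  have ha0 : 0 < a.2 := by linarith
  have hb0 : 0 ≤ b.2 := by linarith [hb.1]
  have he : 0 ≤ ((d : ℝ) - 1) / 2 := by
    have : (1 : ℝ) ≤ d := mod_cast Nat.one_le_iff_ne_zero.2 hd
    linarith
  obtain h0 | h0 := eq_or_ne (inner ℂ (Φ a) (Φ b)) 0
  · rw [h0, norm_zero]
    positivity
  have hdist : a.2 / 2 ≤ 1 + ‖a.1 - b.1‖ := by
    have := (abs_le.1 (hΦ.abs_norm_sub_sub_le_of_inner_ne_zero hs (by linarith) hb h0)).1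
    rw [norm_sub_rev] at this
    linarith
  refine le_of_mul_le_mul_right ?_ (Real.rpow_pos_of_pos (half_pos ha0) (((d : ℝ) - 1) / 2))
  calc ‖inner ℂ (Φ a) (Φ b)‖ * (a.2 / 2) ^ (((d : ℝ) - 1) / 2)
      ≤ ‖inner ℂ (Φ a) (Φ b)‖ * (1 + ‖a.1 - b.1‖) ^ (((d : ℝ) - 1) / 2) := by gcongr
    _ ≤ C * (a.2 ^ (((d : ℝ) - 1) / 2) * b.2 ^ (((d : ℝ) - 1) / 2)) :=
        hΦ.norm_inner_mul_rpow_le a b (by linarith) (hs.trans hb.1)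
    _ ≤ C * (a.2 ^ (((d : ℝ) - 1) / 2) * (2 * s) ^ (((d : ℝ) - 1) / 2)) := by
        have := hb.2
        gcongr
    _ = C * (4 * s) ^ (((d : ℝ) - 1) / 2) * (a.2 / 2) ^ (((d : ℝ) - 1) / 2) := by
        rw [mul_assoc, ← Real.mul_rpow (by positivity) (by positivity),
          ← Real.mul_rpow (by positivity) (by positivity)]
        congr 2
        ring

lemma sum_norm_inner_le_of_small_radii (hΦ : SphereAtomBounds d Φ C) (hd : 4 ≤ d)
    {s u : ℝ} (hs : 1 ≤ s) (hu : 0 ≤ u) {a : Ed d × ℝ} (ha : 6 * s ≤ a.2)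
    (hAs : ∀ b ∈ A, b.2 ∈ Icc s (2 * s))
    (hAu : ∀ b ∈ A, ((A.filter (dist b · ≤ 2 * s)).card : ℝ) ≤ u * (2 * s)) :
    ∑ b ∈ A, ‖inner ℂ (Φ a) (Φ b)‖ ≤ 16 * d * 2 ^ (d - 1) * 4 ^ (((d : ℝ) - 1) / 2) * C * u
      * a.2 ^ (d - 1) * s ^ (-(1 / 2) : ℝ) := by
  have hC := hΦ.pos
  have hs0 : 0 < s := by linarith
  have ha0 : 0 < a.2 := by linarith
  have hexp : s ^ 2 * s ^ (((d : ℝ) - 1) / 2) ≤ s ^ d * s ^ (-(1 / 2) : ℝ) := by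
    have hd' : (4 : ℝ) ≤ d := mod_cast hd
    rw [← Real.rpow_natCast s 2, ← Real.rpow_natCast s d, ← Real.rpow_add hs0, ← Real.rpow_add hs0]
    refine Real.rpow_le_rpow_of_exponent_le hs ?_
    push_cast
    linarith
  set S := A.filter fun b ↦ inner ℂ (Φ a) (Φ b) ≠ 0
  have hsum : ∑ b ∈ A, ‖inner ℂ (Φ a) (Φ b)‖ ≤ S.card * (C * (4 * s) ^ (((d : ℝ) - 1) / 2)) := by
    rw [← Finset.sum_filter_ne_zero A, ← nsmul_eq_mul]
    simp only [norm_ne_zero_iff]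
    exact Finset.sum_le_card_nsmul _ _ _ fun b hb ↦
      hΦ.norm_inner_le_of_radius_le (by omega) hs ha (hAs b (Finset.mem_filter.1 hb).1)
  refine hsum.trans (le_of_mul_le_mul_right ?_ (pow_pos hs0 d))
  calc S.card * (C * (4 * s) ^ (((d : ℝ) - 1) / 2)) * s ^ d
      = S.card * s ^ d * (C * (4 * s) ^ (((d : ℝ) - 1) / 2)) := by ring
    _ ≤ 16 * d * u * s ^ 2 * (2 * a.2) ^ (d - 1) * (C * (4 * s) ^ (((d : ℝ) - 1) / 2)) :=
        mul_le_mul_of_nonneg_right (hΦ.card_filter_inner_ne_zero_mul_pow_le (by omega) hs hu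
          (by linarith) hAs hAu) (by positivity)
    _ = 16 * d * u * (2 * a.2) ^ (d - 1) * C * 4 ^ (((d : ℝ) - 1) / 2)
          * (s ^ 2 * s ^ (((d : ℝ) - 1) / 2)) := by
        rw [Real.mul_rpow zero_le_four hs0.le]
        ring
    _ ≤ 16 * d * u * (2 * a.2) ^ (d - 1) * C * 4 ^ (((d : ℝ) - 1) / 2)
          * (s ^ d * s ^ (-(1 / 2) : ℝ)) := mul_le_mul_of_nonneg_left hexp (by positivity)
    _ = _ := by
        rw [mul_pow]
        ring

lemma sum_norm_inner_of_dyadicScale_eq_le (hΦ : SphereAtomBounds d Φ C) (hd : 4 ≤ d)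
    (hA : ∀ b ∈ A, 1 ≤ b.2) {k : ℕ} {u : ℝ} (hu : 0 ≤ u)
    (hAu : DensityLE (A.filter (dyadicScale · = k)) k u) {a : Ed d × ℝ} (ha : 1 ≤ a.2)
    (hak : k + 2 < dyadicScale a) :
    ∑ b ∈ A with dyadicScale b = k, ‖inner ℂ (Φ a) (Φ b)‖
      ≤ 16 * d * 2 ^ (d - 1) * 4 ^ (((d : ℝ) - 1) / 2) * C * u * a.2 ^ (d - 1)
        * (2 ^ (-(1 / 2) : ℝ)) ^ k := by
  have hsep : 6 * (2 : ℝ) ^ k ≤ a.2 := by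
    have hpow : (2 : ℝ) ^ (k + 3) ≤ 2 ^ dyadicScale a := pow_le_pow_right₀ one_le_two hak
    rw [pow_add] at hpow
    linarith [(mem_Ico_two_pow_dyadicScale ha).1, pow_pos (zero_lt_two (α := ℝ)) k]
  rw [Real.rpow_pow_comm zero_le_two]
  refine hΦ.sum_norm_inner_le_of_small_radii hd (one_le_pow₀ one_le_two) hu hsep
    (fun b hb ↦ ?_) fun b hb ↦ hAu b hb _ ⟨?_, ?_⟩
  · obtain ⟨hbA, rfl⟩ := Finset.mem_filter.1 hb
    obtain ⟨hb1, hb2⟩ := mem_Ico_two_pow_dyadicScale (hA b hbA)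
    exact ⟨hb1, (pow_succ' (2 : ℝ) _).subst hb2.le⟩
  · linarith [one_le_pow₀ (one_le_two (α := ℝ)) (n := k)]
  · rw [← pow_succ']
    exact pow_le_pow_right₀ one_le_two (by omega)

lemma sum_norm_inner_of_dyadicScale_lt_le (hΦ : SphereAtomBounds d Φ C) (hd : 4 ≤ d) {κ : ℕ}
    (hA : ∀ b ∈ A, 1 ≤ b.2) (hAu : ∀ j, DensityLE (A.filter (dyadicScale · = j)) j (2 ^ (κ + 1)))
    (hAκ : ∀ b ∈ A, 2 * κ + 2 ≤ dyadicScale b) {a : Ed d × ℝ} (ha : 1 ≤ a.2) :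
    ∑ b ∈ A with dyadicScale b + 2 < dyadicScale a, ‖inner ℂ (Φ a) (Φ b)‖
      ≤ 16 * d * 2 ^ (d - 1) * 4 ^ (((d : ℝ) - 1) / 2) * (1 - 2 ^ (-(1 / 2) : ℝ))⁻¹ * C
        * a.2 ^ (d - 1) := by
  have hC := hΦ.pos
  have : 0 < a.2 := by linarith
  set q : ℝ := 2 ^ (-(1 / 2) : ℝ) with hq
  have hq0 : 0 < q := by positivity
  have hq1 : q < 1 := Real.rpow_lt_one_of_one_lt_of_neg one_lt_two (by norm_num)
  have hqκ : 2 ^ (κ + 1) * q ^ (2 * κ + 2) = 1 := by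
    have hqq : q ^ 2 = 1 / 2 := by
      rw [hq, ← Real.rpow_natCast, ← Real.rpow_mul zero_le_two]
      norm_num
    rw [show 2 * κ + 2 = 2 * (κ + 1) by ring, pow_mul, hqq, ← mul_pow]
    norm_num
  have hmaps : ∀ b ∈ A.filter fun b ↦ dyadicScale b + 2 < dyadicScale a,
      dyadicScale b ∈ Finset.Ico (2 * κ + 2) (dyadicScale a - 2) := fun b hb ↦ by
    obtain ⟨hbA, hba⟩ := Finset.mem_filter.1 hb
    exact Finset.mem_Ico.2 ⟨hAκ b hbA, by omega⟩
  set M := 16 * d * 2 ^ (d - 1) * 4 ^ (((d : ℝ) - 1) / 2) * C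
  calc ∑ b ∈ A with dyadicScale b + 2 < dyadicScale a, ‖inner ℂ (Φ a) (Φ b)‖
      ≤ ∑ k ∈ Finset.Ico (2 * κ + 2) (dyadicScale a - 2),
          M * 2 ^ (κ + 1) * a.2 ^ (d - 1) * q ^ k := by
        rw [← Finset.sum_fiberwise_of_maps_to hmaps]
        refine Finset.sum_le_sum fun k hk ↦ (Finset.sum_le_sum_of_subset_of_nonneg
          (Finset.filter_subset_filter _ (Finset.filter_subset _ _))
          fun _ _ _ ↦ norm_nonneg _).trans
            (hΦ.sum_norm_inner_of_dyadicScale_eq_le hd hA (by positivity) (hAu k) ha ?_)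
        rw [Finset.mem_Ico] at hk
        omega
    _ ≤ M * 2 ^ (κ + 1) * a.2 ^ (d - 1) * (q ^ (2 * κ + 2) / (1 - q)) := by
        grw [← Finset.mul_sum, geom_sum_Ico_le_of_lt_one hq0.le hq1]
    _ = M * (1 - q)⁻¹ * a.2 ^ (d - 1) * (2 ^ (κ + 1) * q ^ (2 * κ + 2)) := by ring
    _ = _ := by
        rw [hqκ]
        ring

lemma exists_sum_norm_sum_dyadicScale_sq_le (hd : 4 ≤ d) : ∃ K : ℝ, 0 < K ∧
    ∀ {Φ : Ed d × ℝ → H} {C : ℝ} {A : Finset (Ed d × ℝ)} {u : ℝ},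
      SphereAtomBounds d Φ C → UnitSeparated A → 1 ≤ u → (∀ a ∈ A, 1 ≤ a.2) →
      (∀ j, DensityLE (A.filter (dyadicScale · = j)) j u) →
      ∑ n ∈ A.image dyadicScale, ‖∑ a ∈ A with dyadicScale a = n, Φ a‖ ^ 2
        ≤ K * C * u ^ (2 / ((d : ℝ) - 1)) * ∑ a ∈ A, a.2 ^ (d - 1) := by
  obtain ⟨K, hK, hsingle⟩ := exists_norm_sum_sq_le_of_densityLE (H := H) hd
  refine ⟨K * 2 ^ (d - 1), by positivity, fun {Φ C A u} hΦ hA hu hA1 hAu ↦ ?_⟩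
  have hC := hΦ.pos
  rw [← Finset.sum_fiberwise_of_maps_to (fun a ha ↦ Finset.mem_image_of_mem dyadicScale ha)
    fun a ↦ a.2 ^ (d - 1), Finset.mul_sum]
  refine Finset.sum_le_sum fun n _ ↦ ?_
  have hmem : ∀ a ∈ A.filter (dyadicScale · = n), a.2 ∈ Ico ((2 : ℝ) ^ n) (2 ^ (n + 1)) :=
    fun a ha ↦ by
      obtain ⟨haA, rfl⟩ := Finset.mem_filter.1 ha
      exact mem_Ico_two_pow_dyadicScale (hA1 a haA)
  have hcard : ((A.filter (dyadicScale · = n)).card : ℝ) * (2 ^ n) ^ (d - 1)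
      ≤ ∑ a ∈ A with dyadicScale a = n, a.2 ^ (d - 1) := by
    rw [← nsmul_eq_mul]
    exact Finset.card_nsmul_le_sum _ _ _ fun a ha ↦
      pow_le_pow_left₀ (by positivity) (hmem a ha).1 _
  calc ‖∑ a ∈ A with dyadicScale a = n, Φ a‖ ^ 2
      ≤ K * C * u ^ (2 / ((d : ℝ) - 1)) * (2 ^ (n + 1)) ^ (d - 1)
          * (A.filter (dyadicScale · = n)).card :=
        hsingle hΦ (hA.mono (Finset.filter_subset _ _)) hu hmem (hAu n)
    _ = K * 2 ^ (d - 1) * C * u ^ (2 / ((d : ℝ) - 1))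
          * ((A.filter (dyadicScale · = n)).card * (2 ^ n) ^ (d - 1)) := by
        rw [pow_succ, mul_pow]
        ring
    _ ≤ _ := mul_le_mul_of_nonneg_left hcard (by positivity)

lemma exists_norm_sum_sq_le_of_dyadicScale_lt (hd : 4 ≤ d) : ∃ K : ℝ, 0 < K ∧
    ∀ {Φ : Ed d × ℝ → H} {C : ℝ} {A : Finset (Ed d × ℝ)} {u : ℝ} {n : ℕ},
      SphereAtomBounds d Φ C → UnitSeparated A → 1 ≤ u → (∀ a ∈ A, 1 ≤ a.2) →
      (∀ j, DensityLE (A.filter (dyadicScale · = j)) j u) → (∀ a ∈ A, dyadicScale a < n) →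
      ‖∑ a ∈ A, Φ a‖ ^ 2 ≤ n * (K * C * u ^ (2 / ((d : ℝ) - 1)) * ∑ a ∈ A, a.2 ^ (d - 1)) := by
  obtain ⟨K, hK, hblock⟩ := exists_sum_norm_sum_dyadicScale_sq_le (H := H) hd
  refine ⟨K, hK, fun {Φ C A u n} hΦ hA hu hA1 hAu hAn ↦ ?_⟩
  have hcard : (A.image dyadicScale).card ≤ n := by
    rw [← Finset.card_range n]
    exact Finset.card_le_card (Finset.image_subset_iff.2 fun a ha ↦ Finset.mem_range.2 (hAn a ha))
  exact (norm_sum_sq_le_card_image_mul A Φ dyadicScale).trans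
    (mul_le_mul (Nat.cast_le.2 hcard) (hblock hΦ hA hu hA1 hAu) (by positivity) (by positivity))

lemma exists_norm_sum_sq_le_of_le_dyadicScale (hd : 4 ≤ d) : ∃ K : ℝ, 0 < K ∧
    ∀ {Φ : Ed d × ℝ → H} {C : ℝ} {A : Finset (Ed d × ℝ)} {κ : ℕ},
      SphereAtomBounds d Φ C → UnitSeparated A → (∀ a ∈ A, 1 ≤ a.2) →
      (∀ j, DensityLE (A.filter (dyadicScale · = j)) j (2 ^ (κ + 1))) →
      (∀ a ∈ A, 2 * κ + 2 ≤ dyadicScale a) →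
      ‖∑ a ∈ A, Φ a‖ ^ 2
        ≤ K * C * (2 ^ (κ + 1)) ^ (2 / ((d : ℝ) - 1)) * ∑ a ∈ A, a.2 ^ (d - 1) := by
  obtain ⟨K, hK, hblock⟩ := exists_sum_norm_sum_dyadicScale_sq_le (H := H) hd
  set M : ℝ := 16 * d * 2 ^ (d - 1) * 4 ^ (((d : ℝ) - 1) / 2) * (1 - 2 ^ (-(1 / 2) : ℝ))⁻¹
  have hM : 0 ≤ M := by
    have : (2 : ℝ) ^ (-(1 / 2) : ℝ) < 1 :=
      Real.rpow_lt_one_of_one_lt_of_neg one_lt_two (by norm_num)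
    have := sub_pos.2 this
    positivity
  refine ⟨5 * K + 2 * M, by positivity, fun {Φ C A κ} hΦ hA hA1 hAu hAκ ↦ ?_⟩
  have hC := hΦ.pos
  have hd' : (4 : ℝ) ≤ d := mod_cast hd
  set U : ℝ := (2 ^ (κ + 1)) ^ (2 / ((d : ℝ) - 1))
  have hU : 1 ≤ U :=
    Real.one_le_rpow (one_le_pow₀ one_le_two) (div_nonneg zero_le_two (by linarith))
  set W := ∑ a ∈ A, a.2 ^ (d - 1) with hW
  have hW0 : 0 ≤ W := Finset.sum_nonneg fun a ha ↦ pow_nonneg (by linarith [hA1 a ha]) _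
  have hfar : ∑ a ∈ A, ∑ b ∈ A with dyadicScale b + 2 < dyadicScale a, ‖inner ℂ (Φ a) (Φ b)‖
      ≤ M * C * W := by
    rw [hW, Finset.mul_sum]
    exact Finset.sum_le_sum fun a ha ↦
      hΦ.sum_norm_inner_of_dyadicScale_lt_le hd hA1 hAu hAκ (hA1 a ha)
  calc ‖∑ a ∈ A, Φ a‖ ^ 2 ≤ (2 * (2 : ℕ) + 1) * (K * C * U * W) + 2 * (M * C * W) := by
        refine (norm_sum_sq_le_sum_fiber_add_far (𝕜 := ℂ) A Φ dyadicScale 2).trans ?_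
        gcongr
        exact hblock hΦ hA (one_le_pow₀ one_le_two) hA1 hAu
    _ ≤ (5 * K + 2 * M) * C * U * W := by
        have : M * C * W ≤ M * C * W * U := le_mul_of_one_le_right (by positivity) hU
        push_cast
        linarith

lemma exists_norm_sum_sq_le_mul_sum_pow (hd : 4 ≤ d) : ∃ K : ℝ, 0 < K ∧
    ∀ {Φ : Ed d × ℝ → H} {C : ℝ} {A : Finset (Ed d × ℝ)} {κ : ℕ},
      SphereAtomBounds d Φ C → UnitSeparated A → (∀ a ∈ A, 1 ≤ a.2) →
      (∀ j, DensityLE (A.filter (dyadicScale · = j)) j (2 ^ (κ + 1))) →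
      ‖∑ a ∈ A, Φ a‖ ^ 2
        ≤ K * C * (κ + 1) * (2 ^ (κ + 1)) ^ (2 / ((d : ℝ) - 1)) * ∑ a ∈ A, a.2 ^ (d - 1) := by
  obtain ⟨K₁, hK₁, hlow⟩ := exists_norm_sum_sq_le_of_dyadicScale_lt (H := H) hd
  obtain ⟨K₂, hK₂, hhigh⟩ := exists_norm_sum_sq_le_of_le_dyadicScale (H := H) hd
  refine ⟨4 * K₁ + 2 * K₂, by positivity, fun {Φ C A κ} hΦ hA hA1 hAu ↦ ?_⟩
  have hC := hΦ.pos
  set U : ℝ := (2 ^ (κ + 1)) ^ (2 / ((d : ℝ) - 1))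
  set W := ∑ a ∈ A, a.2 ^ (d - 1)
  have hW : ∀ B ⊆ A, ∑ a ∈ B, a.2 ^ (d - 1) ≤ W := fun B hB ↦
    Finset.sum_le_sum_of_subset_of_nonneg hB fun a ha _ ↦ pow_nonneg (by linarith [hA1 a ha]) _
  have hW0 : 0 ≤ W := Finset.sum_nonneg fun a ha ↦ pow_nonneg (by linarith [hA1 a ha]) _
  have hAu' : ∀ B ⊆ A, ∀ j, DensityLE (B.filter (dyadicScale · = j)) j (2 ^ (κ + 1)) :=
    fun B hB j ↦ (hAu j).mono (Finset.filter_subset_filter _ hB)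
  have hsub₁ : A.filter (dyadicScale · < 2 * κ + 2) ⊆ A := Finset.filter_subset _ _
  have hsub₂ : A.filter (¬ dyadicScale · < 2 * κ + 2) ⊆ A := Finset.filter_subset _ _
  have hsum₁ : ‖∑ a ∈ A with dyadicScale a < 2 * κ + 2, Φ a‖ ^ 2
      ≤ (2 * κ + 2 : ℕ) * (K₁ * C * U * W) :=
    (hlow hΦ (hA.mono hsub₁) (one_le_pow₀ one_le_two) (fun a ha ↦ hA1 a (hsub₁ ha)) (hAu' _ hsub₁)
      fun a ha ↦ (Finset.mem_filter.1 ha).2).trans (by gcongr; exact hW _ hsub₁)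
  have hsum₂ : ‖∑ a ∈ A with ¬ dyadicScale a < 2 * κ + 2, Φ a‖ ^ 2 ≤ K₂ * C * U * W :=
    (hhigh hΦ (hA.mono hsub₂) (fun a ha ↦ hA1 a (hsub₂ ha)) (hAu' _ hsub₂)
      fun a ha ↦ not_lt.1 (Finset.mem_filter.1 ha).2).trans (by gcongr; exact hW _ hsub₂)
  rw [← Finset.sum_filter_add_sum_filter_not A (dyadicScale · < 2 * κ + 2)]
  calc _ ≤ 2 * ((2 * κ + 2 : ℕ) * (K₁ * C * U * W) + K₂ * C * U * W) :=
        (pow_le_pow_left₀ (norm_nonneg _) (norm_add_le _ _) 2).trans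
          (add_sq_le.trans (by gcongr))
    _ ≤ (4 * K₁ + 2 * K₂) * C * (κ + 1) * U * W := by
        have : K₂ * C * U * W ≤ K₂ * C * U * W * (κ + 1) :=
          le_mul_of_one_le_right (by positivity) (by linarith [Nat.cast_nonneg (α := ℝ) κ])
        push_cast
        linarith

end SphereAtomBounds

end CrossScale

section DensityLevels

lemma exists_subset_covering_card_ge {X : Type*} [PseudoMetricSpace X] {A B : Finset X}
    {ρ : X → ℝ} {u : ℝ} (hρ : ∀ a ∈ B, 0 ≤ ρ a)
    (hu : ∀ a ∈ B, u * ρ a ≤ ((A.filter (dist a · ≤ ρ a)).card : ℝ)) :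
    ∃ U ⊆ B, (∀ a ∈ B, ∃ b ∈ U, dist a b ≤ 5 * ρ b) ∧ u * ∑ b ∈ U, ρ b ≤ A.card := by
  classical
  obtain ⟨R, hR⟩ := (B.image ρ).exists_le
  obtain ⟨V, hVB, hdisj, hcover⟩ := Vitali.exists_disjoint_subfamily_covering_enlargement_closedBall
    (B : Set X) id ρ R (fun a ha ↦ hR _ (Finset.mem_image_of_mem ρ ha)) 5 (by norm_num)
  lift V to Finset X using B.finite_toSet.subset hVB
  refine ⟨V, mod_cast hVB, fun a ha ↦ ?_, ?_⟩
  · obtain ⟨b, hb, hab⟩ := hcover a ha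
    exact ⟨b, hb, hab (mem_closedBall_self (hρ a ha))⟩
  · have hpair : (V : Set X).PairwiseDisjoint fun b ↦ A.filter (dist b · ≤ ρ b) :=
      fun b hb c hc hbc ↦ Finset.disjoint_left.2 fun x hx hx' ↦
        Set.disjoint_left.1 (hdisj hb hc hbc) (mem_closedBall'.2 (Finset.mem_filter.1 hx).2)
          (mem_closedBall'.2 (Finset.mem_filter.1 hx').2)
    calc u * ∑ b ∈ V, ρ b = ∑ b ∈ V, u * ρ b := Finset.mul_sum _ _ _
      _ ≤ ∑ b ∈ V, ((A.filter (dist b · ≤ ρ b)).card : ℝ) :=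
          Finset.sum_le_sum fun b hb ↦ hu b (hVB hb)
      _ = ((V.biUnion fun b ↦ A.filter (dist b · ≤ ρ b)).card : ℝ) := by
          rw [Finset.card_biUnion hpair, Nat.cast_sum]
      _ ≤ A.card := Nat.cast_le.2
          (Finset.card_le_card (Finset.biUnion_subset.2 fun b _ ↦ Finset.filter_subset _ _))

/-- The closed `t`-neighbourhood of the sphere with centre `a.1` and radius `a.2`. -/
def sphereShell {E : Type*} [NormedAddCommGroup E] (a : E × ℝ) (t : ℝ) : Set E :=
  {x | |‖x - a.1‖ - a.2| ≤ t}

lemma sphereShell_subset_of_dist_le {E : Type*} [NormedAddCommGroup E] {a b : E × ℝ} {s t : ℝ}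
    (hab : dist a b ≤ s) : sphereShell a t ⊆ sphereShell b (t + 2 * s) := by
  intro x hx
  have hcentre : dist a.1 b.1 ≤ s := (le_max_left _ _).trans hab
  have hradius : |a.2 - b.2| ≤ s := (le_max_right (dist a.1 b.1) _).trans hab
  have hnorm : |‖x - a.1‖ - ‖x - b.1‖| ≤ s := by
    refine (abs_norm_sub_norm_le _ _).trans ?_
    rwa [sub_sub_sub_cancel_left, ← dist_eq_norm, dist_comm]
  have hxa : |‖x - a.1‖ - a.2| ≤ t := hx
  change |‖x - b.1‖ - b.2| ≤ t + 2 * s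
  rw [abs_le] at *
  constructor <;> linarith

lemma sphereShell_subset_closedBall {E : Type*} [NormedAddCommGroup E] (a : E × ℝ) (t : ℝ) :
    sphereShell a t ⊆ closedBall a.1 (a.2 + t) := fun x hx ↦ by
  have := (abs_le.1 (show |‖x - a.1‖ - a.2| ≤ t from hx)).2
  rw [mem_closedBall, dist_eq_norm]
  linarith

variable {d : ℕ} {A B : Finset (Ed d × ℝ)}

lemma volume_biUnion_sphereShell_ne_top (B : Finset (Ed d × ℝ)) (t : Ed d × ℝ → ℝ) :
    volume (⋃ a ∈ B, sphereShell a (t a)) ≠ ∞ :=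
  (measure_biUnion_lt_top B.finite_toSet fun a _ ↦
    (measure_mono (sphereShell_subset_closedBall a (t a))).trans_lt measure_closedBall_lt_top).ne

/-- Density at least `u` of a family of spheres with radii about `2 ^ j` at the sphere `a`: some
ball of radius `ρ ∈ [1, 2 ^ (j + 4)]` around `a` contains at least `u * ρ` members. -/
def DensityGE (A : Finset (Ed d × ℝ)) (j : ℕ) (u : ℝ) (a : Ed d × ℝ) : Prop :=
  ∃ ρ ∈ Icc (1 : ℝ) (2 ^ (j + 4)), u * ρ ≤ ((A.filter (dist a · ≤ ρ)).card : ℝ)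

lemma volume_sphereShell_le (hd : d ≠ 0) {a : Ed d × ℝ} {j : ℕ} (ha : a.2 ∈ Ico 0 (2 ^ (j + 1)))
    {ρ : ℝ} (hρ : ρ ∈ Icc (1 : ℝ) (2 ^ (j + 4))) :
    volume.real (sphereShell a (1 + 2 * (5 * ρ)))
      ≤ 22 * d * 354 ^ (d - 1) * volume.real (ball (0 : Ed d) 1) * (2 ^ j) ^ (d - 1) * ρ := by
  have : Nonempty (Fin d) := Fin.pos_iff_nonempty.1 (Nat.pos_of_ne_zero hd)
  have hρ' := hρ.2
  have ha' := ha.2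
  rw [pow_add] at hρ' ha'
  have hsum : a.2 + (1 + 2 * (5 * ρ)) ≤ 354 * 2 ^ j := by
    have : (1 : ℝ) ≤ 2 ^ j := one_le_pow₀ one_le_two
    linarith
  calc _ ≤ 2 * d * (1 + 2 * (5 * ρ)) * (a.2 + (1 + 2 * (5 * ρ))) ^ (d - 1)
        * volume.real (ball (0 : Ed d) 1) := by
        have := measureReal_annulus_le volume a.1 ha.1 (by linarith [hρ.1] : 0 ≤ 1 + 2 * (5 * ρ))
        rwa [finrank_euclideanSpace_fin] at this
    _ ≤ 2 * d * (11 * ρ) * (354 * 2 ^ j) ^ (d - 1) * volume.real (ball (0 : Ed d) 1) := by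
        have := ha.1
        have := hρ.1
        gcongr
        linarith
    _ = _ := by rw [mul_pow]; ring

lemma exists_volume_biUnion_sphereShell_le_of_densityGE (hd : d ≠ 0) : ∃ K : ℝ, 0 < K ∧
    ∀ {A B : Finset (Ed d × ℝ)} {j : ℕ} {u : ℝ}, 0 < u → B ⊆ A →
      (∀ a ∈ A, a.2 ∈ Ico (2 ^ j) (2 ^ (j + 1))) → (∀ a ∈ B, DensityGE A j u a) →
      volume.real (⋃ a ∈ B, sphereShell a 1) ≤ K * u⁻¹ * ∑ a ∈ A, a.2 ^ (d - 1) := by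
  have hball : 0 < volume.real (ball (0 : Ed d) 1) :=
    ENNReal.toReal_pos (measure_ball_pos _ _ one_pos).ne' measure_ball_lt_top.ne
  refine ⟨22 * d * 354 ^ (d - 1) * volume.real (ball (0 : Ed d) 1), by positivity,
    fun {A B j u} hu hBA hA hB ↦ ?_⟩
  set K := 22 * d * 354 ^ (d - 1) * volume.real (ball (0 : Ed d) 1)
  choose! ρ hρ hcard using hB
  obtain ⟨U, hUB, hcover, hsum⟩ :=
    exists_subset_covering_card_ge (fun a ha ↦ zero_le_one.trans (hρ a ha).1) hcard
  have hsub : ⋃ a ∈ B, sphereShell a 1 ⊆ ⋃ b ∈ U, sphereShell b (1 + 2 * (5 * ρ b)) :=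
    iUnion₂_subset fun a ha ↦ by
      obtain ⟨b, hb, hab⟩ := hcover a ha
      exact (sphereShell_subset_of_dist_le hab).trans (subset_biUnion_of_mem (u := fun b ↦
        sphereShell b (1 + 2 * (5 * ρ b))) hb)
  have hshell : ∀ b ∈ U, volume.real (sphereShell b (1 + 2 * (5 * ρ b)))
      ≤ K * (2 ^ j) ^ (d - 1) * ρ b := fun b hb ↦
    volume_sphereShell_le hd (Ico_subset_Ico_left (by positivity) (hA b (hBA (hUB hb))))
      (hρ b (hUB hb))
  have hmass : (A.card : ℝ) * (2 ^ j) ^ (d - 1) ≤ ∑ a ∈ A, a.2 ^ (d - 1) := by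
    rw [← nsmul_eq_mul]
    exact A.card_nsmul_le_sum _ _ fun a ha ↦ pow_le_pow_left₀ (by positivity) (hA a ha).1 _
  calc volume.real (⋃ a ∈ B, sphereShell a 1)
      ≤ volume.real (⋃ b ∈ U, sphereShell b (1 + 2 * (5 * ρ b))) :=
        measureReal_mono hsub (volume_biUnion_sphereShell_ne_top U _)
    _ ≤ ∑ b ∈ U, volume.real (sphereShell b (1 + 2 * (5 * ρ b))) :=
        measureReal_biUnion_finset_le _ _
    _ ≤ ∑ b ∈ U, K * (2 ^ j) ^ (d - 1) * ρ b := Finset.sum_le_sum hshell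
    _ = K * u⁻¹ * (2 ^ j) ^ (d - 1) * (u * ∑ b ∈ U, ρ b) := by
        rw [← Finset.mul_sum]; field_simp
    _ ≤ K * u⁻¹ * (2 ^ j) ^ (d - 1) * A.card := by gcongr
    _ = K * u⁻¹ * (A.card * (2 ^ j) ^ (d - 1)) := by ring
    _ ≤ K * u⁻¹ * ∑ a ∈ A, a.2 ^ (d - 1) := by gcongr

lemma exists_volume_biUnion_sphereShell_le (hd : d ≠ 0) : ∃ K : ℝ, 0 < K ∧
    ∀ {A B : Finset (Ed d × ℝ)} {u : ℝ}, 0 < u → B ⊆ A → (∀ a ∈ A, 1 ≤ a.2) →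
      (∀ a ∈ B, DensityGE (A.filter (dyadicScale · = dyadicScale a)) (dyadicScale a) u a) →
      volume.real (⋃ a ∈ B, sphereShell a 1) ≤ K * u⁻¹ * ∑ a ∈ A, a.2 ^ (d - 1) := by
  classical
  obtain ⟨K, hK, hscale⟩ := exists_volume_biUnion_sphereShell_le_of_densityGE hd
  refine ⟨K, hK, fun {A B u} hu hBA hA hB ↦ ?_⟩
  have hsub : ⋃ a ∈ B, sphereShell a 1
      ⊆ ⋃ j ∈ A.image dyadicScale, ⋃ a ∈ B.filter (dyadicScale · = j), sphereShell a 1 :=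
    iUnion₂_subset fun a ha x hx ↦ mem_biUnion (Finset.mem_image_of_mem _ (hBA ha))
      (mem_biUnion (Finset.mem_coe.2 (Finset.mem_filter.2 ⟨ha, rfl⟩)) hx)
  refine (measureReal_mono hsub (measure_biUnion_lt_top (Finset.finite_toSet _) fun j _ ↦
    (volume_biUnion_sphereShell_ne_top _ fun _ ↦ 1).lt_top).ne).trans
      ((measureReal_biUnion_finset_le _ _).trans ?_)
  rw [← Finset.sum_fiberwise_of_maps_to (g := dyadicScale)
    (fun a ha ↦ Finset.mem_image_of_mem dyadicScale ha), Finset.mul_sum]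
  refine Finset.sum_le_sum fun j _ ↦ hscale (j := j) hu (Finset.filter_subset_filter _ hBA)
    (fun a ha ↦ ?_) fun a ha ↦ ?_
  · obtain ⟨haA, rfl⟩ := Finset.mem_filter.1 ha
    exact mem_Ico_two_pow_dyadicScale (hA a haA)
  · obtain ⟨haB, rfl⟩ := Finset.mem_filter.1 ha
    exact hB a haB

open Classical in
/-- The density level of the sphere `a` in the family `A`: the largest `κ` such that, among the
members of `A` of the same dyadic scale as `a`, the density at `a` is at least `2 ^ κ`. -/
def densityLevel (A : Finset (Ed d × ℝ)) (a : Ed d × ℝ) : ℕ :=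
  Nat.findGreatest (fun κ ↦
    DensityGE (A.filter (dyadicScale · = dyadicScale a)) (dyadicScale a) (2 ^ κ) a) A.card

lemma densityGE_densityLevel {a : Ed d × ℝ} (ha : a ∈ A) :
    DensityGE (A.filter (dyadicScale · = dyadicScale a)) (dyadicScale a)
      (2 ^ densityLevel A a) a := by
  classical
  refine Nat.findGreatest_spec (P := fun κ ↦
    DensityGE (A.filter (dyadicScale · = dyadicScale a)) (dyadicScale a) (2 ^ κ) a)
    (Nat.zero_le _) ⟨1, ⟨le_rfl, one_le_pow₀ one_le_two⟩, ?_⟩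
  rw [pow_zero, mul_one, Nat.one_le_cast]
  exact Finset.card_pos.2 ⟨a, by simp [ha]⟩

lemma le_densityLevel {a : Ed d × ℝ} {κ : ℕ}
    (h : DensityGE (A.filter (dyadicScale · = dyadicScale a)) (dyadicScale a) (2 ^ κ) a) :
    κ ≤ densityLevel A a := by
  classical
  refine Nat.le_findGreatest ?_ h
  obtain ⟨ρ, hρ, hcard⟩ := h
  have hpow : (2 : ℝ) ^ κ ≤ A.card :=
    (le_mul_of_one_le_right (by positivity) hρ.1).trans (hcard.trans (Nat.cast_le.2
      (Finset.card_le_card ((Finset.filter_subset _ _).trans (Finset.filter_subset _ _)))))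
  exact Nat.lt_two_pow_self.le.trans (mod_cast hpow)

lemma densityLE_filter_densityLevel (A : Finset (Ed d × ℝ)) (κ j : ℕ) :
    DensityLE ((A.filter (densityLevel A · = κ)).filter (dyadicScale · = j)) j (2 ^ (κ + 1)) := by
  intro a ha ρ hρ
  obtain ⟨ha', rfl⟩ := Finset.mem_filter.1 ha
  obtain ⟨-, rfl⟩ := Finset.mem_filter.1 ha'
  by_contra! hlt
  refine (Nat.lt_succ_self _).not_ge (le_densityLevel ⟨ρ, hρ, hlt.le.trans (Nat.cast_le.2
    (Finset.card_le_card (Finset.filter_subset_filter _ (Finset.filter_subset_filter _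
      (Finset.filter_subset _ _)))))⟩)

lemma exists_volume_biUnion_sphereShell_densityLevel_le (hd : d ≠ 0) : ∃ K : ℝ, 0 < K ∧
    ∀ {A : Finset (Ed d × ℝ)} (κ : ℕ), (∀ a ∈ A, 1 ≤ a.2) →
      volume (⋃ a ∈ A.filter (densityLevel A · = κ), sphereShell a 1)
        ≤ ENNReal.ofReal (K * (2 ^ κ)⁻¹ * ∑ a ∈ A, a.2 ^ (d - 1)) := by
  obtain ⟨K, hK, hvol⟩ := exists_volume_biUnion_sphereShell_le hd
  refine ⟨K, hK, fun {A} κ hA ↦ ?_⟩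
  have hsum : 0 ≤ ∑ a ∈ A, a.2 ^ (d - 1) :=
    Finset.sum_nonneg fun a ha ↦ pow_nonneg (by linarith [hA a ha]) _
  refine (ENNReal.le_ofReal_iff_toReal_le (volume_biUnion_sphereShell_ne_top _ fun _ ↦ 1)
    (by positivity)).2 (hvol (by positivity) (Finset.filter_subset _ _) hA fun a ha ↦ ?_)
  obtain ⟨haA, rfl⟩ := Finset.mem_filter.1 ha
  exact densityGE_densityLevel haA

end DensityLevels

section DiscreteInequality

lemma eLpNorm_le_eLpNorm_mul_measure_rpow_of_support_subset {α E : Type*} [MeasurableSpace α]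
    [NormedAddCommGroup E] {μ : Measure α} {f : α → E} {s : Set α} {p q : ℝ≥0∞} (hpq : p ≤ q)
    (hf : AEStronglyMeasurable f μ) (hs : Function.support f ⊆ s) :
    eLpNorm f p μ ≤ eLpNorm f q μ * μ s ^ (1 / p.toReal - 1 / q.toReal) := by
  have := eLpNorm_le_eLpNorm_mul_rpow_measure_univ hpq (hf.restrict (s := s))
  rwa [eLpNorm_restrict_eq_of_support_subset hs, eLpNorm_restrict_eq_of_support_subset hs,
    Measure.restrict_apply_univ] at this

lemma mul_rpow_half_mul_mul_rpow_le {a b S σ e : ℝ} (ha : 0 ≤ a) (hb : 0 ≤ b) (hS : 0 ≤ S)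
    (he : 0 ≤ e) (κ : ℕ) :
    (a * (κ + 1) * (2 ^ (κ + 1)) ^ (2 * σ) * S) ^ (1 / 2 : ℝ) * (b * (2 ^ κ)⁻¹ * S) ^ e
      ≤ a ^ (1 / 2 : ℝ) * b ^ e * 2 ^ σ * ((κ + 1) * (2 ^ (σ - e)) ^ κ) * S ^ (e + 1 / 2) := by
  have hκ : ((κ : ℝ) + 1) ^ (1 / 2 : ℝ) ≤ κ + 1 :=
    Real.rpow_le_self_of_one_le (by linarith [Nat.cast_nonneg (α := ℝ) κ]) (by norm_num)
  have htwo : ((2 ^ (κ + 1)) ^ (2 * σ)) ^ (1 / 2 : ℝ) * ((2 ^ κ)⁻¹) ^ e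
      = (2 : ℝ) ^ σ * (2 ^ (σ - e)) ^ κ := by
    rw [← Real.rpow_natCast, ← Real.rpow_natCast, ← Real.rpow_natCast, ← Real.rpow_neg zero_le_two,
      ← Real.rpow_mul zero_le_two, ← Real.rpow_mul zero_le_two, ← Real.rpow_mul zero_le_two,
      ← Real.rpow_mul zero_le_two, ← Real.rpow_add two_pos, ← Real.rpow_add two_pos]
    congr 1
    push_cast
    ring
  rw [Real.mul_rpow (by positivity) hS, Real.mul_rpow (by positivity) (by positivity),
    Real.mul_rpow ha (by positivity), Real.mul_rpow (by positivity) hS,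
    Real.mul_rpow hb (by positivity), Real.rpow_add_of_nonneg hS he (by norm_num)]
  calc _ = a ^ (1 / 2 : ℝ) * b ^ e * ((κ : ℝ) + 1) ^ (1 / 2 : ℝ)
        * (((2 ^ (κ + 1)) ^ (2 * σ)) ^ (1 / 2 : ℝ) * ((2 ^ κ)⁻¹) ^ e)
        * (S ^ e * S ^ (1 / 2 : ℝ)) := by ring
    _ ≤ a ^ (1 / 2 : ℝ) * b ^ e * ((κ : ℝ) + 1) * (2 ^ σ * (2 ^ (σ - e)) ^ κ)
        * (S ^ e * S ^ (1 / 2 : ℝ)) := by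
        rw [htwo]
        gcongr
    _ = _ := by ring

lemma exists_sum_add_one_mul_pow_le {q : ℝ} (hq : 0 ≤ q) (hq1 : q < 1) :
    ∃ Z : ℝ, 0 < Z ∧ ∀ s : Finset ℕ, ∑ k ∈ s, ((k : ℝ) + 1) * q ^ k ≤ Z := by
  have hsum : Summable fun k : ℕ ↦ ((k : ℝ) + 1) * q ^ k :=
    ((summable_pow_mul_geometric_of_norm_lt_one 1 (by rwa [Real.norm_of_nonneg hq])).add
      (summable_geometric_of_lt_one hq hq1)).congr fun k ↦ by ring
  have hnonneg : ∀ k : ℕ, 0 ≤ ((k : ℝ) + 1) * q ^ k := fun k ↦ by positivity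
  exact ⟨∑' k : ℕ, ((k : ℝ) + 1) * q ^ k, hsum.tsum_pos hnonneg 0 (by simp),
    fun s ↦ hsum.sum_le_tsum s fun k _ ↦ hnonneg k⟩

variable {d : ℕ} {ψ₀ : Ed d → ℂ}

lemma le_two_and_one_div_sub_neg (hd : 2 ≤ d) {p : ℝ} (hp1 : 1 ≤ p)
    (hpd : p < (2 * (d : ℝ) - 2) / ((d : ℝ) + 1)) :
    p ≤ 2 ∧ 1 / ((d : ℝ) - 1) - (1 / p - 1 / 2) < 0 := by
  have hd' : (2 : ℝ) ≤ d := mod_cast hd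
  rw [lt_div_iff₀ (by linarith)] at hpd
  refine ⟨by nlinarith, ?_⟩
  have : 0 < (d : ℝ) - 1 := by linarith
  rw [show 1 / ((d : ℝ) - 1) - (1 / p - 1 / 2)
    = (p * (d + 1) - (2 * d - 2)) / (2 * p * (d - 1)) by field_simp; ring]
  exact div_neg_of_neg_of_pos (by linarith) (by positivity)

namespace Admissible

lemma continuous_sum_mul_wave (hψ : Admissible d ψ₀) (A : Finset (Ed d × ℝ)) (c : Ed d × ℝ → ℂ) :
    Continuous fun x ↦ ∑ a ∈ A, c a * wave d ψ₀ a x :=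
  continuous_finsetSum _ fun a _ ↦ continuous_const.mul (hψ.continuous_wave a)

lemma support_sum_mul_wave_subset (hψ : Admissible d ψ₀) {A : Finset (Ed d × ℝ)}
    (hA : ∀ a ∈ A, 0 ≤ a.2) (c : Ed d × ℝ → ℂ) :
    Function.support (fun x ↦ ∑ a ∈ A, c a * wave d ψ₀ a x) ⊆ ⋃ a ∈ A, sphereShell a 1 := by
  intro x hx
  obtain ⟨a, ha, hax⟩ := Finset.exists_ne_zero_of_sum_ne_zero hx
  have hnear := hψ.abs_norm_sub_abs_le_of_wave_ne_zero (right_ne_zero_of_mul hax)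
  rw [abs_of_nonneg (hA a ha)] at hnear
  exact mem_biUnion (Finset.mem_coe.2 ha) (hnear.trans (by norm_num))

lemma eLpNorm_two_sum_mul_wave (hψ : Admissible d ψ₀) (A : Finset (Ed d × ℝ))
    (c : Ed d × ℝ → ℂ) :
    eLpNorm (fun x ↦ ∑ a ∈ A, c a * wave d ψ₀ a x) 2 volume
      = ENNReal.ofReal ‖∑ a ∈ A, c a • hψ.waveL2 a‖ := by
  have hae : (fun x ↦ ∑ a ∈ A, c a * wave d ψ₀ a x) =ᵐ[volume] ↑(∑ a ∈ A, c a • hψ.waveL2 a) := by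
    have hterm : ∀ᵐ x, ∀ a ∈ A, (c a • hψ.waveL2 a) x = c a * wave d ψ₀ a x := by
      refine (Filter.eventually_all_finset A).2 fun a _ ↦ ?_
      filter_upwards [Lp.coeFn_smul (c a) (hψ.waveL2 a), (hψ.memLp_wave a).coeFn_toLp]
        with x hsmul hwave
      rw [hsmul, Pi.smul_apply, smul_eq_mul, waveL2, hwave]
    filter_upwards [Lp.coeFn_finsetSum A fun a ↦ c a • hψ.waveL2 a, hterm] with x hsum hx
    rw [hsum, Finset.sum_apply, Finset.sum_congr rfl hx]
  rw [eLpNorm_congr_ae hae, Lp.norm_def, ENNReal.ofReal_toReal (Lp.eLpNorm_ne_top _)]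

lemma exists_eLpNorm_sum_densityLevel_le (hψ : Admissible d ψ₀) (hd : 4 ≤ d) {p : ℝ}
    (hp1 : 1 ≤ p) (hp2 : p ≤ 2) : ∃ K : ℝ, 0 < K ∧
    ∀ {A : Finset (Ed d × ℝ)} {c : Ed d × ℝ → ℂ} (κ : ℕ),
      UnitSeparated A → (∀ a ∈ A, 1 ≤ a.2) → (∀ a, ‖c a‖ ≤ 1) →
      eLpNorm (fun x ↦ ∑ a ∈ A with densityLevel A a = κ, c a * wave d ψ₀ a x)
          (ENNReal.ofReal p) volume
        ≤ ENNReal.ofReal (K * ((κ + 1) * (2 ^ (1 / ((d : ℝ) - 1) - (1 / p - 1 / 2))) ^ κ)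
          * (∑ a ∈ A, a.2 ^ (d - 1)) ^ (1 / p)) := by
  obtain ⟨C, hC⟩ := hψ.exists_sphereAtomBounds_waveL2 (by lia)
  obtain ⟨K₁, hK₁, hL2⟩ := SphereAtomBounds.exists_norm_sum_sq_le_mul_sum_pow
    (H := Lp ℂ 2 (volume : Measure (Ed d))) hd
  obtain ⟨K₂, hK₂, hvol⟩ := exists_volume_biUnion_sphereShell_densityLevel_le (d := d) (by lia)
  have hC0 := hC.pos
  have he : 0 ≤ 1 / p - 1 / 2 := sub_nonneg.2 (one_div_le_one_div_of_le (by linarith) hp2)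
  refine ⟨(K₁ * C) ^ (1 / 2 : ℝ) * K₂ ^ (1 / p - 1 / 2) * 2 ^ (1 / ((d : ℝ) - 1)), by positivity,
    fun {A c} κ hA hA1 hc ↦ ?_⟩
  set B := A.filter (densityLevel A · = κ)
  set S := ∑ a ∈ A, a.2 ^ (d - 1)
  have hBA : B ⊆ A := Finset.filter_subset _ _
  have hnonneg : ∀ a ∈ A, 0 ≤ a.2 ^ (d - 1) := fun a ha ↦ pow_nonneg (by linarith [hA1 a ha]) _
  have hS : 0 ≤ S := Finset.sum_nonneg hnonneg
  have hnorm : eLpNorm (fun x ↦ ∑ a ∈ B, c a * wave d ψ₀ a x) 2 volume ≤ ENNReal.ofReal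
      ((K₁ * C * (κ + 1) * (2 ^ (κ + 1)) ^ (2 * (1 / ((d : ℝ) - 1))) * S) ^ (1 / 2 : ℝ)) := by
    rw [hψ.eLpNorm_two_sum_mul_wave, ← Real.sqrt_eq_rpow, mul_one_div]
    refine ENNReal.ofReal_le_ofReal (Real.le_sqrt_of_sq_le ((hL2 (hC.smul hc) (hA.mono hBA)
      (fun a ha ↦ hA1 a (hBA ha)) (densityLE_filter_densityLevel A κ)).trans ?_))
    gcongr
    exact Finset.sum_le_sum_of_subset_of_nonneg hBA fun a ha _ ↦ hnonneg a ha
  refine (eLpNorm_le_eLpNorm_mul_measure_rpow_of_support_subset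
    (ENNReal.ofReal_le_of_le_toReal (by simpa using hp2) : ENNReal.ofReal p ≤ 2)
    (hψ.continuous_sum_mul_wave B c).aestronglyMeasurable (hψ.support_sum_mul_wave_subset
      (fun a ha ↦ by linarith [hA1 a (hBA ha)]) c)).trans ?_
  rw [ENNReal.toReal_ofReal (by linarith), ENNReal.toReal_ofNat]
  refine (mul_le_mul' hnorm (ENNReal.rpow_le_rpow (hvol κ hA1) he)).trans ?_
  rw [ENNReal.ofReal_rpow_of_nonneg (by positivity) he, ← ENNReal.ofReal_mul (by positivity)]
  refine ENNReal.ofReal_le_ofReal ((mul_rpow_half_mul_mul_rpow_le (by positivity) hK₂.le hS he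
    κ).trans_eq ?_)
  rw [sub_add_cancel]

lemma exists_eLpNorm_sum_mul_wave_le (hψ : Admissible d ψ₀) (hd : 4 ≤ d) {p : ℝ} (hp1 : 1 ≤ p)
    (hpd : p < (2 * (d : ℝ) - 2) / ((d : ℝ) + 1)) : ∃ K : ℝ, 0 < K ∧
    ∀ {A : Finset (Ed d × ℝ)} {c : Ed d × ℝ → ℂ},
      UnitSeparated A → (∀ a ∈ A, 1 ≤ a.2) → (∀ a, ‖c a‖ ≤ 1) →
      eLpNorm (fun x ↦ ∑ a ∈ A, c a * wave d ψ₀ a x) (ENNReal.ofReal p) volume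
        ≤ ENNReal.ofReal (K * (∑ a ∈ A, a.2 ^ (d - 1)) ^ (1 / p)) := by
  obtain ⟨hp2, hexp⟩ := le_two_and_one_div_sub_neg (by lia) hp1 hpd
  obtain ⟨K, hK, hlevel⟩ := hψ.exists_eLpNorm_sum_densityLevel_le hd hp1 hp2
  obtain ⟨Z, hZ, hsum⟩ := exists_sum_add_one_mul_pow_le (by positivity)
    (Real.rpow_lt_one_of_one_lt_of_neg one_lt_two hexp)
  refine ⟨K * Z, by positivity, fun {A c} hA hA1 hc ↦ ?_⟩
  have hS : 0 ≤ ∑ a ∈ A, a.2 ^ (d - 1) :=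
    Finset.sum_nonneg fun a ha ↦ pow_nonneg (by linarith [hA1 a ha]) _
  have hsplit : (fun x ↦ ∑ a ∈ A, c a * wave d ψ₀ a x) = ∑ κ ∈ A.image (densityLevel A),
      fun x ↦ ∑ a ∈ A with densityLevel A a = κ, c a * wave d ψ₀ a x := by
    funext x
    rw [Finset.sum_apply,
      Finset.sum_fiberwise_of_maps_to fun a ha ↦ Finset.mem_image_of_mem _ ha]
  calc eLpNorm (fun x ↦ ∑ a ∈ A, c a * wave d ψ₀ a x) (ENNReal.ofReal p) volume
      ≤ ∑ κ ∈ A.image (densityLevel A), eLpNorm (fun x ↦ ∑ a ∈ A with densityLevel A a = κ,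
          c a * wave d ψ₀ a x) (ENNReal.ofReal p) volume := by
        rw [hsplit]
        exact eLpNorm_sum_le
          (fun κ _ ↦ (hψ.continuous_sum_mul_wave _ c).aestronglyMeasurable)
          (ENNReal.one_le_ofReal.2 hp1)
    _ ≤ _ := Finset.sum_le_sum fun κ _ ↦ hlevel κ hA hA1 hc
    _ = ENNReal.ofReal (K * (∑ κ ∈ A.image (densityLevel A),
          ((κ : ℝ) + 1) * (2 ^ (1 / ((d : ℝ) - 1) - (1 / p - 1 / 2))) ^ κ)
            * (∑ a ∈ A, a.2 ^ (d - 1)) ^ (1 / p)) := by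
        rw [← ENNReal.ofReal_sum_of_nonneg fun κ _ ↦ by positivity, ← Finset.sum_mul,
          ← Finset.mul_sum]
    _ ≤ _ := by
        gcongr
        exact hsum _

end Admissible

end DiscreteInequality

section Lattice

variable {E ι : Type*} [NormedAddCommGroup E] [NormedSpace ℝ E] [Finite ι] (b : Module.Basis ι ℝ E)

lemma exists_finset_span_forall_notMem_lt_norm_vadd (N : ℝ) :
    ∃ L : Finset (Submodule.span ℤ (range b)),
      ∀ g ∉ L, ∀ v ∈ ZSpan.fundamentalDomain b, N < ‖-g +ᵥ v‖ := by
  have : FiniteDimensional ℝ E := b.finiteDimensional_of_finite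
  have : ProperSpace E := FiniteDimensional.proper_real E
  obtain ⟨K, hK⟩ := isBounded_iff_forall_norm_le.1 (ZSpan.fundamentalDomain_isBounded b)
  have hfin : (Subtype.val ⁻¹' closedBall (0 : E) (N + K) :
      Set (Submodule.span ℤ (range b))).Finite :=
    ((ZSpan.setFinite_inter b isBounded_closedBall).preimage Subtype.val_injective.injOn).subset
      fun g hg ↦ ⟨hg, g.2⟩
  refine ⟨hfin.toFinset, fun g hg v hv ↦ ?_⟩
  have hgK : N + K < ‖(g : E)‖ := by simpa using hg
  have htri : ‖(g : E)‖ ≤ ‖v‖ + ‖-g +ᵥ v‖ := by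
    rw [show (g : E) = v - (-(g : E) + v) by abel]
    exact norm_sub_le _ _
  linarith [hK v hv]

variable [MeasurableSpace E] [BorelSpace E] (μ : Measure E) [μ.IsAddLeftInvariant]

instance vaddInvariantMeasure_span : VAddInvariantMeasure (Submodule.span ℤ (range b)) E μ :=
  ⟨fun g s _ ↦ measure_preimage_add μ (g : E) s⟩

lemma integral_eq_setIntegral_fundamentalDomain_sum {F : Type*} [NormedAddCommGroup F]
    [NormedSpace ℝ F] {f : E → F} (hf : Integrable f μ) {L : Finset (Submodule.span ℤ (range b))}
    (hL : ∀ g ∉ L, ∀ v ∈ ZSpan.fundamentalDomain b, f (-g +ᵥ v) = 0) :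
    ∫ v, f v ∂μ = ∫ v in ZSpan.fundamentalDomain b, ∑ g ∈ L, f (-g +ᵥ v) ∂μ := by
  have hint (g : Submodule.span ℤ (range b)) : Integrable (fun v ↦ f (-g +ᵥ v)) μ :=
    hf.comp_add_left (-(g : E))
  rw [(ZSpan.isAddFundamentalDomain b μ).integral_eq_tsum' f hf, tsum_eq_sum (s := L),
    integral_finsetSum _ fun g _ ↦ (hint g).integrableOn]
  exact fun g hg ↦ setIntegral_eq_zero_of_forall_eq_zero (hL g hg)

lemma setLIntegral_fundamentalDomain_sum_le {f : E → ℝ≥0∞} (hf : Measurable f)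
    (L : Finset (Submodule.span ℤ (range b))) :
    ∫⁻ v in ZSpan.fundamentalDomain b, ∑ g ∈ L, f (-g +ᵥ v) ∂μ ≤ ∫⁻ v, f v ∂μ := by
  have hmeas (g : Submodule.span ℤ (range b)) : Measurable fun v ↦ f (-g +ᵥ v) :=
    hf.comp (measurable_const_add (-(g : E)))
  rw [(ZSpan.isAddFundamentalDomain b μ).lintegral_eq_tsum' f,
    lintegral_finsetSum _ fun g _ ↦ hmeas g]
  exact ENNReal.sum_le_tsum L

end Lattice

section RestrictedInequality

/-- The standard basis of `ℝ^d × ℝ`; its `ℤ`-span is the integer lattice. -/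
def standardBasis (d : ℕ) : Module.Basis (Fin d ⊕ Unit) ℝ (Ed d × ℝ) :=
  (EuclideanSpace.basisFun (Fin d) ℝ).toBasis.prod (Module.Basis.singleton Unit ℝ)

variable {d : ℕ}

lemma one_le_norm_of_mem_span_standardBasis {g : Ed d × ℝ}
    (hg : g ∈ Submodule.span ℤ (range (standardBasis d))) :
    (g.1 ≠ 0 → 1 ≤ ‖g.1‖) ∧ (g.2 ≠ 0 → 1 ≤ ‖g.2‖) := by
  have hint := ((standardBasis d).mem_span_iff_repr_mem ℤ g).1 hg
  have one_le {x : ℝ} (hx : x ∈ range (algebraMap ℤ ℝ)) (hx0 : x ≠ 0) : 1 ≤ ‖x‖ := by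
    obtain ⟨z, rfl⟩ := hx
    rw [eq_intCast, Real.norm_eq_abs]
    exact mod_cast Int.one_le_abs (by simpa using hx0)
  refine ⟨fun h₁ ↦ ?_, one_le (by simpa [standardBasis] using hint (Sum.inr ()))⟩
  obtain ⟨i, hi⟩ : ∃ i, g.1 i ≠ 0 := by
    by_contra! h
    exact h₁ (PiLp.ext h)
  exact (one_le (by simpa [standardBasis] using hint (Sum.inl i)) hi).trans
    (PiLp.norm_apply_le g.1 i)

lemma unitSeparated_of_sub_mem_span {A : Finset (Ed d × ℝ)}
    (hA : ∀ a ∈ A, ∀ b ∈ A, a - b ∈ Submodule.span ℤ (range (standardBasis d))) :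
    UnitSeparated A := by
  constructor
  all_goals
    simp only [Set.Pairwise, Finset.coe_image, forall_mem_image, dist_eq_norm]
    intro a ha b hb hab
  · exact (one_le_norm_of_mem_span_standardBasis (hA a ha b hb)).1 (sub_ne_zero.2 hab)
  · exact (one_le_norm_of_mem_span_standardBasis (hA a ha b hb)).2 (sub_ne_zero.2 hab)

lemma eLpNorm_ofReal_rpow {α E : Type*} [MeasurableSpace α] [NormedAddCommGroup E]
    (μ : Measure α) (f : α → E) {p : ℝ} (hp : 0 < p) :
    eLpNorm f (ENNReal.ofReal p) μ ^ p = ∫⁻ x, ‖f x‖ₑ ^ p ∂μ := by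
  have := eLpNorm_nnreal_pow_eq_lintegral (f := f) (μ := μ) (Real.toNNReal_pos.2 hp).ne'
  rwa [Real.coe_toNNReal p hp.le] at this

lemma lintegral_enorm_rpow_le_of_eLpNorm_le {α E : Type*} [MeasurableSpace α]
    [NormedAddCommGroup E] (μ : Measure α) {f : α → E} {p K S : ℝ} (hp : 0 < p) (hK : 0 ≤ K)
    (hS : 0 ≤ S) (hf : eLpNorm f (ENNReal.ofReal p) μ ≤ ENNReal.ofReal (K * S ^ (1 / p))) :
    ∫⁻ x, ‖f x‖ₑ ^ p ∂μ ≤ ENNReal.ofReal (K ^ p) * ENNReal.ofReal S := by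
  calc ∫⁻ x, ‖f x‖ₑ ^ p ∂μ
      ≤ ENNReal.ofReal (K * S ^ (1 / p)) ^ p := by rw [← eLpNorm_ofReal_rpow μ f hp]; gcongr
    _ = ENNReal.ofReal (K ^ p) * ENNReal.ofReal S := by
        rw [ENNReal.ofReal_rpow_of_nonneg (by positivity) hp.le, Real.mul_rpow hK (by positivity),
          ← Real.rpow_mul hS, one_div_mul_cancel hp.ne', Real.rpow_one,
          ENNReal.ofReal_mul (by positivity)]

lemma enorm_integral_rpow_le {α E : Type*} [MeasurableSpace α] [NormedAddCommGroup E]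
    [NormedSpace ℝ E] (μ : Measure α) {f : α → E} (hf : AEStronglyMeasurable f μ) {p : ℝ}
    (hp : 1 ≤ p) : ‖∫ x, f x ∂μ‖ₑ ^ p ≤ (∫⁻ x, ‖f x‖ₑ ^ p ∂μ) * μ univ ^ (p - 1) := by
  have hp0 : 0 < p := by linarith
  have hHolder : ‖∫ x, f x ∂μ‖ₑ ≤ eLpNorm f (ENNReal.ofReal p) μ * μ univ ^ (1 - 1 / p) := by
    refine (enorm_integral_le_lintegral_enorm f).trans ?_
    rw [← eLpNorm_one_eq_lintegral_enorm]
    simpa [ENNReal.toReal_ofReal hp0.le] using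
      eLpNorm_le_eLpNorm_mul_rpow_measure_univ (ENNReal.one_le_ofReal.2 hp) hf
  calc ‖∫ x, f x ∂μ‖ₑ ^ p
      ≤ (eLpNorm f (ENNReal.ofReal p) μ * μ univ ^ (1 - 1 / p)) ^ p := by gcongr
    _ = (∫⁻ x, ‖f x‖ₑ ^ p ∂μ) * μ univ ^ (p - 1) := by
        rw [ENNReal.mul_rpow_of_nonneg _ _ hp0.le, eLpNorm_ofReal_rpow μ f hp0, ← ENNReal.rpow_mul,
          sub_mul, one_mul, one_div_mul_cancel hp0.ne']

/-- The superposition `x ↦ ∫ h(y, r) F_{y,r}(x) d(y, r)` of the functions `F_{y,r}`. -/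
def waveSuperposition (d : ℕ) (ψ₀ : Ed d → ℂ) (h : Ed d × ℝ → ℂ) (x : Ed d) : ℂ :=
  ∫ v, h v * wave d ψ₀ v x

/-- The measure `r ^ (d - 1) dy dr` on `ℝ^d × ℝ`; negative values of the density count as zero. -/
def radialMeasure (d : ℕ) : Measure (Ed d × ℝ) :=
  volume.withDensity fun v ↦ ENNReal.ofReal (v.2 ^ (d - 1))

lemma measurable_ofReal_snd_pow (n : ℕ) :
    Measurable fun v : Ed d × ℝ ↦ ENNReal.ofReal (v.2 ^ n) :=
  (measurable_snd.pow_const n).ennreal_ofReal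

namespace Admissible

variable {ψ₀ : Ed d → ℂ}

lemma measurable_mul_wave (hψ : Admissible d ψ₀) {h : Ed d × ℝ → ℂ} (hm : Measurable h) :
    Measurable fun z : (Ed d × ℝ) × Ed d ↦ h z.1 * wave d ψ₀ z.1 z.2 :=
  (hm.comp measurable_fst).mul hψ.continuous_uncurry_wave.measurable

lemma integrable_mul_wave (hψ : Admissible d ψ₀) (hd : 3 ≤ d) {h : Ed d × ℝ → ℂ}
    (hm : Measurable h) {B : ℝ} (hB : ∀ v, ‖h v‖ ≤ B) (hr : ∀ v, h v ≠ 0 → 1 ≤ v.2)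
    (hs : Bornology.IsBounded (Function.support h)) (x : Ed d) :
    Integrable fun v ↦ h v * wave d ψ₀ v x := by
  obtain ⟨C, -, hC⟩ := hψ.exists_norm_wave_le hd
  have hsupp : Function.support (fun v ↦ h v * wave d ψ₀ v x) ⊆ Function.support h :=
    fun v ↦ left_ne_zero_of_mul
  refine (integrableOn_iff_integrable_of_support_subset hsupp).1 <|
    Measure.integrableOn_of_bounded (M := B * C) hs.measure_lt_top.ne
      ((hψ.measurable_mul_wave hm).comp measurable_prodMk_right).aestronglyMeasurable ?_
  refine ae_restrict_of_forall_mem (measurableSet_support hm) fun v hv ↦ ?_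
  rw [norm_mul]
  exact mul_le_mul (hB v) (hC v (hr v hv) x) (norm_nonneg _) ((norm_nonneg _).trans (hB v))

lemma exists_lintegral_enorm_sum_vadd_rpow_le (hψ : Admissible d ψ₀) (hd : 4 ≤ d) {p : ℝ}
    (hp1 : 1 ≤ p) (hpd : p < (2 * (d : ℝ) - 2) / ((d : ℝ) + 1)) :
    ∃ C : ℝ≥0, ∀ {h : Ed d × ℝ → ℂ}, (∀ v, ‖h v‖ ≤ 1) → (∀ v, h v ≠ 0 → 1 ≤ v.2) →
      ∀ (L : Finset (Submodule.span ℤ (range (standardBasis d)))) (v : Ed d × ℝ),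
        ∫⁻ x, ‖∑ g ∈ L, h (-g +ᵥ v) * wave d ψ₀ (-g +ᵥ v) x‖ₑ ^ p ≤
          C * ∑ g ∈ L, (Function.support h).indicator
            (fun w ↦ ENNReal.ofReal (w.2 ^ (d - 1))) (-g +ᵥ v) := by
  classical
  obtain ⟨K, hK0, hK⟩ := hψ.exists_eLpNorm_sum_mul_wave_le hd hp1 hpd
  have hp0 : 0 < p := by linarith
  refine ⟨(K ^ p).toNNReal, fun {h} hB hr L v ↦ ?_⟩
  let τ : Submodule.span ℤ (range (standardBasis d)) → Ed d × ℝ := fun g ↦ -g +ᵥ v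
  let A : Finset (Ed d × ℝ) := {a ∈ L.image τ | h a ≠ 0}
  have hAr : ∀ a ∈ A, 1 ≤ a.2 := fun a ha ↦ hr a (Finset.mem_filter.1 ha).2
  have hnonneg : ∀ a ∈ A, 0 ≤ a.2 ^ (d - 1) := fun a ha ↦ pow_nonneg (by linarith [hAr a ha]) _
  have hinj : InjOn τ L := fun g _ g' _ hgg' ↦ neg_injective (Subtype.ext (add_right_cancel hgg'))
  have hsep : UnitSeparated A := by
    refine unitSeparated_of_sub_mem_span fun a ha b hb ↦ ?_
    obtain ⟨g, -, rfl⟩ := Finset.mem_image.1 (Finset.mem_filter.1 ha).1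
    obtain ⟨g', -, rfl⟩ := Finset.mem_image.1 (Finset.mem_filter.1 hb).1
    rw [show τ g - τ g' = -g - -g' from add_sub_add_right_eq_sub _ _ v]
    exact Submodule.sub_mem _ (-g).2 (-g').2
  have hsum {M : Type} [AddCommMonoid M] (f : Ed d × ℝ → M) :
      ∑ a ∈ A, f a = ∑ g ∈ L, (Function.support h).indicator f (-g +ᵥ v) := by
    simp only [A, Finset.sum_filter, Finset.sum_image hinj, indicator_apply, Function.mem_support]
    rfl
  have hfun (x : Ed d) : ∑ g ∈ L, h (-g +ᵥ v) * wave d ψ₀ (-g +ᵥ v) x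
      = ∑ a ∈ A, h a * wave d ψ₀ a x := by
    refine ((hsum _).trans (Finset.sum_congr rfl fun g _ ↦ ?_)).symm
    exact congrFun (indicator_eq_self.2 fun a ↦ left_ne_zero_of_mul) (-g +ᵥ v)
  simp_rw [hfun, ← hsum]
  rw [← ENNReal.ofReal_sum_of_nonneg hnonneg]
  exact lintegral_enorm_rpow_le_of_eLpNorm_le volume hp0 hK0.le (Finset.sum_nonneg hnonneg)
    (hK hsep hAr hB)

lemma exists_lintegral_enorm_waveSuperposition_rpow_le_of_norm_le_one (hψ : Admissible d ψ₀)
    (hd : 4 ≤ d) {p : ℝ} (hp1 : 1 ≤ p) (hpd : p < (2 * (d : ℝ) - 2) / ((d : ℝ) + 1)) :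
    ∃ C : ℝ≥0, ∀ {h : Ed d × ℝ → ℂ}, Measurable h → (∀ v, ‖h v‖ ≤ 1) →
      (∀ v, h v ≠ 0 → 1 ≤ v.2) → Bornology.IsBounded (Function.support h) →
        ∫⁻ x, ‖waveSuperposition d ψ₀ h x‖ₑ ^ p ≤
          C * radialMeasure d (Function.support h) := by
  obtain ⟨C, hC⟩ := hψ.exists_lintegral_enorm_sum_vadd_rpow_le hd hp1 hpd
  let D := ZSpan.fundamentalDomain (standardBasis d)
  have : (volume : Measure (Ed d × ℝ)).IsAddLeftInvariant := by
    rw [Measure.volume_eq_prod]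
    infer_instance
  have hDtop : volume D ^ (p - 1) ≠ ⊤ := ENNReal.rpow_ne_top_of_nonneg (by linarith)
    (ZSpan.fundamentalDomain_isBounded _).measure_lt_top.ne
  refine ⟨C * (volume D ^ (p - 1)).toNNReal, fun {h} hm hB hr hs ↦ ?_⟩
  obtain ⟨N, hN⟩ := isBounded_iff_forall_norm_le.1 hs
  obtain ⟨L, hL⟩ := exists_finset_span_forall_notMem_lt_norm_vadd (standardBasis d) N
  let S : Ed d × ℝ → Ed d → ℂ := fun v x ↦ ∑ g ∈ L, h (-g +ᵥ v) * wave d ψ₀ (-g +ᵥ v) x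
  have hS : Measurable ↿S := Finset.measurable_fun_sum _ fun g _ ↦ (hψ.measurable_mul_wave hm).comp
    ((measurable_fst.const_add (-(g : Ed d × ℝ))).prodMk measurable_snd)
  have hT (x : Ed d) : waveSuperposition d ψ₀ h x = ∫ v in D, S v x := by
    refine integral_eq_setIntegral_fundamentalDomain_sum _ volume
      (hψ.integrable_mul_wave (by lia) hm hB hr hs x) fun g hg v hv ↦ ?_
    rw [mul_eq_zero_of_left]
    by_contra hne
    exact (hL g hg v hv).not_ge (hN _ hne)
  calc ∫⁻ x, ‖waveSuperposition d ψ₀ h x‖ₑ ^ p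
      ≤ ∫⁻ x, (∫⁻ v in D, ‖S v x‖ₑ ^ p) * volume D ^ (p - 1) := by
        refine lintegral_mono fun x ↦ ?_
        have := enorm_integral_rpow_le (volume.restrict D) (f := fun v ↦ S v x)
          (hS.comp measurable_prodMk_right).aestronglyMeasurable hp1
        rwa [← hT, Measure.restrict_apply_univ] at this
    _ = (∫⁻ v in D, ∫⁻ x, ‖S v x‖ₑ ^ p) * volume D ^ (p - 1) := by
        rw [lintegral_mul_const' _ _ hDtop, lintegral_lintegral_swap]
        exact ((hS.comp measurable_swap).enorm.pow_const p).aemeasurable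
    _ ≤ (C * radialMeasure d (Function.support h)) * volume D ^ (p - 1) := by
        rw [radialMeasure, withDensity_apply _ (measurableSet_support hm),
          ← lintegral_indicator (measurableSet_support hm)]
        refine mul_le_mul_left ((lintegral_mono fun v ↦ hC hB hr L v).trans ?_) _
        rw [lintegral_const_mul' _ _ ENNReal.coe_ne_top]
        refine mul_le_mul_right ?_ _
        exact setLIntegral_fundamentalDomain_sum_le _ volume
          ((measurable_ofReal_snd_pow _).indicator (measurableSet_support hm)) L
    _ = _ := by rw [ENNReal.coe_mul, ENNReal.coe_toNNReal hDtop]; ring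

end Admissible

end RestrictedInequality

section Interpolation

lemma summable_pow_natAbs {q : ℝ≥0} (hq : q < 1) : Summable fun k : ℤ ↦ q ^ k.natAbs := by
  rw [← NNReal.summable_coe]
  push_cast
  have hgeom : Summable fun n : ℕ ↦ (q : ℝ) ^ n := summable_geometric_of_lt_one q.2 hq
  exact .of_nat_of_neg (by simpa using hgeom) (by simpa using hgeom)

lemma min_rpow_le_mul_pow_natAbs {α β : ℝ} (hα : 0 < α) (hβ : β < 0) {t : ℝ≥0} {j : ℤ}
    (hjt : 2 ^ j ≤ t) (htj : t ≤ 2 ^ (j + 1)) :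
    min (t ^ α) (t ^ β) ≤ 2 ^ α * max (2 ^ (-α)) (2 ^ β) ^ j.natAbs := by
  obtain ⟨n, rfl | rfl⟩ := j.eq_nat_or_neg
  · calc min (t ^ α) (t ^ β)
        ≤ (2 ^ n) ^ β := (min_le_right _ _).trans
          (NNReal.rpow_le_rpow_of_nonpos (by positivity) (mod_cast hjt) hβ.le)
      _ = (2 ^ β) ^ n := by
          rw [← NNReal.rpow_natCast, ← NNReal.rpow_mul, mul_comm, NNReal.rpow_mul_natCast]
      _ ≤ max (2 ^ (-α)) (2 ^ β) ^ n := by gcongr; exact le_max_right _ _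
      _ ≤ 2 ^ α * max (2 ^ (-α)) (2 ^ β) ^ n :=
          le_mul_of_one_le_left' (NNReal.one_le_rpow one_le_two hα.le)
  · calc min (t ^ α) (t ^ β)
        ≤ (2 * (2 ^ n)⁻¹) ^ α := by
          refine (min_le_left _ _).trans (NNReal.rpow_le_rpow (htj.trans_eq ?_) hα.le)
          rw [zpow_add_one₀ two_ne_zero, zpow_neg, zpow_natCast, mul_comm]
      _ = 2 ^ α * (2 ^ (-α)) ^ n := by
          rw [NNReal.mul_rpow, NNReal.inv_rpow, ← NNReal.rpow_neg, ← NNReal.rpow_natCast,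
            ← NNReal.rpow_mul, mul_comm (n : ℝ), NNReal.rpow_mul_natCast]
      _ ≤ 2 ^ α * max (2 ^ (-α)) (2 ^ β) ^ (-(n : ℤ)).natAbs := by
          rw [Int.natAbs_neg, Int.natAbs_natCast]
          gcongr
          exact le_max_left _ _

lemma exists_sum_min_rpow_le {α β : ℝ} (hα : 0 < α) (hβ : β < 0) :
    ∃ W : ℝ≥0, ∀ (K : Finset ℤ) {R : ℝ≥0}, 0 < R →
      ∑ k ∈ K, min ((R / 2 ^ k) ^ α) ((R / 2 ^ k) ^ β) ≤ W := by
  let q : ℝ≥0 := max (2 ^ (-α)) (2 ^ β)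
  have hq : q < 1 := max_lt (NNReal.rpow_lt_one_of_one_lt_of_neg one_lt_two (by linarith))
    (NNReal.rpow_lt_one_of_one_lt_of_neg one_lt_two hβ)
  refine ⟨2 ^ α * ∑' j : ℤ, q ^ j.natAbs, fun K R hR ↦ ?_⟩
  let m := Int.log 2 R
  have hterm (k : ℤ) :
      min ((R / 2 ^ k) ^ α) ((R / 2 ^ k) ^ β) ≤ 2 ^ α * q ^ (m - k).natAbs := by
    refine min_rpow_le_mul_pow_natAbs hα hβ ?_ ?_
    · rw [zpow_sub₀ two_ne_zero]
      gcongr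
      exact Int.zpow_log_le_self one_lt_two hR
    · rw [show m - k + 1 = m + 1 - k by ring, zpow_sub₀ two_ne_zero]
      gcongr
      exact (Int.lt_zpow_succ_log_self one_lt_two R).le
  calc ∑ k ∈ K, min ((R / 2 ^ k) ^ α) ((R / 2 ^ k) ^ β)
      ≤ 2 ^ α * ∑ k ∈ K, q ^ (m - k).natAbs := by
        rw [Finset.mul_sum]
        exact Finset.sum_le_sum fun k _ ↦ hterm k
    _ = 2 ^ α * ∑ j ∈ K.map (Equiv.subLeft m).toEmbedding, q ^ j.natAbs := by simp
    _ ≤ 2 ^ α * ∑' j : ℤ, q ^ j.natAbs := by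
        gcongr
        exact (summable_pow_natAbs hq).sum_le_tsum _ fun j _ ↦ zero_le

lemma le_mul_div_rpow_of_le {t u R : ℝ≥0} {p e : ℝ} (ht : 0 < t) (hR : 0 < R) (he : 0 < e)
    (h : t ^ p * u ^ e ≤ R ^ p) : t * u ≤ R * (R / t) ^ (p / e - 1) := by
  have hu : u ≤ (R / t) ^ (p / e) := by
    rw [div_eq_mul_inv p, NNReal.rpow_mul, NNReal.le_rpow_inv_iff he, NNReal.div_rpow]
    rwa [le_div_iff₀' (by positivity)]
  calc t * u ≤ t * (R / t) ^ (p / e) := by gcongr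
    _ = R * (R / t) ^ (p / e - 1) := by
        rw [NNReal.rpow_sub_one (by positivity)]
        field_simp

lemma exists_sum_two_zpow_mul_rpow_le {p₀ p p₁ : ℝ} (hp₀ : 0 < p₀) (h₀ : p₀ < p) (h₁ : p < p₁) :
    ∃ C : ℝ≥0, ∀ (K : Finset ℤ) (u : ℤ → ℝ≥0),
      (∑ k ∈ K, 2 ^ k * u k) ^ p ≤ C * ∑ k ∈ K, (2 ^ k) ^ p * (u k ^ p₀ + u k ^ p₁) := by
  have hp : 0 < p := hp₀.trans h₀
  have hp₁ : 0 < p₁ := hp.trans h₁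
  obtain ⟨W, hW⟩ := exists_sum_min_rpow_le (α := p / p₀ - 1) (β := p / p₁ - 1)
    (by rwa [sub_pos, one_lt_div hp₀]) (by rwa [sub_neg, div_lt_one hp₁])
  refine ⟨W ^ p, fun K u ↦ ?_⟩
  set S := ∑ k ∈ K, (2 ^ k) ^ p * (u k ^ p₀ + u k ^ p₁)
  have hSk : ∀ k ∈ K, (2 ^ k) ^ p * (u k ^ p₀ + u k ^ p₁) ≤ S := fun k hk ↦
    Finset.single_le_sum (f := fun k ↦ (2 ^ k) ^ p * (u k ^ p₀ + u k ^ p₁)) (by simp) hk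
  obtain hS | hS := eq_zero_or_pos S
  · have hu : ∀ k ∈ K, 2 ^ k * u k = 0 := fun k hk ↦ by
      have hk0 : 2 ^ k ≠ (0 : ℝ≥0) := by positivity
      simpa [hS, hk0, hp₀.ne', hp₁.ne', NNReal.rpow_eq_zero_iff] using hSk k hk
    rw [Finset.sum_eq_zero hu, NNReal.zero_rpow hp.ne']
    exact zero_le
  let R := S ^ p⁻¹
  have hR : 0 < R := NNReal.rpow_pos hS
  have hRp : R ^ p = S := NNReal.rpow_inv_rpow hp.ne' S
  have hmin : ∀ k ∈ K,
      2 ^ k * u k ≤ R * min ((R / 2 ^ k) ^ (p / p₀ - 1)) ((R / 2 ^ k) ^ (p / p₁ - 1)) := by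
    intro k hk
    rw [mul_min]
    refine le_min (le_mul_div_rpow_of_le (by positivity) hR hp₀ ?_)
      (le_mul_div_rpow_of_le (by positivity) hR hp₁ ?_)
    · exact hRp ▸ (mul_le_mul_right le_self_add _).trans (hSk k hk)
    · exact hRp ▸ (mul_le_mul_right le_add_self _).trans (hSk k hk)
  calc (∑ k ∈ K, 2 ^ k * u k) ^ p
      ≤ (R * W) ^ p := by
        gcongr
        refine (Finset.sum_le_sum hmin).trans ?_
        rw [← Finset.mul_sum]
        gcongr
        exact hW K hR
    _ = W ^ p * S := by rw [NNReal.mul_rpow, hRp, mul_comm]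

variable {E : Type*} [NormedAddCommGroup E] [NormedSpace ℝ E]

lemma exists_enorm_sum_two_zpow_smul_rpow_le {p₀ p p₁ : ℝ} (hp₀ : 0 < p₀) (h₀ : p₀ < p)
    (h₁ : p < p₁) :
    ∃ C : ℝ≥0, ∀ (K : Finset ℤ) (z : ℤ → E), ‖∑ k ∈ K, (2 : ℝ) ^ k • z k‖ₑ ^ p ≤
      C * ∑ k ∈ K, (2 ^ k) ^ p * (‖z k‖ₑ ^ p₀ + ‖z k‖ₑ ^ p₁) := by
  have hp : 0 < p := hp₀.trans h₀
  obtain ⟨C, hC⟩ := exists_sum_two_zpow_mul_rpow_le hp₀ h₀ h₁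
  refine ⟨C, fun K z ↦ ?_⟩
  have hnorm : ‖∑ k ∈ K, (2 : ℝ) ^ k • z k‖₊ ≤ ∑ k ∈ K, 2 ^ k * ‖z k‖₊ := by
    refine (nnnorm_sum_le _ _).trans_eq (Finset.sum_congr rfl fun k _ ↦ ?_)
    rw [nnnorm_smul, nnnorm_zpow, Real.nnnorm_ofNat]
  have hreal := (NNReal.rpow_le_rpow hnorm hp.le).trans (hC K fun k ↦ ‖z k‖₊)
  have hcast := ENNReal.coe_le_coe.2 hreal
  simp only [ENNReal.coe_mul, ENNReal.ofNNReal_finsetSum, ENNReal.coe_add,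
    ENNReal.coe_zpow two_ne_zero, ENNReal.coe_ofNat, ENNReal.coe_rpow_of_nonneg _ hp.le,
    ENNReal.coe_rpow_of_nonneg _ hp₀.le, ENNReal.coe_rpow_of_nonneg _ (hp.trans h₁).le] at hcast
  exact hcast

lemma exists_lintegral_enorm_sum_two_zpow_smul_rpow_le {α : Type*} [MeasurableSpace α]
    (μ : Measure α) {p₀ p p₁ : ℝ} (hp₀ : 0 < p₀) (h₀ : p₀ < p) (h₁ : p < p₁) :
    ∃ C : ℝ≥0, ∀ (K : Finset ℤ) {f : ℤ → α → E} {w : ℤ → ℝ≥0∞},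
      (∀ k, AEStronglyMeasurable (f k) μ) →
      (∀ k, ∫⁻ x, ‖f k x‖ₑ ^ p₀ ∂μ ≤ w k) → (∀ k, ∫⁻ x, ‖f k x‖ₑ ^ p₁ ∂μ ≤ w k) →
        ∫⁻ x, ‖∑ k ∈ K, (2 : ℝ) ^ k • f k x‖ₑ ^ p ∂μ ≤ C * ∑ k ∈ K, (2 ^ k) ^ p * w k := by
  obtain ⟨C, hC⟩ := exists_enorm_sum_two_zpow_smul_rpow_le (E := E) hp₀ h₀ h₁
  refine ⟨C * 2, fun K f w hf hw₀ hw₁ ↦ ?_⟩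
  have hmeas (k : ℤ) (e : ℝ) : AEMeasurable (fun x ↦ ‖f k x‖ₑ ^ e) μ := (hf k).enorm.pow_const e
  calc ∫⁻ x, ‖∑ k ∈ K, (2 : ℝ) ^ k • f k x‖ₑ ^ p ∂μ
      ≤ ∫⁻ x, C * ∑ k ∈ K, (2 ^ k) ^ p * (‖f k x‖ₑ ^ p₀ + ‖f k x‖ₑ ^ p₁) ∂μ :=
        lintegral_mono fun x ↦ hC K fun k ↦ f k x
    _ = C * ∑ k ∈ K, (2 ^ k) ^ p * (∫⁻ x, ‖f k x‖ₑ ^ p₀ ∂μ + ∫⁻ x, ‖f k x‖ₑ ^ p₁ ∂μ) := by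
        rw [lintegral_const_mul' _ _ ENNReal.coe_ne_top, lintegral_finsetSum' _ fun k _ ↦
          ((hmeas k p₀).fun_add (hmeas k p₁)).const_mul _]
        refine congrArg _ (Finset.sum_congr rfl fun k _ ↦ ?_)
        rw [lintegral_const_mul'' _ ((hmeas k p₀).fun_add (hmeas k p₁)),
          lintegral_add_left' (hmeas k p₀)]
    _ ≤ C * ∑ k ∈ K, (2 ^ k) ^ p * (w k + w k) := by gcongr; exacts [hw₀ _, hw₁ _]
    _ = (C * 2 : ℝ≥0) * ∑ k ∈ K, (2 ^ k) ^ p * w k := by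
        simp_rw [← two_mul, mul_left_comm _ (2 : ℝ≥0∞)]
        rw [← Finset.mul_sum, ENNReal.coe_mul, mul_assoc, ENNReal.coe_ofNat]

end Interpolation

section DyadicPiece

variable {α E : Type*} [NormedAddCommGroup E] [NormedSpace ℝ E]

/-- The part of `h` where `2 ^ (k - 1) < ‖h‖ ≤ 2 ^ k`, rescaled so that its norm is at most one. -/
def dyadicPiece (h : α → E) (k : ℤ) : α → E :=
  {v | ‖h v‖ ∈ Ioc (2 ^ (k - 1)) (2 ^ k)}.indicator fun v ↦ (2 : ℝ) ^ (-k) • h v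

variable {h : α → E} {k : ℤ} {v : α}

lemma support_dyadicPiece :
    Function.support (dyadicPiece h k) = {v | ‖h v‖ ∈ Ioc (2 ^ (k - 1)) (2 ^ k)} := by
  refine support_indicator.trans (inter_eq_left.2 fun v hv ↦ ?_)
  have hv0 : 0 < ‖h v‖ := lt_trans (by positivity) hv.1
  exact smul_ne_zero (by positivity) (norm_pos_iff.1 hv0)

lemma zpow_smul_dyadicPiece (hv : v ∈ Function.support (dyadicPiece h k)) :
    (2 : ℝ) ^ k • dyadicPiece h k v = h v := by
  rw [support_dyadicPiece] at hv
  rw [dyadicPiece, indicator_of_mem hv, zpow_neg, smul_inv_smul₀ (by positivity)]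

lemma mem_support_dyadicPiece_iff :
    v ∈ Function.support (dyadicPiece h k) ↔ h v ≠ 0 ∧ Int.clog 2 ‖h v‖ = k := by
  obtain hv | hv := eq_or_ne (h v) 0
  · simp [dyadicPiece, hv]
  rw [support_dyadicPiece]
  have hv0 : 0 < ‖h v‖ := norm_pos_iff.2 hv
  have hlow := Int.zpow_lt_iff_lt_clog one_lt_two hv0 (x := k - 1)
  have hupp := Int.le_zpow_iff_clog_le one_lt_two hv0 (x := k)
  push_cast at hlow hupp
  simp only [mem_ofPred_eq, mem_Ioc, hlow, hupp]
  grind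

lemma support_dyadicPiece_subset :
    Function.support (dyadicPiece h k) ⊆ Function.support h :=
  fun _ hv ↦ (mem_support_dyadicPiece_iff.1 hv).1

lemma norm_dyadicPiece_le_one : ‖dyadicPiece h k v‖ ≤ 1 := by
  by_cases hv : v ∈ Function.support (dyadicPiece h k)
  · refine le_of_mul_le_mul_left ?_ (show 0 < (2 : ℝ) ^ k by positivity)
    calc 2 ^ k * ‖dyadicPiece h k v‖ = ‖h v‖ := by
          rw [← zpow_smul_dyadicPiece hv, norm_smul, norm_zpow, Real.norm_ofNat]
      _ ≤ 2 ^ k * 1 := by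
          rw [support_dyadicPiece] at hv
          exact hv.2.trans_eq (mul_one _).symm
  · rw [Function.notMem_support.1 hv, norm_zero]
    exact zero_le_one

lemma sum_zpow_smul_dyadicPiece {K : Finset ℤ} (hK : h v ≠ 0 → Int.clog 2 ‖h v‖ ∈ K) :
    ∑ k ∈ K, (2 : ℝ) ^ k • dyadicPiece h k v = h v := by
  have hzero {k : ℤ} (hk : ¬(h v ≠ 0 ∧ Int.clog 2 ‖h v‖ = k)) : dyadicPiece h k v = 0 :=
    Function.notMem_support.1 (mem_support_dyadicPiece_iff.not.2 hk)
  obtain hv | hv := eq_or_ne (h v) 0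
  · rw [hv]
    exact Finset.sum_eq_zero fun k _ ↦ by rw [hzero fun hk ↦ hk.1 hv, smul_zero]
  rw [Finset.sum_eq_single_of_mem _ (hK hv)]
  · exact zpow_smul_dyadicPiece (mem_support_dyadicPiece_iff.2 ⟨hv, rfl⟩)
  · exact fun k _ hk ↦ by rw [hzero fun hvk ↦ hk hvk.2.symm, smul_zero]

variable [MeasurableSpace α] [MeasurableSpace E] [BorelSpace E]

lemma measurable_dyadicPiece (hm : Measurable h) (k : ℤ) : Measurable (dyadicPiece h k) :=
  (hm.const_smul _).indicator (hm.norm measurableSet_Ioc)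

lemma sum_zpow_rpow_mul_measure_support_dyadicPiece_le (μ : Measure α) (hm : Measurable h)
    (K : Finset ℤ) {p : ℝ} (hp : 0 ≤ p) :
    ∑ k ∈ K, (2 ^ k) ^ p * μ (Function.support (dyadicPiece h k)) ≤
      2 ^ p * ∫⁻ v, ‖h v‖ₑ ^ p ∂μ := by
  have hms (k : ℤ) : MeasurableSet (Function.support (dyadicPiece h k)) :=
    measurableSet_support (measurable_dyadicPiece hm k)
  have hdisj : (K : Set ℤ).PairwiseDisjoint fun k ↦ Function.support (dyadicPiece h k) :=
    fun k _ l _ hkl ↦ disjoint_left.2 fun v hvk hvl ↦ hkl <|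
      (mem_support_dyadicPiece_iff.1 hvk).2.symm.trans (mem_support_dyadicPiece_iff.1 hvl).2
  have hlow (k : ℤ) : ∀ v ∈ Function.support (dyadicPiece h k),
      ((2 : ℝ≥0∞) ^ k) ^ p ≤ 2 ^ p * ‖h v‖ₑ ^ p := by
    intro v hv
    rw [support_dyadicPiece] at hv
    have hnorm : (2 : ℝ≥0) ^ k ≤ 2 * ‖h v‖₊ := by
      rw [show k = 1 + (k - 1) by ring, zpow_one_add₀ two_ne_zero]
      gcongr
      exact hv.1.le
    rw [← ENNReal.mul_rpow_of_nonneg _ _ hp]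
    gcongr
    simpa [ENNReal.coe_zpow, enorm_eq_nnnorm] using ENNReal.coe_le_coe.2 hnorm
  calc ∑ k ∈ K, (2 ^ k) ^ p * μ (Function.support (dyadicPiece h k))
      = ∑ k ∈ K, ∫⁻ _ in Function.support (dyadicPiece h k), (2 ^ k) ^ p ∂μ := by
        simp_rw [setLIntegral_const]
    _ ≤ ∑ k ∈ K, ∫⁻ v in Function.support (dyadicPiece h k), 2 ^ p * ‖h v‖ₑ ^ p ∂μ :=
        Finset.sum_le_sum fun k _ ↦ setLIntegral_mono' (hms k) (hlow k)
    _ ≤ ∫⁻ v, 2 ^ p * ‖h v‖ₑ ^ p ∂μ := by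
        rw [← lintegral_biUnion_finset hdisj fun k _ ↦ hms k]
        exact setLIntegral_le_lintegral _ _
    _ = 2 ^ p * ∫⁻ v, ‖h v‖ₑ ^ p ∂μ :=
        lintegral_const_mul _ (hm.enorm.pow_const p)

end DyadicPiece

section BoundedInequality

namespace Admissible

variable {d : ℕ} {ψ₀ : Ed d → ℂ} {h : Ed d × ℝ → ℂ}

lemma measurable_waveSuperposition (hψ : Admissible d ψ₀) (hm : Measurable h) :
    Measurable (waveSuperposition d ψ₀ h) :=
  (hψ.measurable_mul_wave hm).stronglyMeasurable.integral_prod_left'.measurable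

lemma waveSuperposition_eq_sum_dyadicPiece (hψ : Admissible d ψ₀) (hd : 3 ≤ d)
    (hm : Measurable h) (hr : ∀ v, h v ≠ 0 → 1 ≤ v.2)
    (hs : Bornology.IsBounded (Function.support h)) {K : Finset ℤ}
    (hK : ∀ v, h v ≠ 0 → Int.clog 2 ‖h v‖ ∈ K) (x : Ed d) :
    waveSuperposition d ψ₀ h x =
      ∑ k ∈ K, (2 : ℝ) ^ k • waveSuperposition d ψ₀ (dyadicPiece h k) x := by
  have hint (k : ℤ) : Integrable fun v ↦ dyadicPiece h k v * wave d ψ₀ v x :=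
    hψ.integrable_mul_wave hd (measurable_dyadicPiece hm k) (fun _ ↦ norm_dyadicPiece_le_one)
      (fun v hv ↦ hr v (support_dyadicPiece_subset hv)) (hs.subset support_dyadicPiece_subset) x
  simp_rw [waveSuperposition, ← integral_smul]
  rw [← integral_finsetSum _ fun k _ ↦ (hint k).fun_smul _]
  simp_rw [← smul_mul_assoc, ← Finset.sum_mul, sum_zpow_smul_dyadicPiece (hK _)]

lemma exists_lintegral_enorm_waveSuperposition_rpow_le_of_norm_mem_Icc (hψ : Admissible d ψ₀)
    (hd : 4 ≤ d) {p : ℝ} (hp1 : 1 < p) (hpd : p < (2 * (d : ℝ) - 2) / ((d : ℝ) + 1)) :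
    ∃ C : ℝ≥0, ∀ {h}, Measurable h → (∀ v, h v ≠ 0 → 1 ≤ v.2) →
      Bornology.IsBounded (Function.support h) → ∀ {δ B : ℝ}, 0 < δ →
      (∀ v, h v ≠ 0 → ‖h v‖ ∈ Icc δ B) →
        ∫⁻ x, ‖waveSuperposition d ψ₀ h x‖ₑ ^ p ≤ C * ∫⁻ v, ‖h v‖ₑ ^ p ∂radialMeasure d := by
  obtain ⟨p₁, hpp₁, hp₁d⟩ := exists_between hpd
  obtain ⟨C₀, hC₀⟩ := hψ.exists_lintegral_enorm_waveSuperposition_rpow_le_of_norm_le_one hd le_rfl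
    (hp1.trans hpd)
  obtain ⟨C₁, hC₁⟩ := hψ.exists_lintegral_enorm_waveSuperposition_rpow_le_of_norm_le_one hd
    (hp1.trans hpp₁).le hp₁d
  obtain ⟨C, hC⟩ := exists_lintegral_enorm_sum_two_zpow_smul_rpow_le (E := ℂ)
    (volume : Measure (Ed d)) one_pos hp1 hpp₁
  refine ⟨C * (C₀ + C₁) * 2 ^ p, fun {h} hm hr hs {δ B} hδ hB ↦ ?_⟩
  let K := Finset.Icc (Int.clog 2 δ) (Int.clog 2 B)
  have hK : ∀ v, h v ≠ 0 → Int.clog 2 ‖h v‖ ∈ K := fun v hv ↦ Finset.mem_Icc.2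
    ⟨Int.clog_mono_right hδ (hB v hv).1, Int.clog_mono_right (norm_pos_iff.2 hv) (hB v hv).2⟩
  let ν (k : ℤ) : ℝ≥0∞ := radialMeasure d (Function.support (dyadicPiece h k))
  have hrk (k : ℤ) : ∀ v, dyadicPiece h k v ≠ 0 → 1 ≤ v.2 := fun v hv ↦
    hr v (support_dyadicPiece_subset hv)
  have hsk (k : ℤ) : Bornology.IsBounded (Function.support (dyadicPiece h k)) :=
    hs.subset support_dyadicPiece_subset
  calc ∫⁻ x, ‖waveSuperposition d ψ₀ h x‖ₑ ^ p
      = ∫⁻ x, ‖∑ k ∈ K, (2 : ℝ) ^ k • waveSuperposition d ψ₀ (dyadicPiece h k) x‖ₑ ^ p := by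
        simp_rw [hψ.waveSuperposition_eq_sum_dyadicPiece (by lia) hm hr hs hK]
    _ ≤ C * ∑ k ∈ K, (2 ^ k) ^ p * ((C₀ + C₁) * ν k) := by
        refine hC K (fun k ↦ (hψ.measurable_waveSuperposition
          (measurable_dyadicPiece hm k)).aestronglyMeasurable) (fun k ↦ ?_) fun k ↦ ?_
        · exact (hC₀ (measurable_dyadicPiece hm k) (fun _ ↦ norm_dyadicPiece_le_one) (hrk k)
            (hsk k)).trans (by gcongr; exact le_self_add)
        · exact (hC₁ (measurable_dyadicPiece hm k) (fun _ ↦ norm_dyadicPiece_le_one) (hrk k)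
            (hsk k)).trans (by gcongr; exact le_add_self)
    _ = C * (C₀ + C₁) * ∑ k ∈ K, (2 ^ k) ^ p * ν k := by
        simp_rw [mul_left_comm _ (C₀ + C₁ : ℝ≥0∞), ← Finset.mul_sum, mul_assoc]
    _ ≤ C * (C₀ + C₁) * (2 ^ p * ∫⁻ v, ‖h v‖ₑ ^ p ∂radialMeasure d) := by
        gcongr
        exact sum_zpow_rpow_mul_measure_support_dyadicPiece_le _ hm K (by linarith)
    _ = _ := by
        rw [ENNReal.coe_mul, ENNReal.coe_mul, ENNReal.coe_add,
          ENNReal.coe_rpow_of_nonneg _ (by linarith), ENNReal.coe_ofNat,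
          ← mul_assoc]

end Admissible

end BoundedInequality

section Integrability

variable {d : ℕ}

lemma le_rpow_mul_pow_add_rpow_neg {a r p s : ℝ} {n : ℕ} (ha : 0 ≤ a) (hr : 1 ≤ r) (hp : 1 ≤ p)
    (hs : s * (p - 1) ≤ n) : a ≤ a ^ p * r ^ n + r ^ (-s) := by
  have hr0 : 0 < r := by linarith
  obtain har | hra := le_total a (r ^ (-s))
  · exact har.trans (le_add_of_nonneg_left (by positivity))
  have ha0 : 0 < a := (by positivity : 0 < r ^ (-s)).trans_le hra
  have hone : 1 ≤ a ^ (p - 1) * r ^ n :=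
    calc 1 ≤ r ^ (-s * (p - 1) + n) := Real.one_le_rpow hr (by linarith)
      _ = (r ^ (-s)) ^ (p - 1) * r ^ n := by
        rw [Real.rpow_add hr0, Real.rpow_mul hr0.le, Real.rpow_natCast]
      _ ≤ a ^ (p - 1) * r ^ n := by gcongr
  calc a ≤ a * (a ^ (p - 1) * r ^ n) := le_mul_of_one_le_right ha hone
    _ = a ^ p * r ^ n := by rw [Real.rpow_sub_one ha0.ne']; field_simp
    _ ≤ a ^ p * r ^ n + r ^ (-s) := le_add_of_nonneg_right (by positivity)

lemma exists_volume_sphereShell_le_mul_pow (hd : d ≠ 0) {t : ℝ} (ht : 0 ≤ t) :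
    ∃ c : ℝ, ∀ (x : Ed d) {r : ℝ}, 1 ≤ r →
      volume (sphereShell (x, r) t) ≤ ENNReal.ofReal (c * r ^ (d - 1)) := by
  have : Nonempty (Fin d) := Fin.pos_iff_nonempty.1 (Nat.pos_of_ne_zero hd)
  refine ⟨2 * d * t * (1 + t) ^ (d - 1) * volume.real (ball (0 : Ed d) 1), fun x {r} hr ↦ ?_⟩
  have hfin : volume (sphereShell (x, r) t) ≠ ∞ :=
    ((measure_mono (sphereShell_subset_closedBall _ t)).trans_lt measure_closedBall_lt_top).ne
  rw [← ENNReal.ofReal_toReal hfin]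
  refine ENNReal.ofReal_le_ofReal ?_
  have hle := measureReal_annulus_le (volume : Measure (Ed d)) x (by linarith : 0 ≤ r) ht
  rw [finrank_euclideanSpace_fin] at hle
  calc volume.real (sphereShell (x, r) t)
      ≤ 2 * d * t * (r + t) ^ (d - 1) * volume.real (ball (0 : Ed d) 1) := hle
    _ ≤ 2 * d * t * ((1 + t) * r) ^ (d - 1) * volume.real (ball (0 : Ed d) 1) := by
      gcongr
      nlinarith
    _ = _ := by rw [mul_pow]; ring

lemma setLIntegral_comp_snd_sphereShell {f : ℝ → ℝ≥0∞} (hf : Measurable f) (x : Ed d) (t : ℝ) :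
    ∫⁻ v in {v : Ed d × ℝ | 1 ≤ v.2 ∧ v.1 ∈ sphereShell (x, v.2) t}, f v.2
      = ∫⁻ r in Ici 1, f r * volume (sphereShell (x, r) t) := by
  set S : Set (Ed d × ℝ) := {v | 1 ≤ v.2 ∧ v.1 ∈ sphereShell (x, v.2) t}
  have hdist : Measurable fun v : Ed d × ℝ ↦ |‖v.1 - x‖ - v.2| :=
    (by fun_prop : Continuous _).measurable
  have hS : MeasurableSet S := (measurableSet_le measurable_const measurable_snd).inter
    (measurableSet_le hdist measurable_const)
  have hshell (r : ℝ) : MeasurableSet (sphereShell (x, r) t) :=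
    measurableSet_le (by fun_prop : Measurable fun y : Ed d ↦ |‖y - x‖ - r|) measurable_const
  have hf' : Measurable fun v : Ed d × ℝ ↦ f v.2 := hf.comp measurable_snd
  rw [← lintegral_indicator hS, Measure.volume_eq_prod, lintegral_prod_symm' _ (hf'.indicator hS),
    ← lintegral_indicator measurableSet_Ici]
  refine lintegral_congr fun r ↦ ?_
  by_cases hr : 1 ≤ r
  · rw [indicator_of_mem (mem_Ici.2 hr), ← lintegral_indicator_const (hshell r)]
    exact lintegral_congr fun y ↦ by classical simp [indicator_apply, S, hr]
  · have hzero (y : Ed d) : S.indicator (fun v ↦ f v.2) (y, r) = 0 :=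
      indicator_of_notMem (fun h ↦ hr h.1) _
    simp [hzero, hr]

lemma setLIntegral_rpow_neg_sphereShell_lt_top (hd : d ≠ 0) {t : ℝ} (ht : 0 ≤ t) (x : Ed d) :
    ∫⁻ v in {v : Ed d × ℝ | 1 ≤ v.2 ∧ v.1 ∈ sphereShell (x, v.2) t},
      ENNReal.ofReal (v.2 ^ (-((d : ℝ) + 1))) < ⊤ := by
  obtain ⟨c, hc⟩ := exists_volume_sphereShell_le_mul_pow hd ht
  have hpow {r : ℝ} (hr : 1 ≤ r) : r ^ (-((d : ℝ) + 1)) * r ^ (d - 1) = r ^ (-2 : ℝ) := by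
    rw [← Real.rpow_natCast, ← Real.rpow_add (by linarith), Nat.cast_pred (Nat.pos_of_ne_zero hd)]
    ring_nf
  rw [setLIntegral_comp_snd_sphereShell (f := fun r ↦ ENNReal.ofReal (r ^ (-((d : ℝ) + 1))))
    (by fun_prop)]
  calc _ ≤ ∫⁻ r in Ici (1 : ℝ), ENNReal.ofReal (c * r ^ (-2 : ℝ)) := by
        refine setLIntegral_mono' measurableSet_Ici fun r (hr : 1 ≤ r) ↦ ?_
        grw [hc x hr, ← ENNReal.ofReal_mul (by positivity), mul_left_comm, hpow hr]
    _ = ∫⁻ r in Ioi (1 : ℝ), ENNReal.ofReal (c * r ^ (-2 : ℝ)) :=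
        setLIntegral_congr Ioi_ae_eq_Ici.symm
    _ < ⊤ := ((integrableOn_Ioi_rpow_of_lt (by norm_num) one_pos).const_mul c).lintegral_lt_top

lemma lintegral_radialMeasure {f : Ed d × ℝ → ℝ≥0∞} (hf : Measurable f) :
    ∫⁻ v, f v ∂radialMeasure d = ∫⁻ v, f v * ENNReal.ofReal (v.2 ^ (d - 1)) := by
  rw [radialMeasure, lintegral_withDensity_eq_lintegral_mul _ (measurable_ofReal_snd_pow _) hf]
  exact lintegral_congr fun v ↦ mul_comm _ _

end Integrability

section Truncation

variable {E F : Type*} [NormedAddCommGroup E] [NormedAddCommGroup F] {h : E → F}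

/-- The restriction of `h` to the points of norm at most `n` where `‖h‖` lies in `[1/(n+1), n]`. -/
def truncation (h : E → F) (n : ℕ) : E → F :=
  {v | ‖v‖ ≤ n ∧ ‖h v‖ ∈ Icc ((n + 1 : ℝ)⁻¹) n}.indicator h

lemma mem_of_truncation_ne_zero {n : ℕ} {v : E} (hv : truncation h n v ≠ 0) :
    ‖v‖ ≤ n ∧ ‖h v‖ ∈ Icc ((n + 1 : ℝ)⁻¹) n := by
  have hmem := mem_of_indicator_ne_zero hv
  exact hmem

lemma truncation_of_ne_zero {n : ℕ} {v : E} (hv : truncation h n v ≠ 0) :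
    truncation h n v = h v := by
  rw [truncation] at hv ⊢
  exact indicator_of_mem (mem_of_indicator_ne_zero hv) h

lemma norm_truncation_le (n : ℕ) (v : E) : ‖truncation h n v‖ ≤ ‖h v‖ :=
  norm_indicator_le_norm_self _ _

lemma isBounded_support_truncation (n : ℕ) :
    Bornology.IsBounded (Function.support (truncation h n)) :=
  isBounded_iff_forall_norm_le.2 ⟨n, fun _ hv ↦ (mem_of_truncation_ne_zero hv).1⟩

lemma measurable_truncation [MeasurableSpace E] [OpensMeasurableSpace E] [MeasurableSpace F]
    [OpensMeasurableSpace F] (hm : Measurable h) (n : ℕ) : Measurable (truncation h n) :=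
  hm.indicator ((measurableSet_le measurable_norm measurable_const).inter
    (hm.norm measurableSet_Icc))

lemma eventually_truncation_eq (v : E) : ∀ᶠ n in Filter.atTop, truncation h n v = h v := by
  obtain hv | hv := eq_or_ne (h v) 0
  · filter_upwards with n
    classical simp [truncation, indicator_apply, hv]
  have hlarge (c : ℝ) : ∀ᶠ n : ℕ in Filter.atTop, c ≤ n :=
    tendsto_natCast_atTop_atTop.eventually_ge_atTop c
  filter_upwards [hlarge ‖v‖, hlarge ‖h v‖, hlarge ‖h v‖⁻¹] with n hvn hhn hinv
  rw [truncation, indicator_of_mem]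
  exact ⟨hvn, inv_le_of_inv_le₀ (norm_pos_iff.2 hv) (hinv.trans (by linarith)), hhn⟩

end Truncation

section ContinuousInequality

variable {d : ℕ} {ψ₀ : Ed d → ℂ}

namespace Admissible

lemma mem_sphereShell_of_wave_ne_zero (hψ : Admissible d ψ₀) {v : Ed d × ℝ} (hv : 0 ≤ v.2)
    {x : Ed d} (hx : wave d ψ₀ v x ≠ 0) : v.1 ∈ sphereShell (x, v.2) (1 / 5) := by
  have hdist := hψ.abs_norm_sub_abs_le_of_wave_ne_zero hx
  rwa [abs_of_nonneg hv, norm_sub_rev] at hdist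

lemma exists_enorm_mul_wave_le (hψ : Admissible d ψ₀) (hd : 3 ≤ d) {p : ℝ} (hp : 1 ≤ p)
    (hpd : (d + 1) * (p - 1) ≤ (d - 1 : ℕ)) : ∃ C : ℝ≥0, ∀ (z : ℂ) {v : Ed d × ℝ}, 1 ≤ v.2 → ∀ x,
      ‖z * wave d ψ₀ v x‖ₑ ≤ C * (‖z‖ₑ ^ p * ENNReal.ofReal (v.2 ^ (d - 1))
        + ENNReal.ofReal (v.2 ^ (-((d : ℝ) + 1)))) := by
  obtain ⟨C, hC0, hC⟩ := hψ.exists_norm_wave_le hd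
  refine ⟨C.toNNReal, fun z v hv x ↦ ?_⟩
  rw [ENNReal.ofNNReal_toNNReal, ← ofReal_norm, ← ofReal_norm,
    ENNReal.ofReal_rpow_of_nonneg (norm_nonneg _) (by linarith),
    ← ENNReal.ofReal_mul (by positivity), ← ENNReal.ofReal_add (by positivity) (by positivity),
    ← ENNReal.ofReal_mul hC0.le, norm_mul, mul_comm]
  exact ENNReal.ofReal_le_ofReal <| mul_le_mul (hC v hv x)
    (le_rpow_mul_pow_add_rpow_neg (norm_nonneg _) hv hp hpd) (norm_nonneg _) hC0.le

lemma integrable_mul_wave_of_lintegral_lt_top (hψ : Admissible d ψ₀) (hd : 3 ≤ d) {p : ℝ}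
    (hp : 1 ≤ p) (hpd : (d + 1) * (p - 1) ≤ (d - 1 : ℕ)) {h : Ed d × ℝ → ℂ} (hm : Measurable h)
    (hr : ∀ v, h v ≠ 0 → 1 ≤ v.2) (hfin : ∫⁻ v, ‖h v‖ₑ ^ p ∂radialMeasure d < ⊤) (x : Ed d) :
    Integrable fun v ↦ h v * wave d ψ₀ v x := by
  obtain ⟨C, hC⟩ := hψ.exists_enorm_mul_wave_le hd hp hpd
  set S : Set (Ed d × ℝ) := {v | 1 ≤ v.2 ∧ v.1 ∈ sphereShell (x, v.2) (1 / 5)}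
  let f : Ed d × ℝ → ℝ≥0∞ := fun v ↦ ENNReal.ofReal (v.2 ^ (-((d : ℝ) + 1)))
  have hf : Measurable f := by fun_prop
  let g : Ed d × ℝ → ℝ≥0∞ := fun v ↦ ‖h v‖ₑ ^ p * ENNReal.ofReal (v.2 ^ (d - 1))
  have hg : Measurable g := (hm.enorm.pow_const p).mul (measurable_ofReal_snd_pow _)
  have hsupp : Function.support (fun v ↦ h v * wave d ψ₀ v x) ⊆ S := fun v hv ↦ by
    have hv1 := hr v (left_ne_zero_of_mul hv)
    exact ⟨hv1, hψ.mem_sphereShell_of_wave_ne_zero (by linarith) (right_ne_zero_of_mul hv)⟩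
  refine (integrableOn_iff_integrable_of_support_subset hsupp).1
    ⟨((hψ.measurable_mul_wave hm).comp measurable_prodMk_right).aestronglyMeasurable, ?_⟩
  calc ∫⁻ v in S, ‖h v * wave d ψ₀ v x‖ₑ
      ≤ ∫⁻ v in S, C * (g v + f v) :=
        setLIntegral_mono ((hg.add hf).const_mul _) fun v hv ↦ hC (h v) hv.1 x
    _ = C * ((∫⁻ v in S, g v) + ∫⁻ v in S, f v) := by
        rw [lintegral_const_mul' _ _ ENNReal.coe_ne_top, lintegral_add_left hg]
    _ ≤ C * ((∫⁻ v, ‖h v‖ₑ ^ p ∂radialMeasure d) + ∫⁻ v in S, f v) := by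
        rw [lintegral_radialMeasure (hm.enorm.pow_const p)]
        grw [setLIntegral_le_lintegral S g]
    _ < ⊤ := ENNReal.mul_lt_top ENNReal.coe_lt_top <| ENNReal.add_lt_top.2
        ⟨hfin, setLIntegral_rpow_neg_sphereShell_lt_top (by lia) (by norm_num) x⟩

lemma tendsto_waveSuperposition_truncation (hψ : Admissible d ψ₀) {h : Ed d × ℝ → ℂ}
    (hm : Measurable h) {x : Ed d} (hi : Integrable fun v ↦ h v * wave d ψ₀ v x) :
    Filter.Tendsto (fun n ↦ waveSuperposition d ψ₀ (truncation h n) x) Filter.atTop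
      (nhds (waveSuperposition d ψ₀ h x)) := by
  refine tendsto_integral_of_dominated_convergence _ (fun n ↦ ((hψ.measurable_mul_wave
    (measurable_truncation hm n)).comp measurable_prodMk_right).aestronglyMeasurable) hi.norm
    (fun n ↦ ae_of_all _ fun v ↦ ?_) (ae_of_all _ fun v ↦ ?_)
  · rw [norm_mul, norm_mul]
    gcongr
    exact norm_truncation_le n v
  · refine tendsto_const_nhds.congr' ?_
    filter_upwards [eventually_truncation_eq (h := h) v] with n hn
    rw [hn]

lemma exists_lintegral_enorm_waveSuperposition_rpow_le (hψ : Admissible d ψ₀) (hd : 4 ≤ d)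
    {p : ℝ} (hp1 : 1 < p) (hpd : p < (2 * (d : ℝ) - 2) / ((d : ℝ) + 1)) :
    ∃ C : ℝ≥0, ∀ {h}, Measurable h →
      (∀ x, Integrable fun v ↦ h v * wave d ψ₀ v x) → (∀ v, h v ≠ 0 → 1 ≤ v.2) →
        ∫⁻ x, ‖waveSuperposition d ψ₀ h x‖ₑ ^ p ≤ C * ∫⁻ v, ‖h v‖ₑ ^ p ∂radialMeasure d := by
  obtain ⟨C, hC⟩ :=
    hψ.exists_lintegral_enorm_waveSuperposition_rpow_le_of_norm_mem_Icc hd hp1 hpd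
  refine ⟨C, fun {h} hm hi hr ↦ ?_⟩
  let T (n : ℕ) (x : Ed d) : ℝ≥0∞ := ‖waveSuperposition d ψ₀ (truncation h n) x‖ₑ ^ p
  have hT (n : ℕ) : ∫⁻ x, T n x ≤ C * ∫⁻ v, ‖h v‖ₑ ^ p ∂radialMeasure d := by
    have heq {v} (hv : truncation h n v ≠ 0) := truncation_of_ne_zero hv
    have hpos : (0 : ℝ) < (n + 1 : ℝ)⁻¹ := by positivity
    refine (hC (measurable_truncation hm n) (fun v hv ↦ hr v (heq hv ▸ hv))
      (isBounded_support_truncation n) (B := n) hpos fun v hv ↦ ?_).trans ?_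
    · rw [heq hv]
      exact (mem_of_truncation_ne_zero hv).2
    · gcongr with v
      exact enorm_le_iff_norm_le.2 (norm_truncation_le n v)
  have hlim (x : Ed d) : Filter.liminf (T · x) Filter.atTop = ‖waveSuperposition d ψ₀ h x‖ₑ ^ p :=
    ((hψ.tendsto_waveSuperposition_truncation hm (hi x)).enorm.ennrpow_const p).liminf_eq
  calc ∫⁻ x, ‖waveSuperposition d ψ₀ h x‖ₑ ^ p
      = ∫⁻ x, Filter.liminf (T · x) Filter.atTop := lintegral_congr fun x ↦ (hlim x).symm
    _ ≤ Filter.liminf (fun n ↦ ∫⁻ x, T n x) Filter.atTop := lintegral_liminf_le fun n ↦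
        (hψ.measurable_waveSuperposition (measurable_truncation hm n)).enorm.pow_const p
    _ ≤ C * ∫⁻ v, ‖h v‖ₑ ^ p ∂radialMeasure d :=
        Filter.liminf_le_of_frequently_le' (Filter.Frequently.of_forall hT)

end Admissible

lemma lintegral_radialMeasure_indicator_Ioi {p : ℝ} (hp : 0 < p) {h : Ed d × ℝ → ℂ}
    (hm : Measurable h) :
    ∫⁻ v, ‖(Prod.snd ⁻¹' Ioi (1 : ℝ)).indicator h v‖ₑ ^ p ∂radialMeasure d
      = ∫⁻ y, ∫⁻ r in Ioi (1 : ℝ), ENNReal.ofReal (‖h (y, r)‖ ^ p * r ^ (d - 1)) := by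
  have hH := (hm.indicator (measurable_snd (measurableSet_Ioi (a := (1 : ℝ))))).enorm.pow_const p
  rw [lintegral_radialMeasure hH, Measure.volume_eq_prod,
    lintegral_prod _ (hH.fun_mul (measurable_ofReal_snd_pow _)).aemeasurable]
  refine lintegral_congr fun y ↦ ?_
  rw [← lintegral_indicator measurableSet_Ioi]
  refine lintegral_congr fun r ↦ ?_
  by_cases hr : 1 < r
  · rw [indicator_of_mem (mem_preimage.2 hr), indicator_of_mem (mem_Ioi.2 hr),
      ENNReal.ofReal_mul (by positivity), ← ENNReal.ofReal_rpow_of_nonneg (norm_nonneg _) hp.le,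
      ofReal_norm]
  · simp [hr, hp]

lemma waveSuperposition_indicator_Ioi (ψ₀ : Ed d → ℂ) {h : Ed d × ℝ → ℂ} {x : Ed d}
    (hi : Integrable fun v ↦ (Prod.snd ⁻¹' Ioi (1 : ℝ)).indicator h v * wave d ψ₀ v x) :
    waveSuperposition d ψ₀ ((Prod.snd ⁻¹' Ioi (1 : ℝ)).indicator h) x
      = ∫ y, ∫ r in Ioi (1 : ℝ), h (y, r) * Fyr d ψ₀ y r x := by
  rw [Measure.volume_eq_prod] at hi
  rw [waveSuperposition, Measure.volume_eq_prod, integral_prod _ hi]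
  congr! 2 with y
  rw [← integral_indicator measurableSet_Ioi]
  congr! 2 with r
  by_cases hr : 1 < r
  · simp [hr, Fyr_eq_wave y (by linarith : 0 < r)]
  · simp [hr]

end ContinuousInequality

/-- the continuous `L^p` inequality
`‖∫∫ h(y,r) F_{y,r} dr dy‖_p ≲ (∫∫ |h(y,r)|^p r^{d-1} dr dy)^{1/p}`. -/
theorem continuous_lp_inequality
    (d : ℕ) (hd : 4 ≤ d) (p : ℝ) (hp1 : 1 < p)
    (hpd : p < (2 * (d : ℝ) - 2) / ((d : ℝ) + 1))
    (ψ₀ : Ed d → ℂ) (hψ : Admissible d ψ₀) :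
    ∃ C : ℝ, 0 < C ∧
      ∀ h : Ed d × ℝ → ℂ, Measurable h →
        (∫⁻ y : Ed d, ∫⁻ r in Set.Ioi (1 : ℝ),
            ENNReal.ofReal (‖h (y, r)‖ ^ p * r ^ (d - 1))) < ⊤ →
        eLpNorm
            (fun x => ∫ y : Ed d, ∫ r in Set.Ioi (1 : ℝ), h (y, r) * Fyr d ψ₀ y r x)
            (ENNReal.ofReal p) volume ≤
          ENNReal.ofReal C *
            (∫⁻ y : Ed d, ∫⁻ r in Set.Ioi (1 : ℝ),
                ENNReal.ofReal (‖h (y, r)‖ ^ p * r ^ (d - 1))) ^ (1 / p) := by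
  obtain ⟨C, hC⟩ := hψ.exists_lintegral_enorm_waveSuperposition_rpow_le hd hp1 hpd
  have hp0 : 0 < p := by linarith
  have hpd' : (d + 1) * (p - 1) ≤ (d - 1 : ℕ) := by
    rw [lt_div_iff₀ (by positivity)] at hpd
    rw [Nat.cast_pred (by lia)]
    linarith
  refine ⟨(C + 1) ^ (1 / p), by positivity, fun h hm hfin ↦ ?_⟩
  let H := (Prod.snd ⁻¹' Ioi (1 : ℝ)).indicator h
  have hHm : Measurable H := hm.indicator (measurable_snd measurableSet_Ioi)
  have hH1 (v) (hv : H v ≠ 0) : 1 ≤ v.2 := by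
    have hmem : v ∈ Prod.snd ⁻¹' Ioi 1 := mem_of_indicator_ne_zero hv
    exact le_of_lt hmem
  rw [← lintegral_radialMeasure_indicator_Ioi hp0 hm] at hfin ⊢
  have hi := hψ.integrable_mul_wave_of_lintegral_lt_top (by lia) hp1.le hpd' hHm hH1 hfin
  simp only [← waveSuperposition_indicator_Ioi ψ₀ (hi _)]
  rw [← ENNReal.ofReal_rpow_of_nonneg (by positivity) (by positivity),
    ← ENNReal.mul_rpow_of_nonneg _ _ (by positivity), one_div, ENNReal.le_rpow_inv_iff hp0,
    eLpNorm_ofReal_rpow _ _ hp0]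
  grw [hC hHm hi hH1]
  gcongr
  rw [← ENNReal.ofReal_coe_nnreal]
  exact ENNReal.ofReal_le_ofReal (by linarith)
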